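/- Let Φ and Ψ be totally non-linear conformal iterated function systems on ℝ² whose maps are orientation-preserving, and let μ and ν be self-conformal measures associated to Φ and Ψ respectively. Suppose that (1) ⟨{A·B^{-1} : A ∈ O(Φ), B ∈ O(Ψ)}⟩ = SO(2), and (2) there exist f₁, f₂, f₃, f₄ ∈ Φ ∪ Ψ (not necessarily distinct) with O(f₁) = O(f₂), O(f₃) = O(f₄), and (log λ(f₁) − log λ(f₂))/(log λ(f₃) − log λ(f₄)) irrational. Then dim(μ*ν) = min{2, dim μ + dim ν}. -/

import Mathlib

/-!
The plane is identified with `ℂ`, so that the maps of the two systems have Hölder continuous,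
non-vanishing complex derivatives (`SC.Sys`, `SC.exists_sys`). For a word `w` let `F w` be the
composition of the maps along `w` and `S w` its derivative at a base point; write `T v` for the
corresponding derivative along a word `v` of the second system.

*Upper bound.* `dim (μ * ν) ≤ 2` is trivial. For `dim (μ * ν) ≤ dim μ + dim ν` the truncated
entropy of a single self-conformal measure at scale `ρ` is at most `dim · log (1/ρ) + O(1)`
(`SC.single_upper`), and a ball of radius `2ρ` around `x + y` has `μ * ν`-mass at least
`μ(B(x, ρ)) ν(B(y, ρ))` (`SC.upper_bound`).

*Lower bound.* The measure `μ * ν` is organized as a tree whose nodes are pairs of words `(w, v)`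
with `|S w|` and `|T v|` both comparable to `r ^ k`, carrying the convolution of the pieces of
`μ` and `ν` coded by `w` and `v` (`SC.pairTree`). Bounding `L^q` sums along such a tree and letting
`q → 1` gives `dim ≥ h / log (1/r) - O(1 / log (1/r))` as soon as the entropies of the nodes at the
scale of their children average at least `h` along every `N` generations
(`SC.MTree.le_mdim`).

The entropy of a node is bounded below, by the tangent line of `-log`, through a smoothed
correlation `SC.xi` which depends on the words and on the ratio `L = S w / T v` (`SC.ent_ge`,
`SC.gain_ge`). For a fixed ratio this correlation can be large, but its mean over ratios `g * L`,
with `g` in a fine grid near `1`, is at most `C r ^ (α + β)` for all `α < dim μ`, `β < dim ν`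
with `α + β < 2` (`SC.average_bound`).

It remains to replace the correlation along the tree by this mean (`SC.Equi.main`). The normalized
sums of the test function over pairs of words, with the ratio multiplied by `g`, have an ultrafilter
limit `Ψ g` which is bounded and harmonic in each of the two words. The increments of a bounded
harmonic function tend to zero on average, whereas inserting one more letter `i` at the end of a
long block of letters `i` multiplies the ratio by the derivative of the `i`-th map at its fixed
point, up to a small error. Hence `Ψ g` at the root is invariant under multiplication of `g` by all
fixed point derivatives of both systems. These generate a dense subgroup of `ℂˣ`: the closed
subgroup they generate contains all positive reals by the irrationality hypothesis, and then all
rotations by the hypothesis on `SO(2)` (`SC.closed_eq_top`). So `Ψ` does not depend on `g` and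
equals its mean over the grid.
-/

open MeasureTheory Metric Filter Set Topology
open scoped ENNReal NNReal Pointwise

noncomputable section

/-- `ℝ^d` with the maximum metric, so that `ball 0 1 = (-1,1)^d`. -/
abbrev Euc (d : ℕ) : Type := Fin d → ℝ

/-- The (lower Hausdorff) dimension of a measure:
`dim μ = inf { dim_H A : A Borel, μ A > 0 }`. -/
def mdim {X : Type*} [EMetricSpace X] [MeasurableSpace X] (μ : Measure X) : ℝ≥0∞ :=
  ⨅ (A : Set X) (_ : MeasurableSet A) (_ : 0 < μ A), dimH A

/-- The topological support of a measure. -/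
def msupport {X : Type*} [TopologicalSpace X] [MeasurableSpace X] (μ : Measure X) : Set X :=
  {x | ∀ U : Set X, IsOpen U → x ∈ U → 0 < μ U}

/-- The matrix of the derivative of `f` at `x`. -/
def Dmat {d : ℕ} (f : Euc d → Euc d) (x : Euc d) : Matrix (Fin d) (Fin d) ℝ :=
  LinearMap.toMatrix' (fderiv ℝ f x : Euc d →ₗ[ℝ] Euc d)

/-- The conformal scaling factor `‖Df(x)‖ = |det Df(x)|^{1/d}` of a conformal map. -/
def confScale {d : ℕ} (f : Euc d → Euc d) (x : Euc d) : ℝ :=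
  |LinearMap.det (fderiv ℝ f x : Euc d →ₗ[ℝ] Euc d)| ^ ((d : ℝ)⁻¹)

/-- The special orthogonal group `SO(d)`, as a set of matrices. -/
def SOset (d : ℕ) : Set (Matrix (Fin d) (Fin d) ℝ) :=
  {O | O ∈ Matrix.orthogonalGroup (Fin d) ℝ ∧ O.det = 1}

/-- The conformal orthogonal group `CO(d) = {rO : r > 0, O ∈ SO(d)}`, as a set of matrices. -/
def COset (d : ℕ) : Set (Matrix (Fin d) (Fin d) ℝ) :=
  {A | ∃ r : ℝ, 0 < r ∧ ∃ O ∈ SOset d, A = r • O}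

/-- `⟨A⟩`: the closure of the set of finite (nonempty) products of elements of `A`. -/
def genClosure {G : Type*} [Monoid G] [TopologicalSpace G] (A : Set G) : Set G :=
  closure {g | ∃ l : List G, l ≠ [] ∧ (∀ x ∈ l, x ∈ A) ∧ l.prod = g}

/-- `f` is a conformal map on `U`: injective on `U`, `closure (f '' U) ⊆ U`, differentiable
with conformal derivative `Df(x) = c • O`, `O` orthogonal, and `Df` Hölder continuous. -/
def IsConformalMapOn (d : ℕ) (f : Euc d → Euc d) (U : Set (Euc d)) : Prop :=
  Set.InjOn f U ∧ closure (f '' U) ⊆ U ∧ (∀ x ∈ U, DifferentiableAt ℝ f x) ∧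
    (∀ x ∈ U, ∃ c : ℝ, 0 < c ∧ ∃ O ∈ Matrix.orthogonalGroup (Fin d) ℝ,
      (fderiv ℝ f x : Euc d →ₗ[ℝ] Euc d) = c • O.mulVecLin) ∧
    (∃ C α : ℝ≥0, 0 < α ∧ HolderOnWith C α (fun x => fderiv ℝ f x) U)

/-- A conformal iterated function system on `(-1,1)^d`: at least two contractive
conformal maps. -/
structure ConformalIFS (d : ℕ) where
  n : ℕ
  two_le : 2 ≤ n
  funs : Fin n → Euc d → Euc d
  conf : ∀ i, IsConformalMapOn d (funs i) (Metric.ball 0 1)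
  contr : ∀ i, ∃ r : ℝ, r < 1 ∧ ∀ x ∈ Metric.ball (0 : Euc d) 1, confScale (funs i) x ≤ r

/-- `μ` is a self-conformal measure associated to `Φ`: a Borel probability measure on
`(-1,1)^d` with `μ = Σ_i p_i • (f_i)_* μ` for a strictly positive probability vector `p`. -/
def IsSelfConformal {d : ℕ} (Φ : ConformalIFS d) (μ : Measure (Euc d)) : Prop :=
  IsProbabilityMeasure μ ∧ μ (Metric.ball (0 : Euc d) 1)ᶜ = 0 ∧
    ∃ p : Fin Φ.n → ℝ≥0∞, (∀ i, 0 < p i) ∧ (∑ i, p i) = 1 ∧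
      μ = ∑ i, p i • μ.map (Φ.funs i)

/-- `K` is the attractor of `Φ`: the unique nonempty compact set with `K = ⋃ i, f_i(K)`. -/
def IsAttractor {d : ℕ} (Φ : ConformalIFS d) (K : Set (Euc d)) : Prop :=
  K.Nonempty ∧ IsCompact K ∧ K ⊆ Metric.ball 0 1 ∧ K = ⋃ i, Φ.funs i '' K

/-- `Φ` is totally non-linear: for every conformal map `g` of `(-1,1)^d` there is `f ∈ Φ`
such that `g ∘ f ∘ g⁻¹` is not (the restriction of) an affine map. -/
def TotallyNonLinear {d : ℕ} (Φ : ConformalIFS d) : Prop :=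
  ∀ g : Euc d → Euc d, IsConformalMapOn d g (Metric.ball 0 1) →
    ∃ i, ¬ ∃ A : Euc d →ᵃ[ℝ] Euc d, ∀ x ∈ Metric.ball (0 : Euc d) 1, g (Φ.funs i x) = A (g x)

/-- All maps of `Φ` are orientation-preserving. -/
def OrientationPreserving {d : ℕ} (Φ : ConformalIFS d) : Prop :=
  ∀ i, ∀ x ∈ Metric.ball (0 : Euc d) 1,
    0 < LinearMap.det (fderiv ℝ (Φ.funs i) x : Euc d →ₗ[ℝ] Euc d)

instance {X : Type*} [MeasurableSpace X] : MeasurableSpace (ProbabilityMeasure X) :=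
  inferInstanceAs (MeasurableSpace {μ : Measure X // IsProbabilityMeasure μ})

section Scenery

variable {X : Type*} [NormedAddCommGroup X] [NormedSpace ℝ X] [MeasurableSpace X] [BorelSpace X]

/-- The rescaled measure `μ_{x,t}`, with `μ_{x,t}(A) = μ(2^{-t}A + x)/μ(B(x,2^{-t}))`,
viewed as a measure on `B(0,1)`. -/
def resc (μ : Measure X) (x : X) (t : ℝ) : Measure X :=
  (μ (closedBall x ((2 : ℝ) ^ (-t))))⁻¹ •
    ((μ.map (fun y => (2 : ℝ) ^ t • (y - x))).restrict (closedBall (0 : X) 1))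

open Classical in
/-- `μ_{x,t}` as a probability measure (junk value if the normalization fails). -/
def rescPM (μ : Measure X) (x : X) (t : ℝ) : ProbabilityMeasure X :=
  if h : IsProbabilityMeasure (resc μ x t) then ⟨resc μ x t, h⟩
  else ⟨Measure.dirac 0, Measure.dirac.isProbabilityMeasure⟩

/-- `P` is a tangent distribution of `μ` at `x`: a weak-* accumulation point, as `T → ∞`,
of the sceneries `⟨μ⟩_{x,T} = (1/T)∫_0^T δ_{μ_{x,t}} dt`. -/
def IsTangentDistribution (μ : Measure X) (x : X) (P : Measure (ProbabilityMeasure X)) : Prop :=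
  IsProbabilityMeasure P ∧
    ∃ T : ℕ → ℝ, (∀ n, 1 ≤ T n) ∧ Tendsto T atTop atTop ∧
      ∀ F : BoundedContinuousFunction (ProbabilityMeasure X) ℝ,
        Tendsto (fun n => (T n)⁻¹ * ∫ t in Set.Ioc (0 : ℝ) (T n), F (rescPM μ x t))
          atTop (𝓝 (∫ η, F η ∂P))

/-- `μ` is tangent-regular: at `μ`-a.e. `x`, every tangent distribution `P` of `μ` at `x`
satisfies `dim η = dim μ` for `P`-a.e. `η`. -/
def TangentRegular (μ : Measure X) : Prop :=
  ∀ᵐ x ∂μ, ∀ P : Measure (ProbabilityMeasure X), IsTangentDistribution μ x P →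
    ∀ᵐ η : ProbabilityMeasure X ∂P, mdim η.toMeasure = mdim μ

/-- The magnification semiflow `S_t : μ ↦ μ_{0,t}` on probability measures. -/
def stMap (t : ℝ) (η : ProbabilityMeasure X) : ProbabilityMeasure X :=
  rescPM η.toMeasure 0 t

/-- `P` is a fractal distribution: an `S_t`-invariant, quasi-Palm probability
distribution on measures. -/
def IsFractalDistribution (P : Measure (ProbabilityMeasure X)) : Prop :=
  IsProbabilityMeasure P ∧
    (∀ t : ℝ, 0 ≤ t → P.map (stMap t) = P) ∧
    ∀ A : Set (ProbabilityMeasure X), MeasurableSet A → P Aᶜ = 0 →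
      ∀ᵐ η : ProbabilityMeasure X ∂P, ∀ᵐ x ∂η.toMeasure, ∀ t : ℝ, 0 ≤ t →
        closedBall x ((2 : ℝ) ^ (-t)) ⊆ closedBall (0 : X) 1 → rescPM η.toMeasure x t ∈ A

/-- `P` is an ergodic fractal distribution. -/
def IsErgodicFD (P : Measure (ProbabilityMeasure X)) : Prop :=
  IsFractalDistribution P ∧
    ∀ A : Set (ProbabilityMeasure X), MeasurableSet A →
      (∀ t : ℝ, 0 ≤ t → stMap t ⁻¹' A = A) → P A = 0 ∨ P Aᶜ = 0

/-- `μ` is exact-dimensional: the local dimension exists `μ`-a.e. and equals `dim μ`. -/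
def ExactDimensional (μ : Measure X) : Prop :=
  ∀ᵐ x ∂μ, Tendsto (fun r : ℝ => Real.log (μ (closedBall x r)).toReal / Real.log r)
    (𝓝[>] (0 : ℝ)) (𝓝 (mdim μ).toReal)

end Scenery

/-- `M` is a `C^k` hypersurface: locally the zero set of a `C^k` real-valued function
with non-vanishing derivative. -/
def IsCkHypersurface {X : Type*} [NormedAddCommGroup X] [NormedSpace ℝ X]
    (k : ℕ∞) (M : Set X) : Prop :=
  ∀ x ∈ M, ∃ (U : Set X) (F : X → ℝ), IsOpen U ∧ x ∈ U ∧ ContDiffOn ℝ k F U ∧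
    (∀ y ∈ U, fderiv ℝ F y ≠ 0) ∧ M ∩ U = {y ∈ U | F y = 0}

/-- An analytic curve: the image of a non-constant real-analytic map defined on an
open interval. -/
def IsAnalyticCurve {d : ℕ} (C : Set (Euc d)) : Prop :=
  ∃ (I : Set ℝ) (γ : ℝ → Euc d), IsOpen I ∧ I.OrdConnected ∧ I.Nonempty ∧
    AnalyticOnNhd ℝ γ I ∧ (∃ s ∈ I, ∃ t ∈ I, γ s ≠ γ t) ∧ C = γ '' I

/-- An affine hyperplane in `ℝ^d`. -/
def IsAffineHyperplane {d : ℕ} (H : Set (Euc d)) : Prop :=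
  ∃ (v : Euc d) (c : ℝ), v ≠ 0 ∧ H = {x : Euc d | (∑ i, v i * x i) = c}

/-- A (d-1)-dimensional (Euclidean) sphere in `ℝ^d`. -/
def IsEucSphere {d : ℕ} (S : Set (Euc d)) : Prop :=
  ∃ (z : Euc d) (r : ℝ), 0 < r ∧ S = {x : Euc d | (∑ i, (x i - z i) ^ 2) = r ^ 2}

/-- `ν` is `s`-Ahlfors-regular. -/
def IsAhlforsRegular {d : ℕ} (ν : Measure (Euc d)) (s : ℝ) : Prop :=
  ν ≠ 0 ∧ ∃ C : ℝ≥0∞, 1 ≤ C ∧ C ≠ ∞ ∧ ∀ x ∈ msupport ν, ∀ r : ℝ, 0 < r →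
    r ≤ Metric.diam (msupport ν) →
      ENNReal.ofReal (r ^ s) / C ≤ ν (closedBall x r) ∧
        ν (closedBall x r) ≤ C * ENNReal.ofReal (r ^ s)

/-- `xf` assigns to each map of `Φ` its fixed point in `(-1,1)^d`. -/
def IsFixedPoints {d : ℕ} (Φ : ConformalIFS d) (xf : Fin Φ.n → Euc d) : Prop :=
  ∀ i, xf i ∈ Metric.ball (0 : Euc d) 1 ∧ Φ.funs i (xf i) = xf i

/-- `λ(f_i)`: the contraction ratio of `f_i` at its fixed point. -/
def fixLam {d : ℕ} (Φ : ConformalIFS d) (xf : Fin Φ.n → Euc d) (i : Fin Φ.n) : ℝ :=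
  confScale (Φ.funs i) (xf i)

/-- `O(f_i)`: the rotation part of `Df_i` at the fixed point of `f_i`. -/
def fixO {d : ℕ} (Φ : ConformalIFS d) (xf : Fin Φ.n → Euc d) (i : Fin Φ.n) :
    Matrix (Fin d) (Fin d) ℝ :=
  (fixLam Φ xf i)⁻¹ • Dmat (Φ.funs i) (xf i)

/-- `O(Φ) = {O(f), O(f)⁻¹ : f ∈ Φ}`. -/
def OsetOf {d : ℕ} (Φ : ConformalIFS d) (xf : Fin Φ.n → Euc d) :
    Set (Matrix (Fin d) (Fin d) ℝ) :=
  {M | ∃ i, M = fixO Φ xf i ∨ M = (fixO Φ xf i)⁻¹}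

/-- `S_t (L, I)`: push a measure on `ℝ^d × ℝ^d` forward by `(u,v) ↦ (Lu, v)` and
magnify by `S_t`. -/
def StLI {d : ℕ} (L : Matrix (Fin d) (Fin d) ℝ) (t : ℝ)
    (η : ProbabilityMeasure (Euc d × Euc d)) : ProbabilityMeasure (Euc d × Euc d) :=
  rescPM (η.toMeasure.map (fun p => (L.mulVec p.1, p.2))) 0 t

/-- The matrix of `D(h ∘ f ∘ h⁻¹)` at `h z`, computed by the chain rule. -/
def DfhMat {d : ℕ} (h f : Euc d → Euc d) (z : Euc d) : Matrix (Fin d) (Fin d) ℝ :=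
  Dmat h (f z) * Dmat f z * (Dmat h z)⁻¹

/-- The space of conformal maps of `(-1,1)^d`, with the topology of uniform convergence. -/
abbrev ConfMaps (d : ℕ) :=
  {g : UniformFun (Euc d) (Euc d) //
    IsConformalMapOn d (UniformFun.toFun g) (Metric.ball 0 1)}

noncomputable instance (d : ℕ) : MeasurableSpace (ConfMaps d) := borel (ConfMaps d)

end

set_option linter.unusedSectionVars false

/-! ### Grid cells and the dimension of a measure -/

namespace SC

/-- The index of the half-open square of side `ε` of the standard grid that contains `z`. -/
noncomputable def cidx (ε : ℝ) (z : ℂ) : ℤ × ℤ := (⌊z.re / ε⌋, ⌊z.im / ε⌋)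

lemma measurable_cidx (ε : ℝ) : Measurable (cidx ε) := by
  unfold cidx
  refine Measurable.prodMk ?_ ?_
  · exact Int.measurable_floor.comp (Complex.measurable_re.div_const ε)
  · exact Int.measurable_floor.comp (Complex.measurable_im.div_const ε)

/-- The 3×3 block of neighbouring indices. -/
noncomputable def nbr (a : ℤ × ℤ) : Finset (ℤ × ℤ) :=
  Finset.Icc (a.1 - 1) (a.1 + 1) ×ˢ Finset.Icc (a.2 - 1) (a.2 + 1)

lemma card_nbr (a : ℤ × ℤ) : (nbr a).card = 9 := by
  unfold nbr
  rw [Finset.card_product]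
  simp only [Int.card_Icc]
  have h1 : (a.1 + 1 + 1 - (a.1 - 1)).toNat = 3 := by omega
  have h2 : (a.2 + 1 + 1 - (a.2 - 1)).toNat = 3 := by omega
  rw [h1, h2]

lemma mem_nbr_comm {a b : ℤ × ℤ} : a ∈ nbr b ↔ b ∈ nbr a := by
  simp only [nbr, Finset.mem_product, Finset.mem_Icc]
  constructor <;> rintro ⟨⟨_, _⟩, ⟨_, _⟩⟩ <;> refine ⟨⟨?_, ?_⟩, ⟨?_, ?_⟩⟩ <;> omega

lemma floor_near {ε x y : ℝ} (hε : 0 < ε) (h : |x - y| ≤ ε) :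
    ⌊x / ε⌋ ∈ Finset.Icc (⌊y / ε⌋ - 1) (⌊y / ε⌋ + 1) := by
  have h1 : x / ε ≤ y / ε + 1 := by
    rw [div_add_one hε.ne']
    exact div_le_div_of_nonneg_right (by linarith [(abs_le.1 h).2]) hε.le
  have h2 : y / ε ≤ x / ε + 1 := by
    rw [div_add_one hε.ne']
    exact div_le_div_of_nonneg_right (by linarith [(abs_le.1 h).1]) hε.le
  have h3 := Int.floor_le_floor h1
  have h4 := Int.floor_le_floor h2
  rw [Int.floor_add_one] at h3 h4
  rw [Finset.mem_Icc]
  omega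

lemma cidx_near {ε : ℝ} (hε : 0 < ε) {z w : ℂ} (h : dist z w ≤ ε) :
    cidx ε z ∈ nbr (cidx ε w) := by
  rw [Complex.dist_eq] at h
  have h1 := (Complex.abs_re_le_norm (z - w)).trans h
  have h2 := (Complex.abs_im_le_norm (z - w)).trans h
  rw [Complex.sub_re] at h1
  rw [Complex.sub_im] at h2
  exact Finset.mem_product.2 ⟨floor_near hε h1, floor_near hε h2⟩

lemma dist_le_of_cidx_eq {ε : ℝ} (hε : 0 < ε) {z w : ℂ} (h : cidx ε z = cidx ε w) :
    dist z w ≤ 2 * ε := by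
  have h1 : ⌊z.re / ε⌋ = ⌊w.re / ε⌋ := congrArg Prod.fst h
  have h2 : ⌊z.im / ε⌋ = ⌊w.im / ε⌋ := congrArg Prod.snd h
  have key : ∀ x y : ℝ, ⌊x / ε⌋ = ⌊y / ε⌋ → |x - y| ≤ ε := by
    intro x y hxy
    have := Int.abs_sub_lt_one_of_floor_eq_floor hxy
    rw [← sub_div, abs_div, abs_of_pos hε, div_lt_one hε] at this
    exact this.le
  rw [Complex.dist_eq]
  refine (Complex.norm_le_abs_re_add_abs_im _).trans ?_
  rw [Complex.sub_re, Complex.sub_im]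
  linarith [key _ _ h1, key _ _ h2]

lemma tsum_real_preimage {X ι : Type*} [MeasurableSpace X] [MeasurableSpace ι] [Countable ι]
    [MeasurableSingletonClass ι] (θ : Measure X) (f : X → ι) (hf : Measurable f) :
    ∑' a, θ (f ⁻¹' {a}) = θ univ := by
  rw [← measure_iUnion]
  · congr 1; ext x; simp
  · intro a b hab
    exact Disjoint.preimage _ (by simpa using hab)
  · intro a; exact hf (measurableSet_singleton a)

lemma measure_nbr_le (θ : Measure ℂ) (ε : ℝ) (a : ℤ × ℤ) :
    θ (cidx ε ⁻¹' (nbr a)) ≤ ∑ b ∈ nbr a, θ (cidx ε ⁻¹' {b}) := by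
  have : cidx ε ⁻¹' (nbr a) = ⋃ b ∈ nbr a, cidx ε ⁻¹' {b} := by ext z; simp
  rw [this]
  exact measure_biUnion_finset_le _ _

lemma tsum_measure_nbr_le (θ : Measure ℂ) [IsProbabilityMeasure θ] (ε : ℝ) :
    ∑' a, θ (cidx ε ⁻¹' (nbr a)) ≤ 9 := by
  calc ∑' a, θ (cidx ε ⁻¹' (nbr a))
      ≤ ∑' a, ∑' b, if b ∈ nbr a then θ (cidx ε ⁻¹' {b}) else 0 := by
        refine ENNReal.tsum_le_tsum fun a => (measure_nbr_le θ ε a).trans ?_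
        rw [tsum_eq_sum (s := nbr a) (by intro b hb; simp [hb])]
        exact Finset.sum_le_sum fun b hb => by simp [hb]
    _ = ∑' b, ∑' a, if b ∈ nbr a then θ (cidx ε ⁻¹' {b}) else 0 := ENNReal.tsum_comm
    _ = ∑' b, 9 * θ (cidx ε ⁻¹' {b}) := by
        refine tsum_congr fun b => ?_
        rw [tsum_eq_sum (s := nbr b) (by intro a ha; exact if_neg (fun h => ha (mem_nbr_comm.1 h)))]
        rw [Finset.sum_congr rfl (g := fun _ => θ (cidx ε ⁻¹' {b}))
          (fun a ha => by rw [if_pos (mem_nbr_comm.1 ha)])]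
        simp [card_nbr]
    _ = 9 := by
        rw [ENNReal.tsum_mul_left, tsum_real_preimage θ _ (measurable_cidx ε), measure_univ, mul_one]

lemma measurable_preimage_bad {s : Set (ℤ × ℤ)} (ε : ℝ) : MeasurableSet (cidx ε ⁻¹' s) :=
  measurable_cidx ε (Set.to_countable s).measurableSet

lemma tsum_ge_eq (g : ℕ → ℝ≥0∞) (m : ℕ) :
    ∑' n : ℕ, (if m ≤ n then g n else 0) = ∑' n : ℕ, g (n + m) := by
  rw [← ENNReal.summable.sum_add_tsum_nat_add' (f := fun n => if m ≤ n then g n else 0) (k := m)]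
  rw [Finset.sum_eq_zero (fun i hi => by
    rw [if_neg]; simpa using hi), zero_add]
  simp

open Classical in
set_option maxHeartbeats 1000000 in
/-- For every exponent below `mdim θ`, balls of small radius around typical points have mass
at most the radius to that exponent. -/
lemma ae_eventually_ball_le (θ : Measure ℂ) [IsProbabilityMeasure θ] {s : ℝ}
    (hs0 : 0 ≤ s) (hs : ENNReal.ofReal s < mdim θ) {r : ℝ} (hr0 : 0 < r) (hr1 : r < 1) :
    ∀ᵐ z ∂θ, ∀ᶠ n : ℕ in atTop, θ (closedBall z (r ^ n)) ≤ ENNReal.ofReal ((r ^ n) ^ s) := by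
  obtain ⟨t, hst, ht⟩ : ∃ t : ℝ, s < t ∧ ENNReal.ofReal t < mdim θ := by
    obtain ⟨c, hc1, hc2⟩ := exists_between hs
    refine ⟨c.toReal, ?_, ?_⟩
    · exact (ENNReal.ofReal_lt_iff_lt_toReal hs0 (ne_top_of_lt hc2)).1 hc1
    · rwa [ENNReal.ofReal_toReal (ne_top_of_lt hc2)]
  have ht0 : 0 < t := lt_of_le_of_lt hs0 hst
  let bad : ℕ → Set (ℤ × ℤ) := fun n =>
    {a | ENNReal.ofReal ((r ^ n) ^ s) < θ (cidx (r ^ n) ⁻¹' (nbr a))}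
  let E : Set ℂ := ⋂ m : ℕ, ⋃ n ∈ Ici m, cidx (r ^ n) ⁻¹' (bad n)
  have hE : MeasurableSet E := by
    refine MeasurableSet.iInter fun m => MeasurableSet.biUnion (to_countable _) fun n _ => ?_
    exact measurable_preimage_bad _
  -- the contribution of the bad cells of generation `n`
  have hbad : ∀ n : ℕ, ∑' a, (if a ∈ bad n then
      (ENNReal.ofReal (2 * r ^ n)) ^ t else 0) ≤ ENNReal.ofReal (9 * 2 ^ t * (r ^ (t - s)) ^ n) := by
    intro n
    have hrn : 0 < r ^ n := pow_pos hr0 n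
    have h1 : ∀ a, (if a ∈ bad n then (ENNReal.ofReal (2 * r ^ n)) ^ t else 0) ≤
        ENNReal.ofReal (2 ^ t * (r ^ (t - s)) ^ n) * θ (cidx (r ^ n) ⁻¹' (nbr a)) := by
      intro a
      split_ifs with ha
      · refine le_trans (le_of_eq ?_) (mul_le_mul_right (le_of_lt ha) _)
        rw [← ENNReal.ofReal_mul (by positivity), ENNReal.ofReal_rpow_of_pos (by positivity)]
        congr 1
        rw [Real.mul_rpow (by norm_num) hrn.le, mul_assoc]
        congr 1
        rw [← Real.rpow_natCast, ← Real.rpow_natCast, ← Real.rpow_mul hr0.le, ← Real.rpow_mul hr0.le,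
          ← Real.rpow_mul hr0.le, ← Real.rpow_add hr0]
        congr 1; ring
      · exact zero_le
    refine (ENNReal.tsum_le_tsum h1).trans ?_
    rw [ENNReal.tsum_mul_left]
    refine (mul_le_mul_right (tsum_measure_nbr_le θ _) _).trans (le_of_eq ?_)
    rw [mul_comm, show (9 : ℝ≥0∞) = ENNReal.ofReal 9 by norm_num, ← ENNReal.ofReal_mul (by norm_num)]
    congr 1; ring
  have hq0 : 0 ≤ r ^ (t - s) := by positivity
  have hq1 : r ^ (t - s) < 1 := Real.rpow_lt_one hr0.le hr1 (by linarith)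
  have hsum : Summable fun n : ℕ => 9 * 2 ^ t * (r ^ (t - s)) ^ n :=
    (summable_geometric_of_lt_one hq0 hq1).mul_left _
  have hHE : μH[t] E = 0 := by
    have key := Measure.hausdorffMeasure_le_liminf_tsum (β := ℕ) (ι := fun _ => ℕ × (ℤ × ℤ))
      (d := t) (s := E) (l := atTop) (r := fun m => ENNReal.ofReal (2 * r ^ m))
      (by
        have : Tendsto (fun m : ℕ => 2 * r ^ m) atTop (𝓝 (2 * 0)) :=
          (tendsto_pow_atTop_nhds_zero_of_lt_one hr0.le hr1).const_mul 2
        rw [mul_zero] at this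
        simpa using ENNReal.tendsto_ofReal this)
      (t := fun m p => if m ≤ p.1 ∧ p.2 ∈ bad p.1 then cidx (r ^ p.1) ⁻¹' {p.2} else ∅)
      (by
        refine Eventually.of_forall fun m p => ?_
        split_ifs with h
        · refine ediam_le fun z hz w hw => ?_
          rw [edist_dist]
          refine ENNReal.ofReal_le_ofReal ((dist_le_of_cidx_eq (pow_pos hr0 _) (hz.trans hw.symm)).trans ?_)
          have := pow_le_pow_of_le_one hr0.le hr1.le h.1
          linarith
        · simp)
      (by
        refine Eventually.of_forall fun m z hz => ?_
        have := mem_iInter.1 hz m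
        simp only [mem_iUnion] at this ⊢
        obtain ⟨n, hn, hz⟩ := this
        exact ⟨(n, cidx (r ^ n) z), by
          have hc : m ≤ n ∧ cidx (r ^ n) z ∈ bad n := ⟨hn, hz⟩
          simp only [hc, and_self, if_true]; rfl⟩)
    refine le_antisymm (key.trans ?_) zero_le
    have htail : Tendsto (fun m : ℕ => ENNReal.ofReal (∑' n : ℕ, 9 * 2 ^ t * (r ^ (t - s)) ^ (n + m)))
        atTop (𝓝 0) := by
      have := tendsto_sum_nat_add (fun n : ℕ => 9 * 2 ^ t * (r ^ (t - s)) ^ n)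
      simpa using ENNReal.tendsto_ofReal this
    rw [← htail.liminf_eq]
    refine liminf_le_liminf (Eventually.of_forall fun m => ?_)
    calc ∑' p : ℕ × (ℤ × ℤ), ediam (if m ≤ p.1 ∧ p.2 ∈ bad p.1 then
            cidx (r ^ p.1) ⁻¹' {p.2} else ∅) ^ t
        ≤ ∑' p : ℕ × (ℤ × ℤ), if m ≤ p.1 then (if p.2 ∈ bad p.1 then
            (ENNReal.ofReal (2 * r ^ p.1)) ^ t else 0) else 0 := by
          refine ENNReal.tsum_le_tsum fun p => ?_
          by_cases h1 : m ≤ p.1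
          · by_cases h2 : p.2 ∈ bad p.1
            · simp only [h1, h2, and_self, if_true]
              refine ENNReal.rpow_le_rpow (ediam_le fun z hz w hw => ?_) ht0.le
              rw [edist_dist]
              exact ENNReal.ofReal_le_ofReal (dist_le_of_cidx_eq (pow_pos hr0 _) (hz.trans hw.symm))
            · simp [h2, ht0]
          · simp [h1, ht0]
      _ = ∑' n : ℕ, ∑' a, if m ≤ n then (if a ∈ bad n then
            (ENNReal.ofReal (2 * r ^ n)) ^ t else 0) else 0 := ENNReal.tsum_prod'
      _ ≤ ∑' n : ℕ, if m ≤ n then ENNReal.ofReal (9 * 2 ^ t * (r ^ (t - s)) ^ n) else 0 := by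
          refine ENNReal.tsum_le_tsum fun n => ?_
          by_cases h1 : m ≤ n
          · simpa [h1] using hbad n
          · simp [h1]
      _ = ∑' n : ℕ, ENNReal.ofReal (9 * 2 ^ t * (r ^ (t - s)) ^ (n + m)) := by
          rw [tsum_ge_eq]
      _ = ENNReal.ofReal (∑' n : ℕ, 9 * 2 ^ t * (r ^ (t - s)) ^ (n + m)) := by
          rw [ENNReal.ofReal_tsum_of_nonneg (fun n => by positivity) ((summable_nat_add_iff m).2 hsum)]
      _ ≤ _ := le_rfl
  have hθE : θ E = 0 := by
    by_contra hne
    have h1 : mdim θ ≤ dimH E := iInf₂_le_of_le E hE (iInf_le _ (pos_iff_ne_zero.2 hne))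
    have h2 : dimH E ≤ (t.toNNReal : ℝ≥0∞) := by
      refine dimH_le_of_hausdorffMeasure_ne_top ?_
      rw [Real.coe_toNNReal _ ht0.le, hHE]; exact ENNReal.zero_ne_top
    exact absurd (h1.trans h2) (not_le.2 ht)
  have : ∀ᵐ z ∂θ, z ∉ E := by rwa [ae_iff, show {z | ¬ z ∉ E} = E by ext; simp]
  filter_upwards [this] with z hz
  simp only [E, mem_iInter, not_forall, mem_iUnion, not_exists] at hz
  obtain ⟨m, hm⟩ := hz
  filter_upwards [eventually_ge_atTop m] with n hn
  have := hm n hn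
  simp only [bad, mem_preimage, mem_ofPred_eq, not_lt] at this
  refine le_trans (measure_mono fun w hw => ?_) this
  exact cidx_near (pow_pos hr0 n) (by simpa using hw)

/-- Mass distribution principle on grid cells. -/
lemma le_mdim_of_ae_cell (θ : Measure ℂ) {s : ℝ}
    (hs0 : 0 < s) {r : ℝ} (hr0 : 0 < r) (hr1 : r < 1)
    (h : ∀ᵐ z ∂θ, ∀ᶠ n : ℕ in atTop,
      θ (cidx (r ^ n) ⁻¹' {cidx (r ^ n) z}) ≤ ENNReal.ofReal ((r ^ n) ^ s)) :
    ENNReal.ofReal s ≤ mdim θ := by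
  refine le_iInf₂ fun A hA => le_iInf fun hpos => ?_
  let D : ℕ → Set ℂ := fun m => {z | ∀ n ≥ m,
    θ (cidx (r ^ n) ⁻¹' {cidx (r ^ n) z}) ≤ ENNReal.ofReal ((r ^ n) ^ s)}
  have hcover : θ (A \ ⋃ m, D m) = 0 := by
    refine measure_mono_null (fun z hz => ?_) (ae_iff.1 h)
    simp only [D, Set.mem_sdiff, mem_iUnion, not_exists] at hz
    simp only [mem_ofPred_eq, eventually_atTop, not_exists]
    exact hz.2
  obtain ⟨m, hm⟩ : ∃ m, θ (A ∩ D m) ≠ 0 := by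
    by_contra hcon
    push Not at hcon
    have h1 : θ (A ∩ ⋃ m, D m) = 0 := by rw [inter_iUnion]; exact measure_iUnion_null hcon
    have h2 := measure_le_inter_add_sdiff θ A (⋃ m, D m)
    rw [h1, hcover, add_zero] at h2
    exact absurd h2 (not_le.2 hpos)
  -- a set of diameter at most `r ^ n` carries little mass of `D m`
  have hsmall : ∀ n ≥ m, ∀ t : Set ℂ, ediam t ≤ ENNReal.ofReal (r ^ n) →
      θ (t ∩ (A ∩ D m)) ≤ ENNReal.ofReal (9 * (r ^ n) ^ s) := by
    intro n hn t ht
    rcases (t ∩ (A ∩ D m)).eq_empty_or_nonempty with he | ⟨z, hz⟩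
    · rw [he]; simp
    have hsub : t ∩ (A ∩ D m) ⊆ ⋃ a ∈ nbr (cidx (r ^ n) z), (cidx (r ^ n) ⁻¹' {a}) ∩ D m := by
      intro w hw
      simp only [mem_iUnion]
      refine ⟨cidx (r ^ n) w, cidx_near (pow_pos hr0 n) ?_, rfl, hw.2.2⟩
      have := (edist_le_ediam_of_mem hw.1 hz.1).trans ht
      rwa [edist_dist, ENNReal.ofReal_le_ofReal_iff (pow_pos hr0 n).le] at this
    refine (measure_mono hsub).trans ((measure_biUnion_finset_le _ _).trans ?_)
    refine (Finset.sum_le_card_nsmul _ _ (ENNReal.ofReal ((r ^ n) ^ s)) ?_).trans ?_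
    · intro a _
      rcases ((cidx (r ^ n) ⁻¹' {a}) ∩ D m).eq_empty_or_nonempty with he | ⟨w, hw⟩
      · rw [he]; simp
      · have h1 := hw.2 n hn
        rw [show cidx (r ^ n) w = a from hw.1] at h1
        exact (measure_mono inter_subset_left).trans h1
    · rw [card_nbr, nsmul_eq_mul, ENNReal.ofReal_mul (by norm_num)]
      norm_num
  set c : ℝ≥0∞ := ENNReal.ofReal (9 * r ^ (-s)) with hc
  have hrs : 0 < r ^ (-s) := Real.rpow_pos_of_pos hr0 _
  have hc0 : c ≠ 0 := by rw [hc]; simp; positivity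
  have hctop : c ≠ ∞ := ENNReal.ofReal_ne_top
  have hle : c⁻¹ • θ.restrict (A ∩ D m) ≤ μH[s] := by
    refine Measure.le_hausdorffMeasure s _ (ENNReal.ofReal (r ^ m)) (by simpa using pow_pos hr0 m)
      fun t ht => ?_
    have hDm : MeasurableSet (D m) := by
      have : D m = ⋂ n ≥ m, cidx (r ^ n) ⁻¹' {a | θ (cidx (r ^ n) ⁻¹' {a}) ≤
          ENNReal.ofReal ((r ^ n) ^ s)} := by
        ext z; simp [D]
      rw [this]
      exact MeasurableSet.iInter fun n => MeasurableSet.iInter fun _ => measurable_preimage_bad _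
    rw [Measure.smul_apply, Measure.restrict_apply' (hA.inter hDm), smul_eq_mul]
    rw [ENNReal.inv_mul_le_iff hc0 hctop]
    rcases eq_or_ne (ediam t) 0 with h0 | h0
    · have hz : θ (t ∩ (A ∩ D m)) ≤ 0 := by
        have hlim : Tendsto (fun n : ℕ => ENNReal.ofReal (9 * (r ^ n) ^ s)) atTop (𝓝 0) := by
          have h1 : Tendsto (fun n : ℕ => 9 * (r ^ s) ^ n) atTop (𝓝 (9 * 0)) :=
            (tendsto_pow_atTop_nhds_zero_of_lt_one (by positivity)
              (Real.rpow_lt_one hr0.le hr1 hs0)).const_mul 9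
          rw [mul_zero] at h1
          have h2 := ENNReal.tendsto_ofReal h1
          rw [ENNReal.ofReal_zero] at h2
          refine h2.congr fun n => ?_
          rw [← Real.rpow_natCast, ← Real.rpow_natCast, ← Real.rpow_mul hr0.le,
            ← Real.rpow_mul hr0.le, mul_comm s]
        refine ge_of_tendsto hlim ?_
        filter_upwards [eventually_ge_atTop m] with n hn
        exact hsmall n hn t (by rw [h0]; exact zero_le)
      exact hz.trans zero_le
    · have htop : ediam t ≠ ∞ := ne_top_of_le_ne_top ENNReal.ofReal_ne_top ht
      set d := (ediam t).toReal with hd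
      have hd0 : 0 < d := ENNReal.toReal_pos h0 htop
      have hdt : ediam t = ENNReal.ofReal d := (ENNReal.ofReal_toReal htop).symm
      have hdm : d ≤ r ^ m := by
        rwa [hdt, ENNReal.ofReal_le_ofReal_iff (pow_pos hr0 m).le] at ht
      obtain ⟨n, hn1, hn2⟩ := exists_nat_pow_near_of_lt_one hd0
        (hdm.trans (pow_le_one₀ hr0.le hr1.le)) hr0 hr1
      have hnm : m ≤ n := by
        by_contra hlt
        push Not at hlt
        have := pow_le_pow_of_le_one hr0.le hr1.le (show n + 1 ≤ m from hlt)
        linarith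
      refine (hsmall n hnm t (by rw [hdt]; exact ENNReal.ofReal_le_ofReal hn2)).trans ?_
      rw [hdt, hc, ENNReal.ofReal_rpow_of_pos hd0, ← ENNReal.ofReal_mul (by positivity)]
      refine ENNReal.ofReal_le_ofReal ?_
      rw [mul_assoc]
      refine mul_le_mul_of_nonneg_left ?_ (by norm_num)
      have h1 : (r ^ (n + 1)) ^ s ≤ d ^ s := Real.rpow_le_rpow (by positivity) hn1.le hs0.le
      have h2 : (r ^ n) ^ s = r ^ (-s) * (r ^ (n + 1)) ^ s := by
        rw [pow_succ, Real.mul_rpow (by positivity) hr0.le, mul_comm ((r ^ n) ^ s), ← mul_assoc,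
          ← Real.rpow_add hr0]
        simp
      rw [h2]
      exact mul_le_mul_of_nonneg_left h1 hrs.le
  have hH : μH[s] A ≠ 0 := by
    have h1 := hle A
    rw [Measure.smul_apply, smul_eq_mul] at h1
    intro h0
    rw [h0] at h1
    have h2 : θ.restrict (A ∩ D m) A = 0 := by
      rcases mul_eq_zero.1 (le_antisymm h1 zero_le) with h3 | h3
      · exact absurd h3 (ENNReal.inv_ne_zero.2 hctop)
      · exact h3
    rw [Measure.restrict_apply hA] at h2
    exact hm (measure_mono_null (show A ∩ D m ⊆ A ∩ (A ∩ D m) from fun z hz => ⟨hz.1, hz⟩) h2)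
  have := le_dimH_of_hausdorffMeasure_ne_zero (s := A) (d := s.toNNReal)
    (by rwa [Real.coe_toNNReal _ hs0.le])
  exact this

end SC

/-! ### Trees of measures and a lower bound for the dimension by entropy -/

namespace SC

/-- The block of indices at sup-distance at most `m` from `a`. -/
noncomputable def box (m : ℕ) (a : ℤ × ℤ) : Finset (ℤ × ℤ) :=
  Finset.Icc (a.1 - m) (a.1 + m) ×ˢ Finset.Icc (a.2 - m) (a.2 + m)

lemma card_box (m : ℕ) (a : ℤ × ℤ) : (box m a).card = (2 * m + 1) ^ 2 := by
  unfold box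
  rw [Finset.card_product]
  simp only [Int.card_Icc]
  have h1 : (a.1 + m + 1 - (a.1 - m)).toNat = 2 * m + 1 := by omega
  have h2 : (a.2 + m + 1 - (a.2 - m)).toNat = 2 * m + 1 := by omega
  rw [h1, h2, sq]

lemma floor_near_mul {ε x y : ℝ} (hε : 0 < ε) {m : ℕ} (h : |x - y| ≤ m * ε) :
    ⌊x / ε⌋ ∈ Finset.Icc (⌊y / ε⌋ - m) (⌊y / ε⌋ + m) := by
  have h1 : x / ε ≤ y / ε + m := by
    rw [div_add' _ _ _ hε.ne']
    exact div_le_div_of_nonneg_right (by linarith [(abs_le.1 h).2]) hε.le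
  have h2 : y / ε ≤ x / ε + m := by
    rw [div_add' _ _ _ hε.ne']
    exact div_le_div_of_nonneg_right (by linarith [(abs_le.1 h).1]) hε.le
  have h3 := Int.floor_le_floor h1
  have h4 := Int.floor_le_floor h2
  rw [Int.floor_add_natCast] at h3 h4
  rw [Finset.mem_Icc]
  omega

lemma cidx_near_mul {ε : ℝ} (hε : 0 < ε) {m : ℕ} {z w : ℂ} (h : dist z w ≤ m * ε) :
    cidx ε z ∈ box m (cidx ε w) := by
  rw [Complex.dist_eq] at h
  have h1 := (Complex.abs_re_le_norm (z - w)).trans h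
  have h2 := (Complex.abs_im_le_norm (z - w)).trans h
  rw [Complex.sub_re] at h1
  rw [Complex.sub_im] at h2
  exact Finset.mem_product.2 ⟨floor_near_mul hε h1, floor_near_mul hε h2⟩

/-- A tree of probability measures on `ℂ`: the measure at a node is the convex combination, with
weights depending only on the edge label, of the measures at its children; the measure at a node
of level `k` lives in a ball of radius `R * r ^ k`. -/
structure MTree (𝒮 J : Type*) [Fintype J] where
  lev : 𝒮 → ℕ
  ch : 𝒮 → J → 𝒮
  lev_ch : ∀ s j, lev (ch s j) = lev s + 1
  wt : J → ℝ
  wt_pos : ∀ j, 0 < wt j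
  wt_sum : ∑ j, wt j = 1
  θ : 𝒮 → Measure ℂ
  prob : ∀ s, IsProbabilityMeasure (θ s)
  decomp : ∀ s, θ s = ∑ j, ENNReal.ofReal (wt j) • θ (ch s j)
  cen : 𝒮 → ℂ
  R : ℕ
  r : ℝ
  r_pos : 0 < r
  r_lt : r < 1
  supp : ∀ s, θ s (closedBall (cen s) (R * r ^ lev s))ᶜ = 0

namespace MTree
variable {𝒮 J : Type*} [Fintype J] (T : MTree 𝒮 J)

open Classical in
/-- The total weight of the children of `s` whose centre lies in the same grid square of side
`r ^ (lev s + 1)` as the centre of the child `j`. -/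
noncomputable def P (s : 𝒮) (j : J) : ℝ :=
  ∑ i ∈ Finset.univ.filter (fun i => cidx (T.r ^ (T.lev s + 1)) (T.cen (T.ch s i)) =
    cidx (T.r ^ (T.lev s + 1)) (T.cen (T.ch s j))), T.wt i

lemma wt_le_P (s : 𝒮) (j : J) : T.wt j ≤ T.P s j := by
  classical
  unfold P
  exact Finset.single_le_sum (f := T.wt) (fun i _ => (T.wt_pos i).le) (by simp)

lemma P_pos (s : 𝒮) (j : J) : 0 < T.P s j := (T.wt_pos j).trans_le (T.wt_le_P s j)

lemma P_le_one (s : 𝒮) (j : J) : T.P s j ≤ 1 := by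
  classical
  unfold P
  rw [← T.wt_sum]
  exact Finset.sum_le_univ_sum_of_nonneg fun i => (T.wt_pos i).le

/-- The constant bounding the overlap of the supports of the children in one grid square. -/
noncomputable def Cc : ℝ := (2 * ((2 * T.R + 2 : ℕ) : ℝ) + 1) ^ 2

lemma Cc_ge : 1 ≤ T.Cc := by
  unfold Cc
  have : (0 : ℝ) ≤ ((2 * T.R + 2 : ℕ) : ℝ) := by positivity
  nlinarith

lemma real_decomp (s : 𝒮) (A : Set ℂ) :
    (T.θ s).real A = ∑ j, T.wt j * (T.θ (T.ch s j)).real A := by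
  have := fun j => T.prob (T.ch s j)
  rw [measureReal_def, T.decomp s, Measure.finsetSum_apply, ENNReal.toReal_sum]
  · refine Finset.sum_congr rfl fun j _ => ?_
    rw [Measure.smul_apply, smul_eq_mul, ENNReal.toReal_mul, ENNReal.toReal_ofReal (T.wt_pos j).le]
    rfl
  · intro j _
    rw [Measure.smul_apply, smul_eq_mul]
    exact ENNReal.mul_ne_top ENNReal.ofReal_ne_top (measure_ne_top _ _)

/-- One step of the `L^q` estimate on a single small square, `q = 1 + l`. -/
lemma cell_step {l : ℝ} (hl : 0 < l) (s : 𝒮) {ε : ℝ} (hε0 : 0 < ε) (hε : ε ≤ T.r ^ (T.lev s + 1))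
    (a : ℤ × ℤ) :
    (T.θ s).real (cidx ε ⁻¹' {a}) ^ (1 + l) ≤
      T.Cc ^ l * ∑ j, T.wt j * T.P s j ^ l * (T.θ (T.ch s j)).real (cidx ε ⁻¹' {a}) ^ (1 + l) := by
  classical
  have hprob := fun j => T.prob (T.ch s j)
  set Q := cidx ε ⁻¹' {a}
  set m : J → ℝ := fun j => (T.θ (T.ch s j)).real Q with hm
  have hm0 : ∀ j, 0 ≤ m j := fun j => measureReal_nonneg
  set k := T.lev s + 1
  have hrk : 0 < T.r ^ k := pow_pos T.r_pos k
  let JQ : Finset J := Finset.univ.filter fun j => m j ≠ 0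
  let c : J → ℤ × ℤ := fun j => cidx (T.r ^ k) (T.cen (T.ch s j))
  have hnear : ∀ i ∈ JQ, ∃ w ∈ Q, dist w (T.cen (T.ch s i)) ≤ T.R * T.r ^ k := by
    intro i hi
    by_contra hcon
    push Not at hcon
    refine (Finset.mem_filter.1 hi).2 ?_
    have : T.θ (T.ch s i) Q = 0 := by
      refine measure_mono_null (fun w hw => ?_) (T.supp (T.ch s i))
      rw [T.lev_ch]
      simpa using hcon w hw
    simp [hm, measureReal_def, this]
  have hbox : ∀ i ∈ JQ, ∀ j ∈ JQ, c i ∈ box (2 * T.R + 2) (c j) := by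
    intro i hi j hj
    obtain ⟨w, hw, hwi⟩ := hnear i hi
    obtain ⟨w', hw', hwj⟩ := hnear j hj
    refine cidx_near_mul hrk ?_
    have h1 := dist_le_of_cidx_eq hε0 (z := w) (w := w')
      ((show cidx ε w = a from hw).trans (show cidx ε w' = a from hw').symm)
    have h2 := dist_triangle4 (T.cen (T.ch s i)) w w' (T.cen (T.ch s j))
    rw [dist_comm _ w] at h2
    push_cast
    nlinarith
  have hW : ∑ j ∈ JQ, T.wt j / T.P s j ≤ T.Cc := by
    rcases JQ.eq_empty_or_nonempty with he | ⟨j0, hj0⟩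
    · rw [he]; simpa using zero_le_one.trans T.Cc_ge
    rw [← Finset.sum_fiberwise_of_maps_to (fun i hi => hbox i hi j0 hj0)]
    refine (Finset.sum_le_card_nsmul _ _ 1 ?_).trans ?_
    · intro b _
      rcases (JQ.filter fun i => c i = b).eq_empty_or_nonempty with he | ⟨i0, hi0⟩
      · rw [he]; simp
      have hb : ∀ i ∈ JQ.filter (fun i => c i = b), T.wt i / T.P s i = T.wt i / T.P s i0 := by
        intro i hi
        have h1 : c i = c i0 := (Finset.mem_filter.1 hi).2.trans (Finset.mem_filter.1 hi0).2.symm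
        have : T.P s i = T.P s i0 := by
          unfold P
          refine Finset.sum_congr ?_ fun _ _ => rfl
          ext x
          simp only [Finset.mem_filter]
          change _ ∧ c x = c i ↔ _ ∧ c x = c i0
          rw [h1]
        rw [this]
      rw [Finset.sum_congr rfl hb, ← Finset.sum_div, div_le_one (T.P_pos s i0)]
      unfold P
      refine Finset.sum_le_sum_of_subset_of_nonneg ?_ fun i _ _ => (T.wt_pos i).le
      intro i hi
      refine Finset.mem_filter.2 ⟨Finset.mem_univ _, ?_⟩
      exact (Finset.mem_filter.1 hi).2.trans (Finset.mem_filter.1 hi0).2.symm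
    · rw [card_box]; simp [Cc]
  have hsum : (T.θ s).real Q = ∑ j ∈ JQ, (T.wt j / T.P s j) * (T.P s j * m j) := by
    rw [T.real_decomp, Finset.sum_filter]
    refine Finset.sum_congr rfl fun j _ => ?_
    have := (T.P_pos s j).ne'
    split_ifs with h
    · field_simp; rfl
    · simp only [ne_eq, not_not] at h
      have h' : (T.θ (T.ch s j)).real Q = 0 := h
      rw [h', mul_zero]
  have hq : 1 ≤ 1 + l := by linarith
  have hq0 : (1 + l) ≠ 0 := by positivity
  have hw0 : ∀ j, 0 ≤ T.wt j / T.P s j := fun j => div_nonneg (T.wt_pos j).le (T.P_pos s j).le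
  have hx0 : ∀ j, 0 ≤ T.P s j * m j := fun j => mul_nonneg (T.P_pos s j).le (hm0 j)
  have hold := Real.inner_le_weight_mul_Lp_of_nonneg JQ hq (fun j => T.wt j / T.P s j)
    (fun j => T.P s j * m j) hw0 hx0
  rw [← hsum] at hold
  have hY0 : 0 ≤ ∑ j ∈ JQ, T.wt j / T.P s j * (T.P s j * m j) ^ (1 + l) :=
    Finset.sum_nonneg fun j _ => mul_nonneg (hw0 j) (Real.rpow_nonneg (hx0 j) _)
  have hW0 : 0 ≤ ∑ j ∈ JQ, T.wt j / T.P s j := Finset.sum_nonneg fun j _ => hw0 j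
  calc (T.θ s).real Q ^ (1 + l)
      ≤ ((∑ j ∈ JQ, T.wt j / T.P s j) ^ (1 - (1 + l)⁻¹) *
          (∑ j ∈ JQ, T.wt j / T.P s j * (T.P s j * m j) ^ (1 + l)) ^ (1 + l)⁻¹) ^ (1 + l) :=
        Real.rpow_le_rpow measureReal_nonneg hold (by positivity)
    _ = (∑ j ∈ JQ, T.wt j / T.P s j) ^ l *
          (∑ j ∈ JQ, T.wt j / T.P s j * (T.P s j * m j) ^ (1 + l)) := by
        rw [Real.mul_rpow (Real.rpow_nonneg hW0 _) (Real.rpow_nonneg hY0 _),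
          ← Real.rpow_mul hW0, ← Real.rpow_mul hY0, inv_mul_cancel₀ hq0, Real.rpow_one]
        congr 2
        field_simp
        ring
    _ ≤ T.Cc ^ l * (∑ j ∈ JQ, T.wt j / T.P s j * (T.P s j * m j) ^ (1 + l)) :=
        mul_le_mul_of_nonneg_right (Real.rpow_le_rpow hW0 hW hl.le) hY0
    _ ≤ T.Cc ^ l * ∑ j, T.wt j * T.P s j ^ l * m j ^ (1 + l) := by
        refine mul_le_mul_of_nonneg_left ?_ (Real.rpow_nonneg (zero_le_one.trans T.Cc_ge) _)
        have h0 : ∀ j, 0 ≤ T.wt j * T.P s j ^ l * m j ^ (1 + l) := fun j =>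
          mul_nonneg (mul_nonneg (T.wt_pos j).le (Real.rpow_nonneg (T.P_pos s j).le _))
            (Real.rpow_nonneg (hm0 j) _)
        refine le_trans (le_of_eq ?_) (Finset.sum_le_univ_sum_of_nonneg h0 (s := JQ))
        refine Finset.sum_congr rfl fun j _ => ?_
        rw [Real.mul_rpow (T.P_pos s j).le (hm0 j), Real.rpow_add (T.P_pos s j), Real.rpow_one]
        have := (T.P_pos s j).ne'
        field_simp

/-- The `L^q` sum of a measure over the grid of side `ε`, with `q = 1 + l`. -/
noncomputable def tau (l : ℝ) (θ : Measure ℂ) (ε : ℝ) : ℝ≥0∞ :=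
  ∑' a, ENNReal.ofReal (θ.real (cidx ε ⁻¹' {a}) ^ (1 + l))

/-- The transfer operator `φ ↦ ∑ j, wt j * (P s j) ^ l * φ (ch s j)`. -/
noncomputable def op (l : ℝ) (φ : 𝒮 → ℝ) (s : 𝒮) : ℝ :=
  ∑ j, T.wt j * T.P s j ^ l * φ (T.ch s j)

lemma coef_nonneg (l : ℝ) (s : 𝒮) (j : J) : 0 ≤ T.wt j * T.P s j ^ l :=
  mul_nonneg (T.wt_pos j).le (Real.rpow_nonneg (T.P_pos s j).le _)

lemma op_mono {l : ℝ} {φ ψ : 𝒮 → ℝ} (h : ∀ s, φ s ≤ ψ s) (s : 𝒮) : T.op l φ s ≤ T.op l ψ s :=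
  Finset.sum_le_sum fun j _ => mul_le_mul_of_nonneg_left (h _) (T.coef_nonneg l s j)

lemma op_iter_le {l : ℝ} {φ : 𝒮 → ℝ} {c : ℝ} (h : ∀ s, φ s ≤ c) (N : ℕ) :
    ∀ s, (T.op l)^[N] φ s ≤ c * (T.op l)^[N] 1 s := by
  induction N with
  | zero => intro s; simpa using h s
  | succ N ih =>
    intro s
    rw [Function.iterate_succ_apply', Function.iterate_succ_apply']
    refine (T.op_mono ih s).trans (le_of_eq ?_)
    unfold op
    rw [Finset.mul_sum]
    exact Finset.sum_congr rfl fun j _ => by ring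

lemma op_iter_nonneg {l : ℝ} (N : ℕ) : ∀ s, 0 ≤ (T.op l)^[N] 1 s := by
  induction N with
  | zero => intro s; simp
  | succ N ih =>
    intro s
    rw [Function.iterate_succ_apply']
    exact Finset.sum_nonneg fun j _ => mul_nonneg (T.coef_nonneg l s j) (ih _)

/-- The `L^q` sums of a node measure, `q = 1 + l`, `N` generations below it, are controlled by the
iterated transfer operator. -/
lemma tau_le {l : ℝ} (hl : 0 < l) (N : ℕ) : ∀ s,
    tau l (T.θ s) (T.r ^ (T.lev s + N)) ≤ ENNReal.ofReal ((T.Cc ^ l) ^ N * (T.op l)^[N] 1 s) := by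
  have hC0 : 0 ≤ T.Cc ^ l := Real.rpow_nonneg (zero_le_one.trans T.Cc_ge) _
  induction N with
  | zero =>
    intro s
    have := T.prob s
    simp only [pow_zero, Function.iterate_zero, id_eq, Pi.one_apply, mul_one, ENNReal.ofReal_one]
    unfold tau
    rw [← measure_univ (μ := T.θ s), ← tsum_real_preimage (T.θ s) _ (measurable_cidx (T.r ^ (T.lev s + 0)))]
    refine ENNReal.tsum_le_tsum fun a => ?_
    rw [← ofReal_measureReal]
    refine ENNReal.ofReal_le_ofReal ?_
    have := Real.rpow_le_rpow_of_exponent_ge' (measureReal_nonneg (μ := T.θ s)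
      (s := cidx (T.r ^ (T.lev s + 0)) ⁻¹' {a})) measureReal_le_one zero_le_one
      (show (1 : ℝ) ≤ 1 + l by linarith)
    rwa [Real.rpow_one] at this
  | succ N ih =>
    intro s
    have hprob := fun j => T.prob (T.ch s j)
    have hε0 : 0 < T.r ^ (T.lev s + (N + 1)) := pow_pos T.r_pos _
    have hε : T.r ^ (T.lev s + (N + 1)) ≤ T.r ^ (T.lev s + 1) :=
      pow_le_pow_of_le_one T.r_pos.le T.r_lt.le (by omega)
    calc tau l (T.θ s) (T.r ^ (T.lev s + (N + 1)))
        ≤ ∑' a, ∑ j, ENNReal.ofReal (T.Cc ^ l * (T.wt j * T.P s j ^ l)) *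
            ENNReal.ofReal ((T.θ (T.ch s j)).real
              (cidx (T.r ^ (T.lev s + (N + 1))) ⁻¹' {a}) ^ (1 + l)) := by
          refine ENNReal.tsum_le_tsum fun a => ?_
          refine (ENNReal.ofReal_le_ofReal (T.cell_step hl s hε0 hε a)).trans (le_of_eq ?_)
          rw [Finset.mul_sum, ENNReal.ofReal_sum_of_nonneg]
          · refine Finset.sum_congr rfl fun j _ => ?_
            rw [← ENNReal.ofReal_mul (mul_nonneg hC0 (T.coef_nonneg l s j))]
            congr 1; ring
          · intro j _
            exact mul_nonneg hC0 (mul_nonneg (T.coef_nonneg l s j)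
              (Real.rpow_nonneg measureReal_nonneg _))
      _ = ∑ j, ENNReal.ofReal (T.Cc ^ l * (T.wt j * T.P s j ^ l)) *
            tau l (T.θ (T.ch s j)) (T.r ^ (T.lev s + (N + 1))) := by
          rw [Summable.tsum_finsetSum (fun _ _ => ENNReal.summable)]
          refine Finset.sum_congr rfl fun j _ => ?_
          rw [ENNReal.tsum_mul_left]; rfl
      _ ≤ ∑ j, ENNReal.ofReal (T.Cc ^ l * (T.wt j * T.P s j ^ l)) *
            ENNReal.ofReal ((T.Cc ^ l) ^ N * (T.op l)^[N] 1 (T.ch s j)) := by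
          refine Finset.sum_le_sum fun j _ => mul_le_mul_right ?_ _
          have := ih (T.ch s j)
          rwa [T.lev_ch, show T.lev s + 1 + N = T.lev s + (N + 1) by omega] at this
      _ = ENNReal.ofReal ((T.Cc ^ l) ^ (N + 1) * (T.op l)^[N + 1] 1 s) := by
          rw [Function.iterate_succ_apply', show T.op l ((T.op l)^[N] 1) s =
            ∑ j, T.wt j * T.P s j ^ l * (T.op l)^[N] 1 (T.ch s j) from rfl]
          rw [Finset.mul_sum, ENNReal.ofReal_sum_of_nonneg]
          · refine Finset.sum_congr rfl fun j _ => ?_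
            rw [← ENNReal.ofReal_mul (mul_nonneg hC0 (T.coef_nonneg l s j))]
            congr 1
            ring
          · intro j _
            exact mul_nonneg (pow_nonneg hC0 _) (mul_nonneg (T.coef_nonneg l s j)
              (T.op_iter_nonneg N _))

/-- Truncated information: `-log max(x, e^{-B})`. -/
noncomputable def tlog (B x : ℝ) : ℝ := -Real.log (max x (Real.exp (-B)))

lemma tlog_le {B x : ℝ} : tlog B x ≤ B := by
  unfold tlog
  have := Real.log_le_log (Real.exp_pos (-B)) (le_max_right x (Real.exp (-B)))
  rw [Real.log_exp] at this
  linarith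

lemma tlog_nonneg {B x : ℝ} (hB : 0 ≤ B) (hx : x ≤ 1) : 0 ≤ tlog B x := by
  unfold tlog
  have : Real.log (max x (Real.exp (-B))) ≤ 0 :=
    Real.log_nonpos (le_max_of_le_right (Real.exp_pos _).le)
      (max_le hx (Real.exp_le_one_iff.2 (by linarith)))
  linarith

lemma tlog_anti {B x y : ℝ} (h : x ≤ y) : tlog B y ≤ tlog B x := by
  unfold tlog
  have := Real.log_le_log (lt_max_of_lt_right (Real.exp_pos (-B)))
    (max_le_max h (le_refl (Real.exp (-B))))
  linarith

lemma rpow_le_exp_tlog {B x l : ℝ} (hx : 0 < x) (hl : 0 ≤ l) :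
    x ^ l ≤ Real.exp (-(l * tlog B x)) := by
  have h0 : 0 < max x (Real.exp (-B)) := lt_max_of_lt_left hx
  calc x ^ l ≤ (max x (Real.exp (-B))) ^ l := Real.rpow_le_rpow hx.le (le_max_left _ _) hl
    _ = Real.exp (-(l * tlog B x)) := by
        rw [Real.rpow_def_of_pos h0]; unfold tlog; congr 1; ring

lemma measurable_ball_real (θ : Measure ℂ) [IsProbabilityMeasure θ] (ρ : ℝ) :
    Measurable fun z => θ.real (closedBall z ρ) := by
  have hm : MeasurableSet {p : ℂ × ℂ | dist p.2 p.1 ≤ ρ} :=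
    measurableSet_le (measurable_snd.dist measurable_fst) measurable_const
  exact (measurable_measure_prodMk_left hm).ennreal_toReal

lemma measurable_tlog (B : ℝ) : Measurable (tlog B) :=
  (Real.measurable_log.comp (measurable_id.max measurable_const)).neg

lemma integrable_tlog_ball (θ θ' : Measure ℂ) [IsProbabilityMeasure θ] [IsProbabilityMeasure θ']
    {B : ℝ} (hB : 0 ≤ B) (ρ : ℝ) :
    Integrable (fun z => tlog B (θ.real (closedBall z ρ))) θ' := by
  refine Integrable.of_bound ((measurable_tlog B).comp (measurable_ball_real θ ρ)).aestronglyMeasurable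
    B (Eventually.of_forall fun z => ?_)
  rw [Real.norm_of_nonneg (tlog_nonneg hB measureReal_le_one)]
  exact tlog_le

/-- The truncated entropy of the node measure `θ s` at the scale of its children. -/
noncomputable def ent (B : ℝ) (s : 𝒮) : ℝ :=
  ∫ z, tlog B ((T.θ s).real (closedBall z ((2 * T.R + 2) * T.r ^ (T.lev s + 1)))) ∂(T.θ s)

/-- The entropy of a node is at most the mean truncated information of the distribution of its
children over the grid squares of the next generation. -/
lemma ent_le {B : ℝ} (hB : 0 ≤ B) (s : 𝒮) : T.ent B s ≤ ∑ j, T.wt j * tlog B (T.P s j) := by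
  classical
  have hprob := T.prob
  set k := T.lev s + 1 with hk
  have hrk : 0 < T.r ^ k := pow_pos T.r_pos k
  set g : ℂ → ℝ := fun z => tlog B ((T.θ s).real (closedBall z ((2 * T.R + 2) * T.r ^ k))) with hg
  have hInt : ∀ s', Integrable g (T.θ s') := fun s' => integrable_tlog_ball _ _ hB _
  have h1 : T.ent B s = ∑ j, T.wt j * ∫ z, g z ∂(T.θ (T.ch s j)) := by
    change ∫ z, g z ∂(T.θ s) = _
    conv_lhs => rw [T.decomp s]
    rw [integral_finsetSum_measure]
    · refine Finset.sum_congr rfl fun j _ => ?_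
      rw [integral_smul_measure, ENNReal.toReal_ofReal (T.wt_pos j).le, smul_eq_mul]
    · intro j _
      exact (hInt _).smul_measure ENNReal.ofReal_ne_top
  rw [h1]
  refine Finset.sum_le_sum fun j _ => mul_le_mul_of_nonneg_left ?_ (T.wt_pos j).le
  have h2 : ∀ᵐ z ∂(T.θ (T.ch s j)), g z ≤ tlog B (T.P s j) := by
    have hs := T.supp (T.ch s j)
    rw [T.lev_ch] at hs
    filter_upwards [show ∀ᵐ z ∂(T.θ (T.ch s j)), z ∈ closedBall (T.cen (T.ch s j)) (T.R * T.r ^ k)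
      from hs] with z hz
    refine tlog_anti ?_
    rw [T.real_decomp]
    unfold P
    rw [Finset.sum_filter]
    refine Finset.sum_le_sum fun i _ => ?_
    split_ifs with hi
    · have h3 : (T.θ (T.ch s i)).real (closedBall z ((2 * T.R + 2) * T.r ^ k)) = 1 := by
        have hs' := T.supp (T.ch s i)
        rw [T.lev_ch] at hs'
        have h4 : T.θ (T.ch s i) (closedBall z ((2 * T.R + 2) * T.r ^ k)) = 1 := by
          rw [prob_compl_eq_zero_iff measurableSet_closedBall |>.symm]
          refine measure_mono_null ?_ hs'
          refine compl_subset_compl.2 fun w hw => ?_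
          have h5 := dist_le_of_cidx_eq hrk hi
          have h6 := dist_triangle4 w (T.cen (T.ch s i)) (T.cen (T.ch s j)) z
          rw [mem_closedBall] at hw hz ⊢
          rw [dist_comm (T.cen (T.ch s j)) z] at h6
          rw [← hk] at hw
          linarith
        rw [measureReal_def, h4]; rfl
      rw [h3, mul_one]
    · exact mul_nonneg (T.wt_pos i).le measureReal_nonneg
  calc ∫ z, g z ∂(T.θ (T.ch s j)) ≤ ∫ _, tlog B (T.P s j) ∂(T.θ (T.ch s j)) :=
        integral_mono_ae (hInt _) (integrable_const _) h2
    _ = tlog B (T.P s j) := by simp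

/-- The expected sum of the entropies along the first `N` generations below a node. -/
noncomputable def gain (B : ℝ) : ℕ → 𝒮 → ℝ
  | 0, _ => 0
  | N + 1, s => T.ent B s + ∑ j, T.wt j * gain B N (T.ch s j)

lemma ent_nonneg {B : ℝ} (hB : 0 ≤ B) (s : 𝒮) : 0 ≤ T.ent B s :=
  have := T.prob s
  integral_nonneg fun _ => tlog_nonneg hB measureReal_le_one

lemma gain_bounds {B : ℝ} (hB : 0 ≤ B) (N : ℕ) : ∀ s, 0 ≤ T.gain B N s ∧ T.gain B N s ≤ N * B := by
  induction N with
  | zero => intro s; simp [gain]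
  | succ N ih =>
    intro s
    constructor
    · exact add_nonneg (T.ent_nonneg hB s)
        (Finset.sum_nonneg fun j _ => mul_nonneg (T.wt_pos j).le (ih _).1)
    · have h1 : T.ent B s ≤ B := by
        refine (T.ent_le hB s).trans ?_
        calc ∑ j, T.wt j * tlog B (T.P s j) ≤ ∑ j, T.wt j * B :=
              Finset.sum_le_sum fun j _ => mul_le_mul_of_nonneg_left tlog_le (T.wt_pos j).le
          _ = B := by rw [← Finset.sum_mul, T.wt_sum, one_mul]
      have h2 : ∑ j, T.wt j * T.gain B N (T.ch s j) ≤ N * B := by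
        calc _ ≤ ∑ j, T.wt j * (N * B) :=
              Finset.sum_le_sum fun j _ => mul_le_mul_of_nonneg_left (ih _).2 (T.wt_pos j).le
          _ = N * B := by rw [← Finset.sum_mul, T.wt_sum, one_mul]
      simp only [gain]
      push_cast
      linarith

lemma exp_neg_le {x : ℝ} (hx : 0 ≤ x) : Real.exp (-x) ≤ 1 - x + x ^ 2 := by
  have h1 : Real.exp (-x) * Real.exp x = 1 := by rw [← Real.exp_add]; simp
  have h2 : 1 + x ≤ Real.exp x := by linarith [Real.add_one_le_exp x]
  have h3 := Real.exp_pos (-x)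
  rcases le_or_gt x 1 with h | h
  · have h4 : Real.exp (-x) * (1 + x) ≤ 1 := by nlinarith
    have h5 : 1 ≤ (1 - x + x ^ 2) * (1 + x) := by nlinarith [pow_nonneg hx 3]
    by_contra hcon
    push Not at hcon
    nlinarith
  · have : Real.exp (-x) ≤ 1 := Real.exp_le_one_iff.2 (by linarith)
    nlinarith

/-- Second order expansion of the iterated operator at `l = 0`. -/
lemma op_iter_le_exp {B : ℝ} (hB : 0 ≤ B) (N : ℕ) : ∃ D : ℝ, 0 ≤ D ∧ ∀ l : ℝ, 0 < l → ∀ s,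
    (T.op l)^[N] 1 s ≤ Real.exp (-(l * T.gain B N s) + l ^ 2 * D) := by
  induction N with
  | zero => exact ⟨0, le_rfl, fun l _ s => by simp [gain]⟩
  | succ N ih =>
    obtain ⟨D, hD, ih⟩ := ih
    set M := ((N + 1 : ℕ) : ℝ) * B with hM
    refine ⟨D + M ^ 2, by positivity, fun l hl s => ?_⟩
    rw [Function.iterate_succ_apply']
    set u : J → ℝ := fun j => tlog B (T.P s j) + T.gain B N (T.ch s j) with hu
    have hu0 : ∀ j, 0 ≤ u j := fun j =>
      add_nonneg (tlog_nonneg hB (T.P_le_one s j)) (T.gain_bounds hB N _).1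
    have huM : ∀ j, u j ≤ M := fun j => by
      have h1 := tlog_le (B := B) (x := T.P s j)
      have h2 := (T.gain_bounds hB N (T.ch s j)).2
      rw [hM]; push_cast
      simp only [hu]; linarith
    have h1 : T.op l ((T.op l)^[N] 1) s ≤ ∑ j, T.wt j * ((1 - l * u j + l ^ 2 * M ^ 2) *
        Real.exp (l ^ 2 * D)) := by
      refine Finset.sum_le_sum fun j _ => ?_
      rw [mul_assoc]
      refine mul_le_mul_of_nonneg_left ?_ (T.wt_pos j).le
      calc T.P s j ^ l * (T.op l)^[N] 1 (T.ch s j)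
          ≤ Real.exp (-(l * tlog B (T.P s j))) *
              Real.exp (-(l * T.gain B N (T.ch s j)) + l ^ 2 * D) :=
            mul_le_mul (rpow_le_exp_tlog (T.P_pos s j) hl.le) (ih l hl _) (T.op_iter_nonneg N _)
              (Real.exp_pos _).le
        _ = Real.exp (-(l * u j)) * Real.exp (l ^ 2 * D) := by
            rw [← Real.exp_add, ← Real.exp_add]; congr 1; simp only [hu]; ring
        _ ≤ _ := by
            refine mul_le_mul_of_nonneg_right ?_ (Real.exp_pos _).le
            refine (exp_neg_le (mul_nonneg hl.le (hu0 j))).trans ?_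
            have := mul_le_mul (huM j) (huM j) (hu0 j) ((hu0 j).trans (huM j))
            nlinarith [sq_nonneg l]
    have h2 : ∑ j, T.wt j * ((1 - l * u j + l ^ 2 * M ^ 2) * Real.exp (l ^ 2 * D)) =
        (1 - l * ∑ j, T.wt j * u j + l ^ 2 * M ^ 2) * Real.exp (l ^ 2 * D) := by
      have : ∀ j, T.wt j * ((1 - l * u j + l ^ 2 * M ^ 2) * Real.exp (l ^ 2 * D)) =
          (T.wt j * (1 + l ^ 2 * M ^ 2) - l * (T.wt j * u j)) * Real.exp (l ^ 2 * D) := fun j => by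
        ring
      simp_rw [this]
      rw [← Finset.sum_mul, Finset.sum_sub_distrib, ← Finset.sum_mul, T.wt_sum, ← Finset.mul_sum]
      ring
    have h3 : T.gain B (N + 1) s ≤ ∑ j, T.wt j * u j := by
      simp only [gain, hu, mul_add, Finset.sum_add_distrib]
      linarith [T.ent_le hB s]
    rw [h2] at h1
    refine h1.trans ?_
    rw [show -(l * T.gain B (N + 1) s) + l ^ 2 * (D + M ^ 2) =
      (-(l * T.gain B (N + 1) s) + l ^ 2 * M ^ 2) + l ^ 2 * D by ring, Real.exp_add]
    refine mul_le_mul_of_nonneg_right ?_ (Real.exp_pos _).le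
    have h4 := Real.add_one_le_exp (-(l * T.gain B (N + 1) s) + l ^ 2 * M ^ 2)
    have h5 := mul_le_mul_of_nonneg_left h3 hl.le
    linarith

lemma op_iter_mul_le {l q : ℝ} {N : ℕ} (hq0 : 0 ≤ q) (hq : ∀ s, (T.op l)^[N] 1 s ≤ q) (m : ℕ) :
    ∀ s, (T.op l)^[N * m] 1 s ≤ q ^ m := by
  induction m with
  | zero => intro s; simp
  | succ m ih =>
    intro s
    rw [show N * (m + 1) = N + N * m by ring, Function.iterate_add_apply]
    refine (T.op_iter_le ih N s).trans ?_
    rw [pow_succ]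
    exact mul_le_mul_of_nonneg_left (hq s) (pow_nonneg hq0 m)

/-- Markov's inequality for the mass of the grid cell of a random point. -/
lemma markov_cell {l : ℝ} (hl : 0 < l) (θ : Measure ℂ) [IsProbabilityMeasure θ] {ε c : ℝ}
    (hc : 0 < c) :
    θ {z | ENNReal.ofReal c < θ (cidx ε ⁻¹' {cidx ε z})} ≤ ENNReal.ofReal (c ^ (-l)) * tau l θ ε := by
  classical
  set bad : Set (ℤ × ℤ) := {a | ENNReal.ofReal c < θ (cidx ε ⁻¹' {a})}
  have h1 : {z | ENNReal.ofReal c < θ (cidx ε ⁻¹' {cidx ε z})} = ⋃ a, if a ∈ bad then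
      cidx ε ⁻¹' {a} else ∅ := by
    ext z
    simp only [mem_iUnion]
    constructor
    · intro hz
      exact ⟨cidx ε z, by rw [if_pos (show cidx ε z ∈ bad from hz)]; rfl⟩
    · rintro ⟨a, ha⟩
      split_ifs at ha with h
      · rw [← show cidx ε z = a from ha] at h
        exact h
      · exact absurd ha (notMem_empty _)
  rw [h1]
  refine (measure_iUnion_le _).trans ?_
  unfold tau
  rw [← ENNReal.tsum_mul_left]
  refine ENNReal.tsum_le_tsum fun a => ?_
  split_ifs with h
  · rw [← ENNReal.ofReal_mul (by positivity), ← ofReal_measureReal]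
    refine ENNReal.ofReal_le_ofReal ?_
    have hlt : c < θ.real (cidx ε ⁻¹' {a}) := by
      have h' : ENNReal.ofReal c < θ (cidx ε ⁻¹' {a}) := h
      rwa [ENNReal.ofReal_lt_iff_lt_toReal hc.le (measure_ne_top _ _)] at h'
    set x := θ.real (cidx ε ⁻¹' {a})
    have hx : 0 < x := hc.trans hlt
    rw [Real.rpow_add hx, Real.rpow_one, Real.rpow_neg hc.le]
    have h2 : c ^ l ≤ x ^ l := Real.rpow_le_rpow hc.le hlt.le hl.le
    have h3 : 0 < c ^ l := Real.rpow_pos_of_pos hc _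
    rw [inv_mul_eq_div, le_div_iff₀ h3]
    exact mul_le_mul_of_nonneg_left h2 hx.le
  · simp

/-- Lower bound for the dimension of the root measures of a tree in terms of average entropy. -/
theorem le_mdim {B h t : ℝ} (hB : 0 ≤ B) {N : ℕ} (hN : 0 < N)
    (hgain : ∀ s, N * h ≤ T.gain B N s) (ht0 : 0 < t)
    (ht : t * Real.log (1 / T.r) < h - Real.log T.Cc) {s : 𝒮} (hs : T.lev s = 0) :
    ENNReal.ofReal t ≤ mdim (T.θ s) := by
  have hprob := T.prob s
  obtain ⟨D, hD0, hD⟩ := T.op_iter_le_exp hB N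
  have hN' : (0 : ℝ) < N := by exact_mod_cast hN
  set gap := N * (h - Real.log T.Cc - t * Real.log (1 / T.r)) with hgap
  have hgap0 : 0 < gap := mul_pos hN' (by linarith)
  obtain ⟨l, hl0, hl⟩ : ∃ l : ℝ, 0 < l ∧ l * D < gap := by
    refine ⟨gap / (D + 1), by positivity, ?_⟩
    rw [div_mul_eq_mul_div, div_lt_iff₀ (by positivity)]
    nlinarith
  set q := Real.exp (-(l * (N * h)) + l ^ 2 * D) with hq
  have hiter : ∀ s, (T.op l)^[N] 1 s ≤ q := fun s => by
    refine (hD l hl0 s).trans (Real.exp_le_exp.2 ?_)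
    have := mul_le_mul_of_nonneg_left (hgain s) hl0.le
    linarith
  set ρ := T.r ^ N with hρ
  have hρ0 : 0 < ρ := pow_pos T.r_pos N
  have hρ1 : ρ < 1 := pow_lt_one₀ T.r_pos.le T.r_lt hN.ne'
  have hCc0 : 0 < T.Cc := zero_lt_one.trans_le T.Cc_ge
  set Λ := (T.Cc ^ l) ^ N * q * (ρ ^ (-(t * l))) with hΛ
  have hΛ0 : 0 < Λ := by positivity
  have hΛ1 : Λ < 1 := by
    have : Λ = Real.exp (-(l * (gap - l * D))) := by
      rw [hΛ, hq, hρ, Real.rpow_def_of_pos hCc0, ← Real.exp_nat_mul, ← Real.exp_add,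
        Real.rpow_def_of_pos (pow_pos T.r_pos N), ← Real.exp_add, Real.log_pow]
      congr 1
      rw [hgap, Real.log_div one_ne_zero T.r_pos.ne', Real.log_one]
      ring
    rw [this, Real.exp_lt_one_iff]
    have := mul_pos hl0 (sub_pos.2 hl)
    linarith
  refine le_mdim_of_ae_cell (T.θ s) ht0 hρ0 hρ1 ?_
  have hsum : ∑' m : ℕ, T.θ s {z | ENNReal.ofReal ((ρ ^ m) ^ t) <
      T.θ s (cidx (ρ ^ m) ⁻¹' {cidx (ρ ^ m) z})} ≠ ∞ := by
    refine ne_top_of_le_ne_top (b := ∑' m : ℕ, ENNReal.ofReal (Λ ^ m)) ?_ ?_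
    · rw [← ENNReal.ofReal_tsum_of_nonneg (fun m => by positivity)
        (summable_geometric_of_lt_one hΛ0.le hΛ1)]
      exact ENNReal.ofReal_ne_top
    · refine ENNReal.tsum_le_tsum fun m => ?_
      refine (markov_cell hl0 (T.θ s) (by positivity)).trans ?_
      have h1 := T.tau_le hl0 (N * m) s
      rw [hs, zero_add, pow_mul] at h1
      refine (mul_le_mul_right h1 _).trans ?_
      rw [← ENNReal.ofReal_mul (by positivity)]
      refine ENNReal.ofReal_le_ofReal ?_
      have h2 := T.op_iter_mul_le (Real.exp_pos _).le hiter m s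
      calc ((ρ ^ m) ^ t) ^ (-l) * ((T.Cc ^ l) ^ (N * m) * (T.op l)^[N * m] 1 s)
          ≤ ((ρ ^ m) ^ t) ^ (-l) * ((T.Cc ^ l) ^ (N * m) * q ^ m) := by gcongr
        _ = Λ ^ m := by
          rw [hΛ, mul_pow, mul_pow, ← pow_mul (T.Cc ^ l), ← Real.rpow_mul (by positivity),
            ← Real.rpow_natCast ρ m, ← Real.rpow_natCast (ρ ^ (-(t * l))) m, ← Real.rpow_mul hρ0.le,
            ← Real.rpow_mul hρ0.le, show (m : ℝ) * (t * -l) = -(t * l) * m by ring]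
          ring
  filter_upwards [ae_eventually_notMem hsum] with z hz
  filter_upwards [hz] with m hm
  simpa using hm

end MTree
end SC

/-! ### Planar conformal systems and bounded distortion -/

namespace SC

/-- A holomorphic-type self-conformal system in `ℂ`: contractions `f i` of a bounded convex set `K`
with Hölder continuous, non-vanishing complex derivative, and a self-conformal measure on `K`. -/
structure Sys (ι : Type*) [Fintype ι] where
  p : ι → ℝ
  p_pos : ∀ i, 0 < p i
  p_sum : ∑ i, p i = 1
  K : Set ℂ
  conv : Convex ℝ K
  z0 : ℂ
  z0_mem : z0 ∈ K
  D : ℝ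
  D_pos : 0 < D
  diam : ∀ z ∈ K, ∀ z' ∈ K, ‖z - z'‖ ≤ D
  f : ι → ℂ → ℂ
  f' : ι → ℂ → ℂ
  meas : ∀ i, Measurable (f i)
  maps : ∀ i, MapsTo (f i) K K
  deriv : ∀ i, ∀ z ∈ K, HasDerivWithinAt (f i) (f' i z) K z
  C : ℝ
  C_nonneg : 0 ≤ C
  α : ℝ
  α_pos : 0 < α
  holder : ∀ i, ∀ z ∈ K, ∀ z' ∈ K, ‖f' i z - f' i z'‖ ≤ C * ‖z - z'‖ ^ α
  κ : ℝ
  κ_pos : 0 < κ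
  κ_le : ∀ i, ∀ z ∈ K, κ ≤ ‖f' i z‖
  ρ : ℝ
  ρ_pos : 0 < ρ
  ρ_lt : ρ < 1
  le_ρ : ∀ i, ∀ z ∈ K, ‖f' i z‖ ≤ ρ
  c0 : ℝ
  c0_pos : 0 < c0
  bilip : ∀ i, ∀ z ∈ K, ∀ z' ∈ K, c0 * ‖z - z'‖ ≤ ‖f i z - f i z'‖
  μ : Measure ℂ
  prob : IsProbabilityMeasure μ
  supp : μ Kᶜ = 0
  stat : μ = ∑ i, ENNReal.ofReal (p i) • μ.map (f i)

namespace Sys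
variable {ι : Type*} [Fintype ι] (Y : Sys ι)

/-- The composition of the maps along a word. -/
def F : List ι → ℂ → ℂ
  | [], z => z
  | i :: w, z => Y.f i (F w z)

/-- The derivative of `F w`, by the chain rule. -/
def dF : List ι → ℂ → ℂ
  | [], _ => 1
  | i :: w, z => Y.f' i (Y.F w z) * dF w z

/-- The derivative of `F w` at the base point. -/
def S (w : List ι) : ℂ := Y.dF w Y.z0

@[simp] lemma F_nil (z : ℂ) : Y.F [] z = z := rfl
@[simp] lemma F_cons (i : ι) (w : List ι) (z : ℂ) : Y.F (i :: w) z = Y.f i (Y.F w z) := rfl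
@[simp] lemma dF_nil (z : ℂ) : Y.dF [] z = 1 := rfl
@[simp] lemma dF_cons (i : ι) (w : List ι) (z : ℂ) :
    Y.dF (i :: w) z = Y.f' i (Y.F w z) * Y.dF w z := rfl

lemma F_append (w v : List ι) (z : ℂ) : Y.F (w ++ v) z = Y.F w (Y.F v z) := by
  induction w with
  | nil => rfl
  | cons i w ih => simp [ih]

lemma dF_append (w v : List ι) (z : ℂ) : Y.dF (w ++ v) z = Y.dF w (Y.F v z) * Y.dF v z := by
  induction w with
  | nil => simp
  | cons i w ih => simp [ih, F_append, mul_assoc]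

lemma S_append (w v : List ι) : Y.S (w ++ v) = Y.dF w (Y.F v Y.z0) * Y.S v := Y.dF_append w v _

lemma F_mem (w : List ι) {z : ℂ} (hz : z ∈ Y.K) : Y.F w z ∈ Y.K := by
  induction w with
  | nil => exact hz
  | cons i w ih => exact Y.maps i ih

lemma measurable_F (w : List ι) : Measurable (Y.F w) := by
  induction w with
  | nil => exact measurable_id
  | cons i w ih => exact (Y.meas i).comp ih

lemma hasDeriv_F (w : List ι) {z : ℂ} (hz : z ∈ Y.K) :
    HasDerivWithinAt (Y.F w) (Y.dF w z) Y.K z := by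
  induction w with
  | nil => exact hasDerivWithinAt_id z Y.K
  | cons i w ih =>
    exact (Y.deriv i _ (Y.F_mem w hz)).comp z ih (fun x hx => Y.F_mem w hx)

lemma dF_ne (w : List ι) {z : ℂ} (hz : z ∈ Y.K) : Y.dF w z ≠ 0 := by
  induction w with
  | nil => simp
  | cons i w ih =>
    refine mul_ne_zero ?_ ih
    exact norm_pos_iff.1 (Y.κ_pos.trans_le (Y.κ_le i _ (Y.F_mem w hz)))

lemma S_ne (w : List ι) : Y.S w ≠ 0 := Y.dF_ne w Y.z0_mem

lemma norm_dF_le (w : List ι) {z : ℂ} (hz : z ∈ Y.K) : ‖Y.dF w z‖ ≤ Y.ρ ^ w.length := by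
  induction w with
  | nil => simp
  | cons i w ih =>
    rw [dF_cons, norm_mul, List.length_cons, pow_succ']
    exact mul_le_mul (Y.le_ρ i _ (Y.F_mem w hz)) ih (norm_nonneg _) Y.ρ_pos.le

lemma F_lip (w : List ι) {z z' : ℂ} (hz : z ∈ Y.K) (hz' : z' ∈ Y.K) :
    ‖Y.F w z - Y.F w z'‖ ≤ Y.ρ ^ w.length * ‖z - z'‖ :=
  Y.conv.norm_image_sub_le_of_norm_hasDerivWithin_le (fun _ hx => Y.hasDeriv_F w hx)
    (fun _ hx => Y.norm_dF_le w hx) hz' hz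

/-- `ρ ^ α`, the contraction ratio of the Hölder moduli. -/
noncomputable def ρα : ℝ := Y.ρ ^ Y.α

lemma ρα_pos : 0 < Y.ρα := Real.rpow_pos_of_pos Y.ρ_pos _
lemma ρα_lt : Y.ρα < 1 := Real.rpow_lt_one Y.ρ_pos.le Y.ρ_lt Y.α_pos

lemma ρ_pow_rpow (n : ℕ) : (Y.ρ ^ n) ^ Y.α = Y.ρα ^ n := by
  unfold ρα
  rw [← Real.rpow_natCast, ← Real.rpow_natCast, ← Real.rpow_mul Y.ρ_pos.le,
    ← Real.rpow_mul Y.ρ_pos.le, mul_comm]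

lemma F_holder (w : List ι) {z z' : ℂ} (hz : z ∈ Y.K) (hz' : z' ∈ Y.K) :
    ‖Y.F w z - Y.F w z'‖ ^ Y.α ≤ Y.ρα ^ w.length * ‖z - z'‖ ^ Y.α := by
  rw [← Y.ρ_pow_rpow, ← Real.mul_rpow (pow_nonneg Y.ρ_pos.le _) (norm_nonneg _)]
  exact Real.rpow_le_rpow (norm_nonneg _) (Y.F_lip w hz hz') Y.α_pos.le

lemma geom_le (n : ℕ) : ∑ k ∈ Finset.range n, Y.ρα ^ k ≤ (1 - Y.ρα)⁻¹ :=
  geom_sum_lt Y.ρα_pos.le Y.ρα_lt n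
where
  geom_sum_lt {x : ℝ} (h0 : 0 ≤ x) (h1 : x < 1) (n : ℕ) :
      ∑ k ∈ Finset.range n, x ^ k ≤ (1 - x)⁻¹ := by
    rw [← tsum_geometric_of_lt_one h0 h1]
    exact (summable_geometric_of_lt_one h0 h1).sum_le_tsum _ (fun k _ => pow_nonneg h0 k)

lemma distortion_aux (w : List ι) {z z' : ℂ} (hz : z ∈ Y.K) (hz' : z' ∈ Y.K) :
    ‖Y.dF w z - Y.dF w z'‖ ≤ (Real.exp (Y.C / Y.κ * ‖z - z'‖ ^ Y.α *
      ∑ k ∈ Finset.range w.length, Y.ρα ^ k) - 1) * ‖Y.dF w z'‖ := by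
  induction w with
  | nil => simp
  | cons i w ih =>
    set t := ‖z - z'‖ ^ Y.α with ht
    have ht0 : 0 ≤ t := by positivity
    set b := Y.C / Y.κ * t * ∑ k ∈ Finset.range w.length, Y.ρα ^ k with hb
    set β := Y.C / Y.κ * t * Y.ρα ^ w.length with hβ
    have hβ0 : 0 ≤ β := mul_nonneg (mul_nonneg (div_nonneg Y.C_nonneg Y.κ_pos.le) ht0)
      (pow_nonneg Y.ρα_pos.le _)
    have hb0 : 0 ≤ b := mul_nonneg (mul_nonneg (div_nonneg Y.C_nonneg Y.κ_pos.le) ht0)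
      (Finset.sum_nonneg fun k _ => pow_nonneg Y.ρα_pos.le _)
    have hm := Y.F_mem w hz
    have hm' := Y.F_mem w hz'
    set A := Y.f' i (Y.F w z)
    set A' := Y.f' i (Y.F w z')
    have h1 : ‖A - A'‖ ≤ β * ‖A'‖ := by
      refine (Y.holder i _ hm _ hm').trans ?_
      have h2 := Y.F_holder w hz hz'
      have h3 := Y.κ_le i _ hm'
      calc Y.C * ‖Y.F w z - Y.F w z'‖ ^ Y.α ≤ Y.C * (Y.ρα ^ w.length * t) :=
            mul_le_mul_of_nonneg_left h2 Y.C_nonneg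
        _ = β * Y.κ := by rw [hβ]; have := Y.κ_pos.ne'; field_simp
        _ ≤ β * ‖A'‖ := mul_le_mul_of_nonneg_left h3 hβ0
    have h1' : ‖A - A'‖ ≤ (Real.exp β - 1) * ‖A'‖ :=
      h1.trans (mul_le_mul_of_nonneg_right (by linarith [Real.add_one_le_exp β]) (norm_nonneg _))
    have hA : ‖A‖ ≤ Real.exp β * ‖A'‖ := by
      have := norm_le_norm_add_norm_sub' A A'
      nlinarith
    rw [dF_cons, dF_cons, List.length_cons, Finset.sum_range_succ, mul_add, ← hb, ← hβ, Real.exp_add,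
      norm_mul]
    have h4 : A * Y.dF w z - A' * Y.dF w z' =
        A * (Y.dF w z - Y.dF w z') + (A - A') * Y.dF w z' := by ring
    rw [h4]
    have he : 1 ≤ Real.exp b := Real.one_le_exp hb0
    calc ‖A * (Y.dF w z - Y.dF w z') + (A - A') * Y.dF w z'‖
        ≤ ‖A‖ * ‖Y.dF w z - Y.dF w z'‖ + ‖A - A'‖ * ‖Y.dF w z'‖ := by
          refine (norm_add_le _ _).trans ?_
          rw [norm_mul, norm_mul]
      _ ≤ (Real.exp β * ‖A'‖) * ((Real.exp b - 1) * ‖Y.dF w z'‖) +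
            ((Real.exp β - 1) * ‖A'‖) * ‖Y.dF w z'‖ := by
          refine add_le_add (mul_le_mul hA ih (norm_nonneg _) (by positivity)) ?_
          exact mul_le_mul_of_nonneg_right h1' (norm_nonneg _)
      _ = _ := by ring

/-- The distortion constant. -/
noncomputable def Cd : ℝ :=
  Y.C / Y.κ * (1 - Y.ρα)⁻¹ * Real.exp (Y.C / Y.κ * (1 - Y.ρα)⁻¹ * Y.D ^ Y.α)

lemma Cd_nonneg : 0 ≤ Y.Cd := by
  unfold Cd
  have h1 : 0 ≤ (1 - Y.ρα)⁻¹ := inv_nonneg.2 (by linarith [Y.ρα_lt])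
  have h2 := div_nonneg Y.C_nonneg Y.κ_pos.le
  positivity

/-- Bounded distortion: the relative oscillation of the derivatives `dF w` is Hölder, uniformly
in the word `w`. -/
lemma distortion (w : List ι) {z z' : ℂ} (hz : z ∈ Y.K) (hz' : z' ∈ Y.K) :
    ‖Y.dF w z - Y.dF w z'‖ ≤ Y.Cd * ‖z - z'‖ ^ Y.α * ‖Y.dF w z'‖ := by
  refine (Y.distortion_aux w hz hz').trans (mul_le_mul_of_nonneg_right ?_ (norm_nonneg _))
  set t := ‖z - z'‖ ^ Y.α with ht
  have ht0 : 0 ≤ t := by positivity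
  have hCκ := div_nonneg Y.C_nonneg Y.κ_pos.le
  set A := Y.C / Y.κ * (1 - Y.ρα)⁻¹ with hA
  have hA0 : 0 ≤ A := mul_nonneg hCκ (inv_nonneg.2 (by linarith [Y.ρα_lt]))
  have h1 : Y.C / Y.κ * t * ∑ k ∈ Finset.range w.length, Y.ρα ^ k ≤ A * t := by
    calc _ ≤ Y.C / Y.κ * t * (1 - Y.ρα)⁻¹ :=
          mul_le_mul_of_nonneg_left (Y.geom_le _) (mul_nonneg hCκ ht0)
      _ = A * t := by rw [hA]; ring
  have h2 : Real.exp (A * t) - 1 ≤ A * t * Real.exp (A * t) := by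
    have h3 := Real.add_one_le_exp (-(A * t))
    have h4 : Real.exp (-(A * t)) * Real.exp (A * t) = 1 := by rw [← Real.exp_add]; simp
    nlinarith [Real.exp_pos (A * t)]
  have h5 : t ≤ Y.D ^ Y.α := Real.rpow_le_rpow (norm_nonneg _) (Y.diam z hz z' hz') Y.α_pos.le
  calc _ ≤ Real.exp (A * t) - 1 := by linarith [Real.exp_le_exp.2 h1]
    _ ≤ A * t * Real.exp (A * t) := h2
    _ ≤ A * t * Real.exp (A * Y.D ^ Y.α) :=
        mul_le_mul_of_nonneg_left (Real.exp_le_exp.2 (mul_le_mul_of_nonneg_left h5 hA0))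
          (mul_nonneg hA0 ht0)
    _ = Y.Cd * t := by unfold Cd; rw [← hA]; ring

/-- The ratio bound for derivatives at different points of `K`. -/
noncomputable def Cq : ℝ := 1 + Y.Cd * Y.D ^ Y.α

lemma Cq_ge : 1 ≤ Y.Cq := by
  have := mul_nonneg Y.Cd_nonneg (Real.rpow_nonneg Y.D_pos.le Y.α)
  unfold Cq; linarith

lemma Cq_pos : 0 < Y.Cq := zero_lt_one.trans_le Y.Cq_ge

lemma norm_dF_comp (w : List ι) {z z' : ℂ} (hz : z ∈ Y.K) (hz' : z' ∈ Y.K) :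
    ‖Y.dF w z‖ ≤ Y.Cq * ‖Y.dF w z'‖ := by
  have h1 := Y.distortion w hz hz'
  have h2 := norm_le_norm_add_norm_sub' (Y.dF w z) (Y.dF w z')
  have h5 : ‖z - z'‖ ^ Y.α ≤ Y.D ^ Y.α :=
    Real.rpow_le_rpow (norm_nonneg _) (Y.diam z hz z' hz') Y.α_pos.le
  have h6 := mul_le_mul_of_nonneg_left h5 Y.Cd_nonneg
  have h7 := mul_le_mul_of_nonneg_right h6 (norm_nonneg (Y.dF w z'))
  unfold Cq
  nlinarith

lemma norm_dF_le_S (w : List ι) {z : ℂ} (hz : z ∈ Y.K) : ‖Y.dF w z‖ ≤ Y.Cq * ‖Y.S w‖ :=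
  Y.norm_dF_comp w hz Y.z0_mem

lemma S_le_norm_dF (w : List ι) {z : ℂ} (hz : z ∈ Y.K) : ‖Y.S w‖ ≤ Y.Cq * ‖Y.dF w z‖ :=
  Y.norm_dF_comp w Y.z0_mem hz

lemma S_pos (w : List ι) : 0 < ‖Y.S w‖ := norm_pos_iff.2 (Y.S_ne w)

lemma F_upper (w : List ι) {z z' : ℂ} (hz : z ∈ Y.K) (hz' : z' ∈ Y.K) :
    ‖Y.F w z - Y.F w z'‖ ≤ Y.Cq * ‖Y.S w‖ * ‖z - z'‖ :=
  Y.conv.norm_image_sub_le_of_norm_hasDerivWithin_le (fun _ hx => Y.hasDeriv_F w hx)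
    (fun _ hx => Y.norm_dF_le_S w hx) hz' hz

/-- Near a point `z1`, the map `F w` is linear up to a relative error that is uniform in `w`. -/
lemma F_linear (w : List ι) {z1 z z' : ℂ} {δ : ℝ} (hz1 : z1 ∈ Y.K) (hz : z ∈ Y.K)
    (hz' : z' ∈ Y.K) (h : ‖z - z1‖ ≤ δ) (h' : ‖z' - z1‖ ≤ δ) :
    ‖Y.F w z - Y.F w z' - Y.dF w z1 * (z - z')‖ ≤
      Y.Cd * δ ^ Y.α * ‖Y.dF w z1‖ * ‖z - z'‖ := by
  have hconv : Convex ℝ (Y.K ∩ closedBall z1 δ) := Y.conv.inter (convex_closedBall _ _)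
  have hd : ∀ x ∈ Y.K ∩ closedBall z1 δ, HasDerivWithinAt (fun x => Y.F w x - Y.dF w z1 * x)
      (Y.dF w x - Y.dF w z1) (Y.K ∩ closedBall z1 δ) x := by
    intro x hx
    have h1 := (Y.hasDeriv_F w hx.1).mono (inter_subset_left (t := closedBall z1 δ))
    have h2 := ((hasDerivWithinAt_id x (Y.K ∩ closedBall z1 δ)).const_mul (Y.dF w z1))
    have h3 := h1.sub h2
    rw [mul_one] at h3
    exact h3
  have hb : ∀ x ∈ Y.K ∩ closedBall z1 δ, ‖Y.dF w x - Y.dF w z1‖ ≤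
      Y.Cd * δ ^ Y.α * ‖Y.dF w z1‖ := by
    intro x hx
    refine (Y.distortion w hx.1 hz1).trans (mul_le_mul_of_nonneg_right ?_ (norm_nonneg _))
    refine mul_le_mul_of_nonneg_left ?_ Y.Cd_nonneg
    exact Real.rpow_le_rpow (norm_nonneg _) (by simpa [dist_eq_norm] using hx.2) Y.α_pos.le
  have := hconv.norm_image_sub_le_of_norm_hasDerivWithin_le hd hb
    (x := z') (y := z) ⟨hz', by simpa [dist_eq_norm] using h'⟩ ⟨hz, by simpa [dist_eq_norm] using h⟩
  refine le_trans (le_of_eq ?_) this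
  congr 1; ring

/-- Single-step lower bound: the derivative controls the expansion up to an error that becomes
negligible at small distances. -/
lemma exists_lower_step : ∃ a : ℝ, 0 ≤ a ∧ ∀ i, ∀ z ∈ Y.K, ∀ z' ∈ Y.K,
    ‖Y.f' i z‖ * ‖z - z'‖ * Real.exp (-(a * ‖z - z'‖ ^ Y.α)) ≤ ‖Y.f i z - Y.f i z'‖ := by
  set A := Y.Cd with hA
  have hA0 : 0 ≤ A := Y.Cd_nonneg
  set L := max 0 (Real.log (Y.ρ / Y.c0)) with hL
  refine ⟨2 * A + 4 * A * L, by positivity, fun i z hz z' hz' => ?_⟩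
  set t := ‖z - z'‖ ^ Y.α with ht
  have ht0 : 0 ≤ t := by positivity
  have hn := norm_nonneg (z - z')
  rcases le_or_gt (A * t) (1 / 4) with h | h
  · have h1 := Y.F_linear [i] hz hz hz' (δ := ‖z - z'‖) (by simp) (by rw [norm_sub_rev])
    simp only [F_cons, F_nil, dF_cons, dF_nil, mul_one] at h1
    rw [← ht, ← hA] at h1
    have h2 : ‖Y.f' i z * (z - z')‖ ≤ ‖Y.f i z - Y.f i z'‖ + A * t * ‖Y.f' i z‖ * ‖z - z'‖ := by
      have := norm_le_norm_add_norm_sub (Y.f i z - Y.f i z') (Y.f' i z * (z - z'))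
      linarith
    rw [norm_mul] at h2
    have h3 : Real.exp (-((2 * A + 4 * A * L) * t)) ≤ 1 - A * t := by
      have h4 : Real.exp (-((2 * A + 4 * A * L) * t)) ≤ Real.exp (-(2 * (A * t))) := by
        refine Real.exp_le_exp.2 ?_
        have : 0 ≤ A * L * t := by positivity
        nlinarith
      refine h4.trans ((MTree.exp_neg_le (by positivity)).trans ?_)
      have : 0 ≤ A * t := by positivity
      nlinarith
    have h5 : 0 ≤ ‖Y.f' i z‖ * ‖z - z'‖ := by positivity
    have h6 := mul_le_mul_of_nonneg_left h3 h5
    nlinarith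
  · have h1 := Y.bilip i z hz z' hz'
    have h2 := Y.le_ρ i z hz
    have h3 : Y.ρ * Real.exp (-((2 * A + 4 * A * L) * t)) ≤ Y.c0 := by
      have h4 : Real.exp (-((2 * A + 4 * A * L) * t)) ≤ Real.exp (-L) := by
        refine Real.exp_le_exp.2 ?_
        have hL0 : 0 ≤ L := le_max_left _ _
        have : 0 ≤ A * t := by positivity
        nlinarith
      have h5 : Real.exp (-L) ≤ Y.c0 / Y.ρ := by
        rw [Real.exp_neg]
        have h6 : Y.ρ / Y.c0 ≤ Real.exp L := by
          rw [← Real.exp_log (div_pos Y.ρ_pos Y.c0_pos)]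
          exact Real.exp_le_exp.2 (le_max_right _ _)
        rw [← inv_div]
        exact inv_anti₀ (div_pos Y.ρ_pos Y.c0_pos) h6
      have := mul_le_mul_of_nonneg_left (h4.trans h5) Y.ρ_pos.le
      rwa [mul_div_cancel₀ _ Y.ρ_pos.ne'] at this
    refine le_trans ?_ h1
    have h6 := Real.exp_pos (-((2 * A + 4 * A * L) * t))
    calc _ = (‖Y.f' i z‖ * Real.exp (-((2 * A + 4 * A * L) * t))) * ‖z - z'‖ := by ring
      _ ≤ (Y.ρ * Real.exp (-((2 * A + 4 * A * L) * t))) * ‖z - z'‖ := by gcongr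
      _ ≤ _ := by gcongr

/-- The maps `F w` are bi-Lipschitz from below relative to `|S w|`, uniformly in `w`. Injectivity
at large distances comes from the field `bilip` of the system. -/
lemma exists_F_lower : ∃ c1 : ℝ, 0 < c1 ∧ ∀ w : List ι, ∀ z ∈ Y.K, ∀ z' ∈ Y.K,
    c1 * ‖Y.S w‖ * ‖z - z'‖ ≤ ‖Y.F w z - Y.F w z'‖ := by
  obtain ⟨a, ha, hstep⟩ := Y.exists_lower_step
  have key : ∀ w : List ι, ∀ z ∈ Y.K, ∀ z' ∈ Y.K,
      ‖Y.dF w z‖ * ‖z - z'‖ * Real.exp (-(a * Y.D ^ Y.α *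
        ∑ k ∈ Finset.range w.length, Y.ρα ^ k)) ≤ ‖Y.F w z - Y.F w z'‖ := by
    intro w z hz z' hz'
    induction w with
    | nil => simp
    | cons i w ih =>
      refine le_trans ?_ (hstep i _ (Y.F_mem w hz) _ (Y.F_mem w hz'))
      have h1 := Y.F_holder w hz hz'
      have h5 : ‖z - z'‖ ^ Y.α ≤ Y.D ^ Y.α :=
        Real.rpow_le_rpow (norm_nonneg _) (Y.diam z hz z' hz') Y.α_pos.le
      have h2 : ‖Y.F w z - Y.F w z'‖ ^ Y.α ≤ Y.ρα ^ w.length * Y.D ^ Y.α :=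
        h1.trans (mul_le_mul_of_nonneg_left h5 (pow_nonneg Y.ρα_pos.le _))
      rw [dF_cons, norm_mul, List.length_cons, Finset.sum_range_succ, mul_add, neg_add, Real.exp_add]
      have h3 : Real.exp (-(a * Y.D ^ Y.α * Y.ρα ^ w.length)) ≤
          Real.exp (-(a * ‖Y.F w z - Y.F w z'‖ ^ Y.α)) := by
        refine Real.exp_le_exp.2 ?_
        have := mul_le_mul_of_nonneg_left h2 ha
        linarith
      calc _ = ‖Y.f' i (Y.F w z)‖ * (‖Y.dF w z‖ * ‖z - z'‖ * Real.exp (-(a * Y.D ^ Y.α *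
            ∑ k ∈ Finset.range w.length, Y.ρα ^ k))) *
              Real.exp (-(a * Y.D ^ Y.α * Y.ρα ^ w.length)) := by ring
        _ ≤ _ := by gcongr
  refine ⟨Real.exp (-(a * Y.D ^ Y.α * (1 - Y.ρα)⁻¹)) / Y.Cq, div_pos (Real.exp_pos _) Y.Cq_pos,
    fun w z hz z' hz' => le_trans ?_ (key w z hz z' hz')⟩
  have h1 := Y.S_le_norm_dF w hz
  have h2 : ‖Y.S w‖ / Y.Cq ≤ ‖Y.dF w z‖ := by
    rw [div_le_iff₀ Y.Cq_pos]; linarith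
  have hD : 0 ≤ Y.D ^ Y.α := Real.rpow_nonneg Y.D_pos.le _
  have h3 : Real.exp (-(a * Y.D ^ Y.α * (1 - Y.ρα)⁻¹)) ≤ Real.exp (-(a * Y.D ^ Y.α *
      ∑ k ∈ Finset.range w.length, Y.ρα ^ k)) :=
    Real.exp_le_exp.2 (neg_le_neg (mul_le_mul_of_nonneg_left (Y.geom_le _) (mul_nonneg ha hD)))
  calc _ = ‖Y.S w‖ / Y.Cq * ‖z - z'‖ * Real.exp (-(a * Y.D ^ Y.α * (1 - Y.ρα)⁻¹)) := by ring
    _ ≤ _ := by gcongr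

end Sys
end SC

namespace SC

/-! ### Averaging operators on the tree of words -/

section Tree
variable {ι ι' : Type*} [Fintype ι] [Fintype ι']

/-- One step of the averaging operator: the mean of `φ` over the children of a word. -/
def av (p : ι → ℝ) (φ : List ι → ℝ) (w : List ι) : ℝ := ∑ i, p i * φ (w ++ [i])

/-- The `n`-step averaging operator. -/
def avs (p : ι → ℝ) : ℕ → (List ι → ℝ) → List ι → ℝ
  | 0, φ => φ
  | n + 1, φ => av p (avs p n φ)

/-- The sum of the first `M` generation averages, `∑_{n < M} A^n φ`. -/
def Sm (p : ι → ℝ) : ℕ → (List ι → ℝ) → List ι → ℝ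
  | 0, _, _ => 0
  | M + 1, φ, w => φ w + ∑ i, p i * Sm p M φ (w ++ [i])

variable {p : ι → ℝ} {p' : ι' → ℝ}

lemma av_mono (hp : ∀ i, 0 ≤ p i) {φ ψ : List ι → ℝ} (h : ∀ w, φ w ≤ ψ w) (w : List ι) :
    av p φ w ≤ av p ψ w :=
  Finset.sum_le_sum fun i _ => mul_le_mul_of_nonneg_left (h _) (hp i)

lemma avs_mono (hp : ∀ i, 0 ≤ p i) {φ ψ : List ι → ℝ} (h : ∀ w, φ w ≤ ψ w) (n : ℕ) (w : List ι) :
    avs p n φ w ≤ avs p n ψ w := by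
  induction n generalizing w with
  | zero => exact h w
  | succ n ih => exact av_mono hp ih w

lemma av_add (φ ψ : List ι → ℝ) (w : List ι) :
    av p (fun w => φ w + ψ w) w = av p φ w + av p ψ w := by
  simp [av, mul_add, Finset.sum_add_distrib]

lemma avs_add (φ ψ : List ι → ℝ) (n : ℕ) (w : List ι) :
    avs p n (fun w => φ w + ψ w) w = avs p n φ w + avs p n ψ w := by
  induction n generalizing w with
  | zero => rfl
  | succ n ih =>
    have : avs p n (fun w => φ w + ψ w) = fun w => avs p n φ w + avs p n ψ w := funext ih
    simp only [avs, this, av_add]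

lemma avs_const_mul (c : ℝ) (φ : List ι → ℝ) (n : ℕ) (w : List ι) :
    avs p n (fun w => c * φ w) w = c * avs p n φ w := by
  induction n generalizing w with
  | zero => rfl
  | succ n ih =>
    have : avs p n (fun w => c * φ w) = fun w => c * avs p n φ w := funext ih
    simp only [avs, this, av, Finset.mul_sum]
    exact Finset.sum_congr rfl fun i _ => by ring

lemma avs_sub (φ ψ : List ι → ℝ) (n : ℕ) (w : List ι) :
    avs p n (fun w => φ w - ψ w) w = avs p n φ w - avs p n ψ w := by
  have h : (fun w => φ w - ψ w) = fun w => φ w + (fun w => (-1) * ψ w) w := by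
    funext w; ring
  rw [h, avs_add, avs_const_mul]; ring

lemma avs_const (hp1 : ∑ i, p i = 1) (c : ℝ) (n : ℕ) (w : List ι) :
    avs p n (fun _ => c) w = c := by
  induction n generalizing w with
  | zero => rfl
  | succ n ih =>
    have : avs p n (fun _ => c) = fun _ => c := funext ih
    simp [avs, this, av, ← Finset.sum_mul, hp1]

lemma avs_succ' (n : ℕ) (φ : List ι → ℝ) : avs p (n + 1) φ = avs p n (av p φ) := by
  induction n with
  | zero => rfl
  | succ n ih => rw [avs, ih]; rfl

lemma avs_abs_le (hp : ∀ i, 0 ≤ p i) (φ : List ι → ℝ) (n : ℕ) (w : List ι) :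
    |avs p n φ w| ≤ avs p n (fun w => |φ w|) w := by
  rw [abs_le]
  constructor
  · have := avs_mono hp (φ := fun w => (-1) * φ w) (ψ := fun w => |φ w|)
      (fun w => by simpa using neg_le_abs (φ w)) n w
    rw [avs_const_mul] at this; linarith
  · exact avs_mono hp (fun w => le_abs_self _) n w

lemma avs_nonneg (hp : ∀ i, 0 ≤ p i) {φ : List ι → ℝ} (h : ∀ w, 0 ≤ φ w) (n : ℕ) (w : List ι) :
    0 ≤ avs p n φ w := by
  induction n generalizing w with
  | zero => exact h w
  | succ n ih => exact Finset.sum_nonneg fun i _ => mul_nonneg (hp i) (ih _)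

lemma avs_harm {φ : List ι → ℝ} (h : ∀ w, av p φ w = φ w) (n : ℕ) (w : List ι) :
    avs p n φ w = φ w := by
  induction n generalizing w with
  | zero => rfl
  | succ n ih =>
    have : avs p n φ = φ := funext ih
    rw [avs, this, h]

/-- For a bounded harmonic function the squared increments have summable averages. -/
lemma harm_step (hp : ∀ i, 0 < p i) (hp1 : ∑ i, p i = 1) {φ : List ι → ℝ} {b : ℝ}
    (hb : ∀ w, |φ w| ≤ b) (h : ∀ w, av p φ w = φ w) (i : ι) :
    Tendsto (fun n => avs p n (fun x => |φ (x ++ [i]) - φ x|) []) atTop (𝓝 0) := by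
  have hp0 : ∀ i, 0 ≤ p i := fun i => (hp i).le
  have hb0 : 0 ≤ b := (abs_nonneg _).trans (hb [])
  set d : List ι → ℝ := fun x => ∑ j, p j * (φ (x ++ [j]) - φ x) ^ 2 with hd
  have hd0 : ∀ x, 0 ≤ d x := fun x => Finset.sum_nonneg fun j _ => mul_nonneg (hp0 j) (sq_nonneg _)
  have hdx : ∀ x, d x = av p (fun y => φ y ^ 2) x - φ x ^ 2 := by
    intro x
    have h1 : d x = ∑ j, p j * φ (x ++ [j]) ^ 2 - 2 * φ x * ∑ j, p j * φ (x ++ [j]) +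
        φ x ^ 2 * ∑ j, p j := by
      rw [hd, Finset.mul_sum, Finset.mul_sum, ← Finset.sum_sub_distrib, ← Finset.sum_add_distrib]
      exact Finset.sum_congr rfl fun j _ => by ring
    have h2 : ∑ j, p j * φ (x ++ [j]) = φ x := h x
    rw [h1, h2, hp1]; unfold av; ring
  have hsum : ∀ n, ∑ k ∈ Finset.range n, avs p k d [] =
      avs p n (fun y => φ y ^ 2) [] - φ [] ^ 2 := by
    intro n
    induction n with
    | zero => simp [avs]
    | succ n ih =>
      rw [Finset.sum_range_succ, ih, avs_succ']
      have : d = fun x => av p (fun y => φ y ^ 2) x - (fun y => φ y ^ 2) x := funext hdx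
      rw [this, avs_sub]; ring
  have hsq : ∀ w, φ w ^ 2 ≤ b ^ 2 := fun w => sq_le_sq' (by linarith [(abs_le.1 (hb w)).1])
    (abs_le.1 (hb w)).2
  have hle : ∀ n, ∑ k ∈ Finset.range n, avs p k d [] ≤ b ^ 2 := by
    intro n
    rw [hsum]
    have h1 := avs_mono hp0 hsq n ([] : List ι)
    rw [avs_const hp1] at h1
    nlinarith [sq_nonneg (φ [])]
  have hsm : Summable (fun k => avs p k d []) :=
    summable_of_sum_range_le (fun k => avs_nonneg hp0 hd0 k []) hle
  have ht := hsm.tendsto_atTop_zero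
  -- `|t| ≤ ε + t² / (4ε)`
  rw [Metric.tendsto_atTop]
  intro ε hε
  have hc : 0 < ε / 2 * (4 * (ε / 2) * p i) := by have := hp i; positivity
  obtain ⟨N, hN⟩ := (Metric.tendsto_atTop.1 ht) _ hc
  refine ⟨N, fun n hn => ?_⟩
  have h1 := hN n hn
  rw [Real.dist_eq, sub_zero] at h1 ⊢
  have h1' := (abs_lt.1 h1).2
  rw [abs_of_nonneg (avs_nonneg hp0 (fun _ => abs_nonneg _) _ _)]
  have hpi := hp i
  have h2 : ∀ x, |φ (x ++ [i]) - φ x| ≤ ε / 2 + (4 * (ε / 2) * p i)⁻¹ * d x := by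
    intro x
    have h3 : p i * (φ (x ++ [i]) - φ x) ^ 2 ≤ d x :=
      Finset.single_le_sum (f := fun j => p j * (φ (x ++ [j]) - φ x) ^ 2)
        (fun j _ => mul_nonneg (hp0 j) (sq_nonneg _)) (Finset.mem_univ i)
    set t := |φ (x ++ [i]) - φ x| with ht
    have h4 : (φ (x ++ [i]) - φ x) ^ 2 = t ^ 2 := (sq_abs _).symm
    rw [h4] at h3
    have h5 : t ≤ ε / 2 + (4 * (ε / 2) * p i)⁻¹ * (p i * t ^ 2) := by
      have : (4 * (ε / 2) * p i)⁻¹ * (p i * t ^ 2) = t ^ 2 / (2 * ε) := by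
        field_simp
        norm_num
      rw [this, ← sub_nonneg]
      have : ε / 2 + t ^ 2 / (2 * ε) - t = (t - ε) ^ 2 / (2 * ε) := by field_simp; ring
      rw [this]; positivity
    exact h5.trans (by gcongr)
  have h3 := avs_mono hp0 h2 n ([] : List ι)
  rw [avs_add (fun _ => ε / 2) (fun x => (4 * (ε / 2) * p i)⁻¹ * d x), avs_const hp1,
    avs_const_mul] at h3
  have hpos : 0 < 4 * (ε / 2) * p i := by positivity
  have h4 : (4 * (ε / 2) * p i)⁻¹ * avs p n d [] < ε / 2 := by
    rw [inv_mul_lt_iff₀ hpos]; linarith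
  linarith

/-- Along a fixed continuation `X`, a bounded harmonic function is asymptotically constant in
mean. -/
lemma harm_word (hp : ∀ i, 0 < p i) (hp1 : ∑ i, p i = 1) {φ : List ι → ℝ} {b : ℝ}
    (hb : ∀ w, |φ w| ≤ b) (h : ∀ w, av p φ w = φ w) (X : List ι) :
    Tendsto (fun n => avs p n (fun x => |φ (x ++ X) - φ x|) []) atTop (𝓝 0) := by
  have hp0 : ∀ i, 0 ≤ p i := fun i => (hp i).le
  induction X with
  | nil =>
    simp only [List.append_nil, sub_self, abs_zero]
    simp only [avs_const hp1]
    exact tendsto_const_nhds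
  | cons i X ih =>
    set ψ : List ι → ℝ := fun x => |φ (x ++ X) - φ x| with hψ
    have h1 := ((ih.comp (tendsto_add_atTop_nat 1)).const_mul (p i)⁻¹).add
      (harm_step hp hp1 hb h i)
    rw [mul_zero, add_zero] at h1
    refine squeeze_zero (fun n => avs_nonneg hp0 (fun _ => abs_nonneg _) _ _) (fun n => ?_) h1
    simp only [Function.comp]
    rw [avs_succ', ← avs_const_mul, ← avs_add]
    refine avs_mono hp0 (fun x => ?_) n []
    have h2 : p i * ψ (x ++ [i]) ≤ av p ψ x :=
      Finset.single_le_sum (f := fun j => p j * ψ (x ++ [j]))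
        (fun j _ => mul_nonneg (hp0 j) (abs_nonneg _)) (Finset.mem_univ i)
    have h3 : ψ (x ++ [i]) ≤ (p i)⁻¹ * av p ψ x := by
      rw [le_inv_mul_iff₀ (hp i)]; exact h2
    have h4 : x ++ i :: X = (x ++ [i]) ++ X := by simp
    rw [h4]
    calc _ ≤ |φ (x ++ [i] ++ X) - φ (x ++ [i])| + |φ (x ++ [i]) - φ x| := abs_sub_le _ _ _
      _ ≤ _ := by gcongr

/-! ### The partial sums -/

lemma Sm_nonneg (hp : ∀ i, 0 ≤ p i) {φ : List ι → ℝ} (h : ∀ w, 0 ≤ φ w) (M : ℕ) (w : List ι) :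
    0 ≤ Sm p M φ w := by
  induction M generalizing w with
  | zero => exact le_rfl
  | succ M ih => exact add_nonneg (h w) (Finset.sum_nonneg fun i _ => mul_nonneg (hp i) (ih _))

lemma Sm_mono (hp : ∀ i, 0 ≤ p i) {φ ψ : List ι → ℝ} (h : ∀ w, φ w ≤ ψ w) (M : ℕ) (w : List ι) :
    Sm p M φ w ≤ Sm p M ψ w := by
  induction M generalizing w with
  | zero => exact le_rfl
  | succ M ih =>
    exact add_le_add (h w)
      (Finset.sum_le_sum fun i _ => mul_le_mul_of_nonneg_left (ih _) (hp i))

lemma Sm_rebase (φ : List ι → ℝ) (M : ℕ) (w u : List ι) :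
    Sm p M (fun X => φ (w ++ X)) u = Sm p M φ (w ++ u) := by
  induction M generalizing u with
  | zero => rfl
  | succ M ih => simp only [Sm, ih, List.append_assoc]

lemma Sm_add (φ ψ : List ι → ℝ) (M : ℕ) (w : List ι) :
    Sm p M (fun w => φ w + ψ w) w = Sm p M φ w + Sm p M ψ w := by
  induction M generalizing w with
  | zero => simp [Sm]
  | succ M ih => simp only [Sm, ih, mul_add, Finset.sum_add_distrib]; ring

lemma Sm_const_mul (c : ℝ) (φ : List ι → ℝ) (M : ℕ) (w : List ι) :
    Sm p M (fun w => c * φ w) w = c * Sm p M φ w := by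
  induction M generalizing w with
  | zero => simp [Sm]
  | succ M ih =>
    simp only [Sm, ih, mul_add, Finset.mul_sum]
    congr 1
    exact Finset.sum_congr rfl fun i _ => by ring

lemma Sm_sub (φ ψ : List ι → ℝ) (M : ℕ) (w : List ι) :
    Sm p M (fun w => φ w - ψ w) w = Sm p M φ w - Sm p M ψ w := by
  have h : (fun w => φ w - ψ w) = fun w => φ w + (fun w => (-1) * ψ w) w := by
    funext w; ring
  rw [h, Sm_add, Sm_const_mul]; ring

lemma Sm_sum {σ : Type*} (s : Finset σ) (φ : σ → List ι → ℝ) (M : ℕ) (w : List ι) :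
    Sm p M (fun w => ∑ a ∈ s, φ a w) w = ∑ a ∈ s, Sm p M (φ a) w := by
  classical
  induction s using Finset.induction_on with
  | empty =>
    simp only [Finset.sum_empty]
    have := Sm_const_mul (p := p) 0 (fun _ => 0) M w
    simpa using this
  | insert a s ha ih =>
    simp only [Finset.sum_insert ha]
    rw [Sm_add, ih]

lemma Sm_const_le (hp : ∀ i, 0 ≤ p i) (hp1 : ∑ i, p i = 1) {φ : List ι → ℝ} {c : ℝ}
    (h : ∀ w, φ w ≤ c) (M : ℕ) (w : List ι) : Sm p M φ w ≤ M * c := by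
  induction M generalizing w with
  | zero => simp [Sm]
  | succ M ih =>
    have h1 : ∑ i, p i * Sm p M φ (w ++ [i]) ≤ ∑ i, p i * (M * c) :=
      Finset.sum_le_sum fun i _ => mul_le_mul_of_nonneg_left (ih _) (hp i)
    rw [← Finset.sum_mul, hp1] at h1
    have := h w
    simp only [Sm]; push_cast; linarith

lemma Sm_abs_le (hp : ∀ i, 0 ≤ p i) (φ : List ι → ℝ) (M : ℕ) (w : List ι) :
    |Sm p M φ w| ≤ Sm p M (fun w => |φ w|) w := by
  rw [abs_le]
  constructor
  · have := Sm_mono hp (φ := fun w => (-1) * φ w) (ψ := fun w => |φ w|)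
      (fun w => by simpa using neg_le_abs (φ w)) M w
    rw [Sm_const_mul] at this; linarith
  · exact Sm_mono hp (fun w => le_abs_self _) M w

/-- Telescoping: partial sums are harmonic up to boundary terms. -/
lemma Sm_harm (φ : List ι → ℝ) (M : ℕ) (w : List ι) :
    av p (Sm p M φ) w = Sm p M φ w - φ w + avs p M φ w := by
  induction M generalizing w with
  | zero => simp [Sm, av, avs]
  | succ M ih =>
    have h1 : av p (Sm p (M + 1) φ) w =
        ∑ i, p i * (φ (w ++ [i]) + av p (Sm p M φ) (w ++ [i])) := rfl
    rw [h1]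
    simp only [ih]
    simp only [Sm, avs, av]
    have : ∀ i, p i * (φ (w ++ [i]) + (Sm p M φ (w ++ [i]) - φ (w ++ [i]) + avs p M φ (w ++ [i])))
        = p i * Sm p M φ (w ++ [i]) + p i * avs p M φ (w ++ [i]) := fun i => by ring
    simp only [this, Finset.sum_add_distrib]
    ring

/-- Only boundedly many generations contribute to the partial sums of a function living in a
band. -/
lemma Sm_band_aux (hp : ∀ i, 0 ≤ p i) (hp1 : ∑ i, p i = 1) {φ : List ι → ℝ} {B : ℝ} (hB : 0 ≤ B)
    (h : ∀ w, φ w ≤ B) (M k : ℕ) (w : List ι) (hk : ∀ X : List ι, k ≤ X.length → φ (w ++ X) = 0) :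
    Sm p M φ w ≤ k * B := by
  induction M generalizing w k with
  | zero => simp only [Sm]; positivity
  | succ M ih =>
    cases k with
    | zero =>
      have h1 : ∀ i, Sm p M φ (w ++ [i]) ≤ 0 := fun i => by
        have := ih 0 (w ++ [i]) (fun X _ => by rw [List.append_assoc]; exact hk _ (Nat.zero_le _))
        simpa using this
      have h2 := hk [] (Nat.zero_le _)
      rw [List.append_nil] at h2
      simp only [Sm, h2, Nat.cast_zero, zero_mul, zero_add]
      exact Finset.sum_nonpos fun i _ => mul_nonpos_of_nonneg_of_nonpos (hp i) (h1 i)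
    | succ k =>
      have h1 : ∀ i, Sm p M φ (w ++ [i]) ≤ k * B := fun i =>
        ih k (w ++ [i]) (fun X hX => by
          rw [List.append_assoc]; exact hk _ (by simpa using hX))
      have h2 : ∑ i, p i * Sm p M φ (w ++ [i]) ≤ ∑ i, p i * (k * B) :=
        Finset.sum_le_sum fun i _ => mul_le_mul_of_nonneg_left (h1 i) (hp i)
      rw [← Finset.sum_mul, hp1] at h2
      have := h w
      simp only [Sm]; push_cast; linarith

/-- A bounded function that vanishes at every extension by at least `k` letters of a word where it
does not vanish has generation sums bounded independently of the number of generations. -/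
lemma Sm_band (hp : ∀ i, 0 ≤ p i) (hp1 : ∑ i, p i = 1) {φ : List ι → ℝ} {B : ℝ} (hB : 0 ≤ B)
    (h : ∀ w, φ w ≤ B) (k : ℕ)
    (hk : ∀ w X : List ι, k ≤ X.length → φ w ≠ 0 → φ (w ++ X) = 0) (M : ℕ) (w : List ι) :
    Sm p M φ w ≤ k * B := by
  induction M generalizing w with
  | zero => simp only [Sm]; positivity
  | succ M ih =>
    by_cases hw : φ w = 0
    · have h2 : ∑ i, p i * Sm p M φ (w ++ [i]) ≤ ∑ i, p i * (k * B) :=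
        Finset.sum_le_sum fun i _ => mul_le_mul_of_nonneg_left (ih _) (hp i)
      rw [← Finset.sum_mul, hp1] at h2
      simp only [Sm, hw]; linarith
    · exact Sm_band_aux hp hp1 hB h (M + 1) k w (fun X hX => hk w X hX hw)

/-- The double partial sums over a pair of trees. -/
def Gs (p : ι → ℝ) (p' : ι' → ℝ) (M : ℕ) (φ : List ι → List ι' → ℝ) (w : List ι) (v : List ι') : ℝ :=
  Sm p M (fun W => Sm p' M (fun V => φ W V) v) w

lemma Sm_comm (M M' : ℕ) (φ : List ι → List ι' → ℝ) (w : List ι) (v : List ι') :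
    Sm p M (fun W => Sm p' M' (fun V => φ W V) v) w =
      Sm p' M' (fun V => Sm p M (fun W => φ W V) w) v := by
  induction M generalizing w with
  | zero =>
    simp only [Sm]
    have := Sm_const_mul (p := p') 0 (fun _ => 0) M' v
    simpa using this.symm
  | succ M ih =>
    simp only [Sm]
    rw [Sm_add, Sm_sum]
    congr 1
    refine Finset.sum_congr rfl fun i _ => ?_
    rw [Sm_const_mul, ih]

/-- Comparison of double sums from different starting words. -/
lemma Gs_compare (hp : ∀ i, 0 ≤ p i) (hp1 : ∑ i, p i = 1) (hp' : ∀ i, 0 ≤ p' i)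
    (hp1' : ∑ i, p' i = 1) {φ ψ : List ι → List ι' → ℝ} {ε : ℝ} (hε : 0 ≤ ε) (k : ℕ)
    (hφ : ∀ W, ∀ V Y : List ι', k ≤ Y.length → φ W V ≠ 0 → φ W (V ++ Y) = 0)
    (hψ : ∀ W, ∀ V Y : List ι', k ≤ Y.length → ψ W V ≠ 0 → ψ W (V ++ Y) = 0)
    (w w₂ : List ι) (v v₂ : List ι')
    (h : ∀ X Y, |φ (w ++ X) (v ++ Y) - ψ (w₂ ++ X) (v₂ ++ Y)| ≤ ε) (M : ℕ) :
    |Gs p p' M φ w v - Gs p p' M ψ w₂ v₂| ≤ 2 * k * ε * M := by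
  classical
  unfold Gs
  have e1 := Sm_rebase (p := p) (fun W => Sm p' M (fun V => φ W V) v) M w []
  have e2 := Sm_rebase (p := p) (fun W => Sm p' M (fun V => ψ W V) v₂) M w₂ []
  rw [List.append_nil] at e1 e2
  rw [← e1, ← e2, ← Sm_sub]
  refine (Sm_abs_le hp _ M []).trans ?_
  rw [mul_comm]
  refine Sm_const_le hp hp1 (fun X => ?_) M []
  have e3 := Sm_rebase (p := p') (fun V => φ (w ++ X) V) M v []
  have e4 := Sm_rebase (p := p') (fun V => ψ (w₂ ++ X) V) M v₂ []
  rw [List.append_nil] at e3 e4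
  rw [← e3, ← e4, ← Sm_sub]
  refine (Sm_abs_le hp' _ M []).trans ?_
  set φ1 : List ι' → ℝ := fun Y => if φ (w ++ X) (v ++ Y) ≠ 0 then ε else 0 with hφ1
  set ψ1 : List ι' → ℝ := fun Y => if ψ (w₂ ++ X) (v₂ ++ Y) ≠ 0 then ε else 0 with hψ1
  have h1 : ∀ Y, |φ (w ++ X) (v ++ Y) - ψ (w₂ ++ X) (v₂ ++ Y)| ≤ φ1 Y + ψ1 Y := by
    intro Y
    have h2 := h X Y
    simp only [hφ1, hψ1]
    split_ifs with h3 h4 h4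
    · linarith
    · linarith
    · linarith
    · push Not at h3 h4
      rw [h3, h4]; simp
  have hb1 : Sm p' M φ1 [] ≤ k * ε := by
    refine Sm_band hp' hp1' hε (fun Y => ?_) k (fun Y Z hZ hY => ?_) M []
    · simp only [hφ1]; split_ifs <;> linarith
    · simp only [hφ1] at hY ⊢
      have : φ (w ++ X) (v ++ Y) ≠ 0 := fun h0 => hY (by simp [h0])
      have h5 := hφ _ _ Z hZ this
      rw [List.append_assoc] at h5
      simp [h5]
  have hb2 : Sm p' M ψ1 [] ≤ k * ε := by
    refine Sm_band hp' hp1' hε (fun Y => ?_) k (fun Y Z hZ hY => ?_) M []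
    · simp only [hψ1]; split_ifs <;> linarith
    · simp only [hψ1] at hY ⊢
      have : ψ (w₂ ++ X) (v₂ ++ Y) ≠ 0 := fun h0 => hY (by simp [h0])
      have h5 := hψ _ _ Z hZ this
      rw [List.append_assoc] at h5
      simp [h5]
  refine (Sm_mono hp' h1 M []).trans ?_
  rw [Sm_add]; linarith

end Tree
end SC

namespace SC

/-! ### Equidistribution of the ratio cocycle -/

/-- Two trees of words with weights, together with the multiplicative data `S`, `T` (derivatives
along words), and a test function `Ξ` on `ℂ × words × words` that lives in a band of moduli,
is multiplicatively Lipschitz, and depends mostly on the ends of the words. -/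
structure Equi (ι ι' : Type*) [Fintype ι] [Fintype ι'] where
  p : ι → ℝ
  p_pos : ∀ i, 0 < p i
  p_sum : ∑ i, p i = 1
  p' : ι' → ℝ
  p'_pos : ∀ i, 0 < p' i
  p'_sum : ∑ i, p' i = 1
  S : List ι → ℂ
  S_ne : ∀ w, S w ≠ 0
  T : List ι' → ℂ
  T_ne : ∀ w, T w ≠ 0
  C : ℝ
  C_pos : 0 < C
  ρ : ℝ
  ρ_pos : 0 < ρ
  ρ_lt : ρ < 1
  S_dec : ∀ w X, ‖S (w ++ X)‖ ≤ C * ρ ^ X.length * ‖S w‖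
  T_dec : ∀ w X, ‖T (w ++ X)‖ ≤ C * ρ ^ X.length * ‖T w‖
  γ : ι → ℂ
  γ' : ι' → ℂ
  γ_ne : ∀ i, γ i ≠ 0
  γ'_ne : ∀ i, γ' i ≠ 0
  S_rat : ∀ i, ∀ ε > 0, ∃ r0, ∀ r, r0 ≤ r → ∀ W X,
    ‖S (W ++ List.replicate (r + 1) i ++ X) / S (W ++ List.replicate r i ++ X) / γ i - 1‖ ≤ ε
  T_rat : ∀ i, ∀ ε > 0, ∃ r0, ∀ r, r0 ≤ r → ∀ W X,
    ‖T (W ++ List.replicate (r + 1) i ++ X) / T (W ++ List.replicate r i ++ X) / γ' i - 1‖ ≤ ε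
  Ξ : ℂ → List ι → List ι' → ℝ
  Ξ_nonneg : ∀ L W V, 0 ≤ Ξ L W V
  Ξ_le : ∀ L W V, Ξ L W V ≤ 1
  a : ℝ
  b : ℝ
  a_pos : 0 < a
  Ξ_supp : ∀ L W V, Ξ L W V ≠ 0 → a ≤ ‖L‖ ∧ ‖L‖ ≤ b
  Lip : ℝ
  Lip_nonneg : 0 ≤ Lip
  Ξ_lip : ∀ L u W V, |Ξ (L * u) W V - Ξ L W V| ≤ Lip * ‖u - 1‖
  Ξ_W : ∀ ε > 0, ∃ k0, ∀ L W W' X V, k0 ≤ X.length → |Ξ L (W ++ X) V - Ξ L (W' ++ X) V| ≤ ε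
  Ξ_V : ∀ ε > 0, ∃ k0, ∀ L W V V' X, k0 ≤ X.length → |Ξ L W (V ++ X) - Ξ L W (V' ++ X)| ≤ ε
  dense : ∀ H : Subgroup ℂˣ, IsClosed (H : Set ℂˣ) → (∀ i, Units.mk0 (γ i) (γ_ne i) ∈ H) →
    (∀ i, Units.mk0 (γ' i) (γ'_ne i) ∈ H) → H = ⊤
  k : ℕ
  k_band : C * ρ ^ k * (3 * b) < a

namespace Equi
variable {ι ι' : Type*} [Fintype ι] [Fintype ι'] (E : Equi ι ι')

lemma p0 (i : ι) : 0 ≤ E.p i := (E.p_pos i).le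
lemma p'0 (i : ι') : 0 ≤ E.p' i := (E.p'_pos i).le

/-- The test function along pairs of words, with the ratio multiplied by `g`. -/
noncomputable def φ (g : ℂ) (W : List ι) (V : List ι') : ℝ := E.Ξ (g * (E.S W / E.T V)) W V

lemma dec_k {X : List ι} (h : E.k ≤ X.length) : E.C * E.ρ ^ X.length ≤ E.C * E.ρ ^ E.k :=
  mul_le_mul_of_nonneg_left (pow_le_pow_of_le_one E.ρ_pos.le E.ρ_lt.le h) E.C_pos.le

/-- The band argument in the first tree. -/
lemma band_W {ψ : List ι → ℝ} {c : ℝ} (hc : 0 ≤ c)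
    (h : ∀ W, ψ W ≠ 0 → E.a / 3 ≤ c * ‖E.S W‖ ∧ c * ‖E.S W‖ ≤ E.b)
    (W X : List ι) (hX : E.k ≤ X.length) (hW : ψ W ≠ 0) : ψ (W ++ X) = 0 := by
  by_contra hne
  have h1 := (h _ hW).2
  have h2 := (h _ hne).1
  have h3 := E.S_dec W X
  have h4 : E.C * E.ρ ^ X.length ≤ E.C * E.ρ ^ E.k :=
    mul_le_mul_of_nonneg_left (pow_le_pow_of_le_one E.ρ_pos.le E.ρ_lt.le hX) E.C_pos.le
  have h5 := E.k_band
  have h6 : 0 ≤ E.C * E.ρ ^ E.k := mul_nonneg E.C_pos.le (pow_nonneg E.ρ_pos.le _)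
  have h7 : c * ‖E.S (W ++ X)‖ ≤ E.C * E.ρ ^ E.k * (c * ‖E.S W‖) := by
    calc c * ‖E.S (W ++ X)‖ ≤ c * (E.C * E.ρ ^ X.length * ‖E.S W‖) := by gcongr
      _ ≤ c * (E.C * E.ρ ^ E.k * ‖E.S W‖) := by gcongr
      _ = _ := by ring
  nlinarith [mul_le_mul_of_nonneg_left h1 h6]

/-- The band argument in the second tree. -/
lemma band_V {ψ : List ι' → ℝ} {c : ℝ} (hc : 0 ≤ c)
    (h : ∀ W, ψ W ≠ 0 → E.a / 3 ≤ c / ‖E.T W‖ ∧ c / ‖E.T W‖ ≤ E.b)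
    (W X : List ι') (hX : E.k ≤ X.length) (hW : ψ W ≠ 0) : ψ (W ++ X) = 0 := by
  by_contra hne
  have h1 := (h _ hW).1
  have h2 := (h _ hne).2
  have h3 := E.T_dec W X
  have h4 : E.C * E.ρ ^ X.length ≤ E.C * E.ρ ^ E.k :=
    mul_le_mul_of_nonneg_left (pow_le_pow_of_le_one E.ρ_pos.le E.ρ_lt.le hX) E.C_pos.le
  have h5 := E.k_band
  have h6 : 0 ≤ E.C * E.ρ ^ E.k := mul_nonneg E.C_pos.le (pow_nonneg E.ρ_pos.le _)
  have ht : 0 < ‖E.T W‖ := norm_pos_iff.2 (E.T_ne W)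
  have ht' : 0 < ‖E.T (W ++ X)‖ := norm_pos_iff.2 (E.T_ne _)
  have h8 : ‖E.T (W ++ X)‖ ≤ E.C * E.ρ ^ E.k * ‖E.T W‖ := h3.trans (by gcongr)
  rw [le_div_iff₀ ht] at h1
  rw [div_le_iff₀ ht'] at h2
  have hb : 0 ≤ E.b := by
    by_contra hb
    push Not at hb
    have := mul_neg_of_neg_of_pos hb ht'
    linarith
  have h9 := mul_le_mul_of_nonneg_left h8 hb
  have : E.a / 3 * ‖E.T W‖ ≤ E.C * E.ρ ^ E.k * E.b * ‖E.T W‖ := by nlinarith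
  have := le_of_mul_le_mul_right this ht
  linarith

lemma φ_nonneg (g : ℂ) (W : List ι) (V : List ι') : 0 ≤ E.φ g W V := E.Ξ_nonneg _ _ _
lemma φ_le (g : ℂ) (W : List ι) (V : List ι') : E.φ g W V ≤ 1 := E.Ξ_le _ _ _

lemma φ_supp {g : ℂ} {W : List ι} {V : List ι'} (h : E.φ g W V ≠ 0) :
    E.a ≤ ‖g‖ * (‖E.S W‖ / ‖E.T V‖) ∧ ‖g‖ * (‖E.S W‖ / ‖E.T V‖) ≤ E.b := by
  simpa [norm_mul, norm_div] using E.Ξ_supp _ _ _ h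

lemma φ_band_W (g : ℂ) (V : List ι') (W X : List ι) (hX : E.k ≤ X.length)
    (hW : E.φ g W V ≠ 0) : E.φ g (W ++ X) V = 0 := by
  refine E.band_W (ψ := fun W => E.φ g W V) (c := ‖g‖ / ‖E.T V‖) (by positivity) ?_ W X hX hW
  intro W h
  have h1 := E.φ_supp h
  have e : ‖g‖ * (‖E.S W‖ / ‖E.T V‖) = ‖g‖ / ‖E.T V‖ * ‖E.S W‖ := by ring
  rw [e] at h1
  exact ⟨by linarith [E.a_pos], h1.2⟩

lemma φ_band_V (g : ℂ) (W : List ι) (V X : List ι') (hX : E.k ≤ X.length)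
    (hV : E.φ g W V ≠ 0) : E.φ g W (V ++ X) = 0 := by
  refine E.band_V (ψ := fun V => E.φ g W V) (c := ‖g‖ * ‖E.S W‖) (by positivity) ?_ V X hX hV
  intro V h
  have h1 := E.φ_supp h
  have e : ‖g‖ * (‖E.S W‖ / ‖E.T V‖) = ‖g‖ * ‖E.S W‖ / ‖E.T V‖ := by ring
  rw [e] at h1
  exact ⟨by linarith [E.a_pos], h1.2⟩

/-- The normalized double sums. -/
noncomputable def G (g : ℂ) (M : ℕ) (w : List ι) (v : List ι') : ℝ :=
  (M : ℝ)⁻¹ * Gs E.p E.p' M (E.φ g) w v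

lemma inner_V_le (g : ℂ) (M : ℕ) (W : List ι) (v : List ι') :
    Sm E.p' M (fun V => E.φ g W V) v ≤ E.k := by
  have := Sm_band E.p'0 E.p'_sum zero_le_one (fun V => E.φ_le g W V) E.k
    (fun V X hX hV => E.φ_band_V g W V X hX hV) M v
  simpa using this

lemma inner_W_le (g : ℂ) (M : ℕ) (w : List ι) (V : List ι') :
    Sm E.p M (fun W => E.φ g W V) w ≤ E.k := by
  have := Sm_band E.p0 E.p_sum zero_le_one (fun W => E.φ_le g W V) E.k
    (fun W X hX hW => E.φ_band_W g V W X hX hW) M w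
  simpa using this

lemma inner_V_nonneg (g : ℂ) (M : ℕ) (W : List ι) (v : List ι') :
    0 ≤ Sm E.p' M (fun V => E.φ g W V) v := Sm_nonneg E.p'0 (fun V => E.φ_nonneg g W V) M v

lemma inner_W_nonneg (g : ℂ) (M : ℕ) (w : List ι) (V : List ι') :
    0 ≤ Sm E.p M (fun W => E.φ g W V) w := Sm_nonneg E.p0 (fun W => E.φ_nonneg g W V) M w

lemma G_nonneg (g : ℂ) (M : ℕ) (w : List ι) (v : List ι') : 0 ≤ E.G g M w v :=
  mul_nonneg (by positivity) (Sm_nonneg E.p0 (fun W => E.inner_V_nonneg g M W v) M w)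

lemma norm_inv_le {M : ℕ} {x c : ℝ} (hc : 0 ≤ c) (h : x ≤ c * M) : (M : ℝ)⁻¹ * x ≤ c := by
  rcases Nat.eq_zero_or_pos M with rfl | hM
  · simpa using hc
  · have : (0 : ℝ) < M := by exact_mod_cast hM
    rw [inv_mul_le_iff₀ this]; linarith

lemma G_le (g : ℂ) (M : ℕ) (w : List ι) (v : List ι') : E.G g M w v ≤ E.k := by
  refine norm_inv_le (Nat.cast_nonneg _) ?_
  rw [mul_comm]
  exact Sm_const_le E.p0 E.p_sum (fun W => E.inner_V_le g M W v) M w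

lemma G_compare {g g₂ : ℂ} {ε : ℝ} (hε : 0 ≤ ε) (w w₂ : List ι) (v v₂ : List ι')
    (h : ∀ X Y, |E.φ g (w ++ X) (v ++ Y) - E.φ g₂ (w₂ ++ X) (v₂ ++ Y)| ≤ ε) (M : ℕ) :
    |E.G g M w v - E.G g₂ M w₂ v₂| ≤ 2 * E.k * ε := by
  unfold G
  rw [← mul_sub, abs_mul, abs_of_nonneg (by positivity)]
  exact norm_inv_le (by positivity) (Gs_compare E.p0 E.p_sum E.p'0 E.p'_sum hε E.k
    (E.φ_band_V g) (E.φ_band_V g₂) w w₂ v v₂ h M)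

lemma G_harm_W (g : ℂ) (M : ℕ) (w : List ι) (v : List ι') :
    |av E.p (fun x => E.G g M x v) w - E.G g M w v| ≤ (M : ℝ)⁻¹ * E.k := by
  set φ1 : List ι → ℝ := fun W => Sm E.p' M (fun V => E.φ g W V) v with hφ1
  have h1 := Sm_harm (p := E.p) φ1 M w
  have h2 : av E.p (fun x => E.G g M x v) w = (M : ℝ)⁻¹ * av E.p (Sm E.p M φ1) w := by
    simp only [av, Finset.mul_sum]
    exact Finset.sum_congr rfl fun i _ => by simp only [G, Gs]; ring
  have h3 : E.G g M w v = (M : ℝ)⁻¹ * Sm E.p M φ1 w := rfl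
  rw [h2, h3, h1, ← mul_sub, abs_mul, abs_of_nonneg (a := (M : ℝ)⁻¹) (by positivity)]
  refine mul_le_mul_of_nonneg_left ?_ (by positivity)
  have h4 := E.inner_V_le g M w v
  have h5 := E.inner_V_nonneg g M w v
  have h6 := avs_nonneg E.p0 (fun W => E.inner_V_nonneg g M W v) M w
  have h7 := avs_mono E.p0 (fun W => E.inner_V_le g M W v) M w
  rw [avs_const E.p_sum] at h7
  rw [abs_le]; constructor <;> linarith

lemma G_harm_V (g : ℂ) (M : ℕ) (w : List ι) (v : List ι') :
    |av E.p' (fun x => E.G g M w x) v - E.G g M w v| ≤ (M : ℝ)⁻¹ * E.k := by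
  set φ1 : List ι' → ℝ := fun V => Sm E.p M (fun W => E.φ g W V) w with hφ1
  have h0 : ∀ v, E.G g M w v = (M : ℝ)⁻¹ * Sm E.p' M φ1 v := fun v => by
    simp only [G, Gs]; rw [Sm_comm]
  have h1 := Sm_harm (p := E.p') φ1 M v
  have h2 : av E.p' (fun x => E.G g M w x) v = (M : ℝ)⁻¹ * av E.p' (Sm E.p' M φ1) v := by
    simp only [av, Finset.mul_sum]
    exact Finset.sum_congr rfl fun i _ => by rw [h0]; ring
  rw [h2, h0, h1, ← mul_sub, abs_mul, abs_of_nonneg (a := (M : ℝ)⁻¹) (by positivity)]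
  refine mul_le_mul_of_nonneg_left ?_ (by positivity)
  have h4 := E.inner_W_le g M w v
  have h5 := E.inner_W_nonneg g M w v
  have h6 := avs_nonneg E.p'0 (fun V => E.inner_W_nonneg g M w V) M v
  have h7 := avs_mono E.p'0 (fun V => E.inner_W_le g M w V) M v
  rw [avs_const E.p'_sum] at h7
  rw [abs_le]; constructor <;> linarith

/-- Appending one more copy of the letter `i` multiplies the ratio by `γ i`, up to a small error. -/
lemma φ_shift_W (i : ι) {ε : ℝ} (hε : 0 < ε) : ∃ r0, ∀ r, r0 ≤ r → ∀ g W V X,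
    |E.φ g (W ++ List.replicate (r + 1) i ++ X) V -
      E.φ (g * E.γ i) (W ++ List.replicate r i ++ X) V| ≤ ε := by
  obtain ⟨k0, hk0⟩ := E.Ξ_W (ε / 2) (by positivity)
  obtain ⟨r1, hr1⟩ := E.S_rat i (ε / (2 * (E.Lip + 1))) (by have := E.Lip_nonneg; positivity)
  refine ⟨max k0 r1, fun r hr g W V X => ?_⟩
  have h1 := hr1 r (le_of_max_le_right hr) W X
  set u := E.S (W ++ List.replicate (r + 1) i ++ X) / E.S (W ++ List.replicate r i ++ X) / E.γ i
    with hu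
  set L := g * E.γ i * (E.S (W ++ List.replicate r i ++ X) / E.T V) with hL
  have e1 : g * (E.S (W ++ List.replicate (r + 1) i ++ X) / E.T V) = L * u := by
    rw [hL, hu]
    have := E.γ_ne i
    have := E.S_ne (W ++ List.replicate r i ++ X)
    have := E.T_ne V
    field_simp
  have e2 : W ++ List.replicate (r + 1) i ++ X = (W ++ [i]) ++ (List.replicate r i ++ X) := by
    rw [List.replicate_succ]; simp
  have h2 := E.Ξ_lip L u (W ++ List.replicate (r + 1) i ++ X) V
  have h3 := hk0 L (W ++ [i]) W (List.replicate r i ++ X) V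
    (by simp; have := le_of_max_le_left hr; omega)
  have h4 : E.Lip * ‖u - 1‖ ≤ ε / 2 := by
    have hL0 := E.Lip_nonneg
    calc E.Lip * ‖u - 1‖ ≤ (E.Lip + 1) * (ε / (2 * (E.Lip + 1))) :=
          mul_le_mul (by linarith) h1 (norm_nonneg _) (by linarith)
      _ = ε / 2 := by field_simp
  unfold φ
  rw [e1, ← hL]
  rw [← e2, ← List.append_assoc] at h3
  calc _ ≤ _ + _ := abs_sub_le _ (E.Ξ L (W ++ List.replicate (r + 1) i ++ X) V) _
    _ ≤ ε / 2 + ε / 2 := add_le_add (h2.trans h4) h3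
    _ = ε := by ring

lemma φ_shift_V (i : ι') {ε : ℝ} (hε : 0 < ε) : ∃ r0, ∀ r, r0 ≤ r → ∀ g W V X,
    |E.φ (g * E.γ' i) W (V ++ List.replicate (r + 1) i ++ X) -
      E.φ g W (V ++ List.replicate r i ++ X)| ≤ ε := by
  obtain ⟨k0, hk0⟩ := E.Ξ_V (ε / 2) (by positivity)
  obtain ⟨r1, hr1⟩ := E.T_rat i (ε / (2 * (E.Lip + 1))) (by have := E.Lip_nonneg; positivity)
  refine ⟨max k0 r1, fun r hr g W V X => ?_⟩
  have h1 := hr1 r (le_of_max_le_right hr) V X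
  set u := E.T (V ++ List.replicate (r + 1) i ++ X) / E.T (V ++ List.replicate r i ++ X) / E.γ' i
    with hu
  set L := g * E.γ' i * (E.S W / E.T (V ++ List.replicate (r + 1) i ++ X)) with hL
  have e1 : g * (E.S W / E.T (V ++ List.replicate r i ++ X)) = L * u := by
    rw [hL, hu]
    have := E.γ'_ne i
    have := E.T_ne (V ++ List.replicate r i ++ X)
    have := E.T_ne (V ++ List.replicate (r + 1) i ++ X)
    field_simp
  have e2 : V ++ List.replicate (r + 1) i ++ X = (V ++ [i]) ++ (List.replicate r i ++ X) := by
    rw [List.replicate_succ]; simp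
  have h2 := E.Ξ_lip L u W (V ++ List.replicate r i ++ X)
  have h3 := hk0 L W (V ++ [i]) V (List.replicate r i ++ X)
    (by simp; have := le_of_max_le_left hr; omega)
  have h4 : E.Lip * ‖u - 1‖ ≤ ε / 2 := by
    have hL0 := E.Lip_nonneg
    calc E.Lip * ‖u - 1‖ ≤ (E.Lip + 1) * (ε / (2 * (E.Lip + 1))) :=
          mul_le_mul (by linarith) h1 (norm_nonneg _) (by linarith)
      _ = ε / 2 := by field_simp
  unfold φ
  rw [e1, ← hL]
  rw [← e2, ← List.append_assoc] at h3
  rw [abs_sub_comm] at h2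
  calc _ ≤ _ + _ := abs_sub_le _ (E.Ξ L W (V ++ List.replicate r i ++ X)) _
    _ ≤ ε / 2 + ε / 2 := add_le_add h3 (h2.trans h4)
    _ = ε := by ring

end Equi

/-- Two bounded harmonic functions that are asymptotically related by a shift along powers of a
letter agree at the root. -/
lemma harm_shift_eq {ι : Type*} [Fintype ι] {p : ι → ℝ} (hp : ∀ i, 0 < p i) (hp1 : ∑ i, p i = 1)
    {φ ψ : List ι → ℝ} {b : ℝ} (hb : ∀ w, |φ w| ≤ b) (hb' : ∀ w, |ψ w| ≤ b)
    (h : ∀ w, av p φ w = φ w) (h' : ∀ w, av p ψ w = ψ w) (i : ι)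
    (hs : ∀ ε > 0, ∃ r, ∀ x, |φ (x ++ List.replicate (r + 1) i) - ψ (x ++ List.replicate r i)| ≤ ε) :
    φ [] = ψ [] := by
  have hp0 : ∀ i, 0 ≤ p i := fun i => (hp i).le
  have key : ∀ ε > 0, |φ [] - ψ []| ≤ ε := by
    intro ε hε
    obtain ⟨r, hr⟩ := hs ε hε
    have h1 := harm_word hp hp1 hb h (List.replicate (r + 1) i)
    have h2 := harm_word hp hp1 hb' h' (List.replicate r i)
    have h3 := (h1.add h2).add (tendsto_const_nhds (x := ε))
    rw [add_zero, zero_add] at h3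
    refine ge_of_tendsto' h3 (fun n => ?_)
    have e1 := avs_harm h n []
    have e2 := avs_harm h' n []
    rw [← e1, ← e2, ← avs_sub]
    refine (avs_abs_le hp0 _ n []).trans ?_
    rw [← avs_add]
    have e3 := avs_const hp1 ε n ([] : List ι)
    nth_rewrite 1 [← e3]
    rw [← avs_add]
    refine avs_mono hp0 (fun x => ?_) n []
    have h4 := hr x
    have h5 := abs_sub_le (φ x) (φ (x ++ List.replicate (r + 1) i)) (ψ x)
    have h6 := abs_sub_le (φ (x ++ List.replicate (r + 1) i)) (ψ (x ++ List.replicate r i)) (ψ x)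
    have h7 := abs_sub_comm (φ x) (φ (x ++ List.replicate (r + 1) i))
    linarith
  have := le_of_forall_pos_le_add (a := |φ [] - ψ []|) (b := 0) (fun ε hε => by
    simpa using key ε hε)
  exact sub_eq_zero.1 (abs_nonpos_iff.1 this)

namespace Equi
variable {ι ι' : Type*} [Fintype ι] [Fintype ι'] (E : Equi ι ι')

/-- Equidistribution: if the mean of the test function over the multipliers `gr s` is at most `B`
everywhere, then the double sums of the test function itself over `M` generations of both trees
are at most `2 k B M`, uniformly in the starting words. -/
theorem main {σ : Type*} [Fintype σ] [Nonempty σ] (gr : σ → ℂ) (hgr : ∀ s, 1 ≤ ‖gr s‖)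
    (hgr' : ∀ s, ‖gr s‖ ≤ 3) {B : ℝ} (hB : 0 < B) (hk : 0 < E.k)
    (hav : ∀ L W V, ∑ s, E.Ξ (gr s * L) W V ≤ Fintype.card σ * B) :
    ∃ M0, ∀ M, M0 ≤ M → ∀ w v, Gs E.p E.p' M (E.φ 1) w v ≤ 2 * E.k * B * M := by
  by_contra hcon
  push Not at hcon
  choose m hm w v hwv using hcon
  have hm_top : Tendsto m atTop atTop := tendsto_atTop_mono hm tendsto_id
  have hu_top : Tendsto m (hyperfilter ℕ : Filter ℕ) atTop :=
    hm_top.mono_left (by rw [← Nat.cofinite_eq_atTop]; exact hyperfilter_le_cofinite)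
  -- The normalized sums lie in `[0, k]`, hence converge along the ultrafilter.
  have hlim : ∀ g x y, ∃ l : ℝ,
      Tendsto (fun n => E.G g (m n) (w n ++ x) (v n ++ y)) (hyperfilter ℕ : Filter ℕ) (𝓝 l) := by
    intro g x y
    have hc : IsCompact (Icc (0 : ℝ) E.k) := isCompact_Icc
    obtain ⟨l, _, hl⟩ := hc.ultrafilter_le_nhds
      ((hyperfilter ℕ).map (fun n => E.G g (m n) (w n ++ x) (v n ++ y))) (by
        rw [le_principal_iff]
        exact Filter.Eventually.of_forall (f := (hyperfilter ℕ : Filter ℕ))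
          (fun n => ⟨E.G_nonneg _ _ _ _, E.G_le _ _ _ _⟩))
    exact ⟨l, hl⟩
  choose Ψ hΨ using hlim
  have hΨ0 : ∀ g x y, |Ψ g x y| ≤ E.k := by
    intro g x y
    rw [abs_of_nonneg (ge_of_tendsto' (hΨ g x y) fun n => E.G_nonneg _ _ _ _)]
    exact le_of_tendsto' (hΨ g x y) fun n => E.G_le _ _ _ _
  have hmz : Tendsto (fun n => ((m n : ℕ) : ℝ)⁻¹ * E.k) (hyperfilter ℕ : Filter ℕ) (𝓝 0) := by
    have := ((tendsto_inv_atTop_zero.comp tendsto_natCast_atTop_atTop).comp hu_top).mul_const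
      (E.k : ℝ)
    simpa using this
  have harmW : ∀ g y x, av E.p (fun x => Ψ g x y) x = Ψ g x y := by
    intro g y x
    have h1 : Tendsto (fun n => av E.p (fun x' => E.G g (m n) (x') (v n ++ y)) (w n ++ x))
        (hyperfilter ℕ : Filter ℕ) (𝓝 (av E.p (fun x => Ψ g x y) x)) := by
      unfold av
      refine tendsto_finsetSum _ fun i _ => ?_
      have := (hΨ g (x ++ [i]) y).const_mul (E.p i)
      simpa using this
    have h2 := (h1.sub (hΨ g x y)).abs
    have h3 := le_of_tendsto_of_tendsto' h2 hmz (fun n => E.G_harm_W g (m n) _ _)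
    exact sub_eq_zero.1 (abs_nonpos_iff.1 h3)
  have harmV : ∀ g x y, av E.p' (fun y => Ψ g x y) y = Ψ g x y := by
    intro g x y
    have h1 : Tendsto (fun n => av E.p' (fun y' => E.G g (m n) (w n ++ x) y') (v n ++ y))
        (hyperfilter ℕ : Filter ℕ) (𝓝 (av E.p' (fun y => Ψ g x y) y)) := by
      unfold av
      refine tendsto_finsetSum _ fun i _ => ?_
      have := (hΨ g x (y ++ [i])).const_mul (E.p' i)
      simpa using this
    have h2 := (h1.sub (hΨ g x y)).abs
    have h3 := le_of_tendsto_of_tendsto' h2 hmz (fun n => E.G_harm_V g (m n) _ _)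
    exact sub_eq_zero.1 (abs_nonpos_iff.1 h3)
  have hkpos : (0 : ℝ) < E.k := by exact_mod_cast hk
  have hcmp : ∀ g g₂ x x₂ y y₂ ε, 0 ≤ ε →
      (∀ n X Y, |E.φ g (w n ++ x ++ X) (v n ++ y ++ Y) - E.φ g₂ (w n ++ x₂ ++ X) (v n ++ y₂ ++ Y)| ≤ ε) →
      |Ψ g x y - Ψ g₂ x₂ y₂| ≤ 2 * E.k * ε := by
    intro g g₂ x x₂ y y₂ ε hε h
    exact le_of_tendsto' ((hΨ g x y).sub (hΨ g₂ x₂ y₂)).abs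
      (fun n => E.G_compare hε _ _ _ _ (h n) (m n))
  have invW : ∀ g i, Ψ g [] [] = Ψ (g * E.γ i) [] [] := by
    intro g i
    refine harm_shift_eq E.p_pos E.p_sum (φ := fun x => Ψ g x []) (ψ := fun x => Ψ (g * E.γ i) x [])
      (fun x => hΨ0 g x []) (fun x => hΨ0 _ x []) (harmW g []) (harmW _ []) i ?_
    intro ε hε
    obtain ⟨r, hr⟩ := E.φ_shift_W i (ε := ε / (2 * E.k)) (by positivity)
    refine ⟨r, fun x => ?_⟩
    have := hcmp g (g * E.γ i) (x ++ List.replicate (r + 1) i) (x ++ List.replicate r i) [] []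
      (ε / (2 * E.k)) (by positivity) (fun n X Y => by
        have := hr r le_rfl g (w n ++ x) (v n ++ [] ++ Y) X
        simpa only [List.append_assoc] using this)
    rwa [mul_div_cancel₀ _ (by positivity)] at this
  have invV : ∀ g i, Ψ g [] [] = Ψ (g * E.γ' i) [] [] := by
    intro g i
    refine (harm_shift_eq E.p'_pos E.p'_sum (φ := fun x => Ψ (g * E.γ' i) [] x)
      (ψ := fun x => Ψ g [] x)
      (fun x => hΨ0 _ [] x) (fun x => hΨ0 _ [] x) (harmV _ []) (harmV _ []) i ?_).symm
    intro ε hε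
    obtain ⟨r, hr⟩ := E.φ_shift_V i (ε := ε / (2 * E.k)) (by positivity)
    refine ⟨r, fun x => ?_⟩
    have := hcmp (g * E.γ' i) g [] [] (x ++ List.replicate (r + 1) i) (x ++ List.replicate r i)
      (ε / (2 * E.k)) (by positivity) (fun n X Y => by
        have := hr r le_rfl g (w n ++ [] ++ X) (v n ++ x) Y
        simpa only [List.append_assoc] using this)
    rwa [mul_div_cancel₀ _ (by positivity)] at this
  -- Lipschitz dependence on the multiplier
  have hlip : ∀ g u, |Ψ (g * u) [] [] - Ψ g [] []| ≤ 2 * E.k * (E.Lip * ‖u - 1‖) := by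
    intro g u
    refine hcmp _ _ _ _ _ _ _ (mul_nonneg E.Lip_nonneg (norm_nonneg _)) (fun n X Y => ?_)
    unfold φ
    have := E.Ξ_lip (g * (E.S (w n ++ [] ++ X) / E.T (v n ++ [] ++ Y))) u (w n ++ [] ++ X)
      (v n ++ [] ++ Y)
    rwa [mul_right_comm] at this
  let H : Subgroup ℂˣ :=
    { carrier := {h | ∀ g : ℂ, Ψ (g * h) [] [] = Ψ g [] []}
      mul_mem' := by
        intro a b ha hb g
        rw [Units.val_mul, ← mul_assoc, hb, ha]
      one_mem' := by intro g; simp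
      inv_mem' := by
        intro a ha g
        have := ha (g * ((a⁻¹ : ℂˣ) : ℂ))
        rw [mul_assoc, Units.inv_mul, mul_one] at this
        exact this.symm }
  have hHc : IsClosed (H : Set ℂˣ) := by
    have : (H : Set ℂˣ) = ⋂ g : ℂ, {h : ℂˣ | Ψ (g * h) [] [] = Ψ g [] []} := by
      ext h; simp [H]
    rw [this]
    refine isClosed_iInter fun g => isClosed_eq ?_ continuous_const
    rw [continuous_iff_continuousAt]
    intro h0
    have h1 : Tendsto (fun h : ℂˣ => 2 * E.k * (E.Lip * ‖(h0⁻¹ * h : ℂˣ).1 - 1‖)) (𝓝 h0) (𝓝 0) := by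
      have hc : Continuous (fun h : ℂˣ => 2 * E.k * (E.Lip * ‖((h0⁻¹ * h : ℂˣ) : ℂ) - 1‖)) := by
        have : Continuous (fun h : ℂˣ => ((h0⁻¹ * h : ℂˣ) : ℂ)) :=
          Units.continuous_val.comp (continuous_const.mul continuous_id)
        fun_prop
      have := hc.tendsto h0
      simpa using this
    rw [ContinuousAt, tendsto_iff_dist_tendsto_zero]
    refine squeeze_zero (fun _ => dist_nonneg) (fun h => ?_) h1
    have h2 := hlip (g * h0) ((h0⁻¹ * h : ℂˣ) : ℂ)
    have e : g * h0 * ((h0⁻¹ * h : ℂˣ) : ℂ) = g * h := by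
      rw [Units.val_mul, ← mul_assoc, mul_assoc g, Units.mul_inv, mul_one]
    rw [e] at h2
    exact h2
  have hH : H = ⊤ := E.dense H hHc (fun i g => (invW g i).symm) (fun i g => (invV g i).symm)
  have hall : ∀ g : ℂ, g ≠ 0 → Ψ g [] [] = Ψ 1 [] [] := by
    intro g hg
    have h1 : Units.mk0 g hg ∈ H := by rw [hH]; trivial
    have h2 := h1 1
    simpa using h2
  -- averaging over the grid
  have hq : (0 : ℝ) < Fintype.card σ := by exact_mod_cast Fintype.card_pos
  have havg : ∀ M w v, ∑ s, E.G (gr s) M w v ≤ E.k * (Fintype.card σ * B) := by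
    intro M w v
    have e1 : ∑ s, E.G (gr s) M w v =
        (M : ℝ)⁻¹ * Sm E.p M (fun W => Sm E.p' M (fun V => ∑ s, E.φ (gr s) W V) v) w := by
      have : (fun W => Sm E.p' M (fun V => ∑ s, E.φ (gr s) W V) v) =
          fun W => ∑ s, Sm E.p' M (fun V => E.φ (gr s) W V) v := by
        funext W; exact Sm_sum _ _ _ _
      rw [this, Sm_sum, Finset.mul_sum]
      rfl
    rw [e1]
    refine norm_inv_le (by positivity) ?_
    rw [mul_comm]
    refine Sm_const_le E.p0 E.p_sum (fun W => ?_) M w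
    refine Sm_band E.p'0 E.p'_sum (by positivity) (fun V => hav _ W V) E.k ?_ M v
    refine E.band_V (c := ‖E.S W‖) (norm_nonneg _) (fun V hV => ?_)
    obtain ⟨s, _, hs⟩ := Finset.exists_ne_zero_of_sum_ne_zero hV
    have h1 := E.φ_supp hs
    have h2 := hgr s
    have h3 := hgr' s
    have h4 : 0 ≤ ‖E.S W‖ / ‖E.T V‖ := by positivity
    constructor <;> nlinarith
  have hfin : Fintype.card σ * Ψ 1 [] [] ≤ E.k * (Fintype.card σ * B) := by
    have h1 : Tendsto (fun n => ∑ s, E.G (gr s) (m n) (w n ++ []) (v n ++ []))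
        (hyperfilter ℕ : Filter ℕ) (𝓝 (∑ s, Ψ (gr s) [] [])) :=
      tendsto_finsetSum _ fun s _ => hΨ (gr s) [] []
    have h2 := le_of_tendsto' h1 (fun n => havg _ _ _)
    have h3 : ∑ s, Ψ (gr s) [] [] = Fintype.card σ * Ψ 1 [] [] := by
      rw [Finset.sum_congr rfl (fun s _ => hall (gr s) (norm_pos_iff.1 (by linarith [hgr s])))]
      simp
    rwa [h3] at h2
  have hlow : 2 * E.k * B ≤ Ψ 1 [] [] := by
    refine ge_of_tendsto (hΨ 1 [] []) ?_
    filter_upwards [hu_top.eventually_gt_atTop 0] with n hn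
    have h1 := hwv n
    have hmn : (0 : ℝ) < m n := by exact_mod_cast hn
    simp only [List.append_nil, G]
    rw [le_inv_mul_iff₀ hmn]
    linarith
  nlinarith [mul_pos hkpos hB, mul_pos hq (mul_pos hkpos hB)]

end Equi
end SC

/-! ### Normalized increments and stopped words -/

namespace SC
namespace Sys
variable {ι : Type*} [Fintype ι] (Y : Sys ι)

lemma S_append_le (w X : List ι) : ‖Y.S (w ++ X)‖ ≤ Y.Cq * Y.ρ ^ X.length * ‖Y.S w‖ := by
  rw [S_append, norm_mul]
  have h1 := Y.norm_dF_le_S w (Y.F_mem X Y.z0_mem)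
  have h2 := Y.norm_dF_le X Y.z0_mem
  calc _ ≤ (Y.Cq * ‖Y.S w‖) * Y.ρ ^ X.length :=
        mul_le_mul h1 h2 (norm_nonneg _) (mul_nonneg Y.Cq_pos.le (norm_nonneg _))
    _ = _ := by ring

/-- Lower bound for the contraction of one further step. -/
noncomputable def cs : ℝ := Y.κ / Y.Cq

lemma cs_pos : 0 < Y.cs := div_pos Y.κ_pos Y.Cq_pos

lemma S_snoc_ge (w : List ι) (i : ι) : Y.cs * ‖Y.S w‖ ≤ ‖Y.S (w ++ [i])‖ := by
  rw [S_append, norm_mul]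
  have h1 := Y.S_le_norm_dF w (Y.F_mem [i] Y.z0_mem)
  have h2 : Y.κ ≤ ‖Y.S [i]‖ := by simpa [S] using Y.κ_le i _ Y.z0_mem
  have h3 : ‖Y.S w‖ / Y.Cq ≤ ‖Y.dF w (Y.F [i] Y.z0)‖ := by
    rw [div_le_iff₀ Y.Cq_pos]; linarith
  calc _ = ‖Y.S w‖ / Y.Cq * Y.κ := by unfold cs; ring
    _ ≤ _ := mul_le_mul h3 h2 Y.κ_pos.le (norm_nonneg _)

lemma nonempty_idx (Y : Sys ι) : Nonempty ι := by
  by_contra h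
  rw [not_nonempty_iff] at h
  have := Y.p_sum
  simp at this

lemma cs_lt : Y.cs < 1 := by
  obtain ⟨i⟩ := Y.nonempty_idx
  have h1 := (Y.κ_le i _ Y.z0_mem).trans (Y.le_ρ i _ Y.z0_mem)
  have h2 := Y.ρ_lt
  unfold cs
  rw [div_lt_one Y.Cq_pos]
  linarith [Y.Cq_ge]

@[simp] lemma S_nil : Y.S [] = 1 := rfl

/-- The normalized increment `(F w x - F w x') / S w`. -/
noncomputable def h (w : List ι) (x x' : ℂ) : ℂ := (Y.F w x - Y.F w x') / Y.S w

lemma h_le (w : List ι) {x x' : ℂ} (hx : x ∈ Y.K) (hx' : x' ∈ Y.K) :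
    ‖Y.h w x x'‖ ≤ Y.Cq * ‖x - x'‖ := by
  unfold h
  rw [norm_div, div_le_iff₀ (Y.S_pos w)]
  have := Y.F_upper w hx hx'
  linarith

lemma h_bdd (w : List ι) {x x' : ℂ} (hx : x ∈ Y.K) (hx' : x' ∈ Y.K) :
    ‖Y.h w x x'‖ ≤ Y.Cq * Y.D :=
  (Y.h_le w hx hx').trans (mul_le_mul_of_nonneg_left (Y.diam x hx x' hx') Y.Cq_pos.le)

lemma measurable_h (w : List ι) : Measurable (fun q : ℂ × ℂ => Y.h w q.1 q.2) :=
  (((Y.measurable_F w).comp measurable_fst).sub ((Y.measurable_F w).comp measurable_snd)).div_const _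

/-- The normalized increment depends essentially on the end of the word only. -/
lemma h_append (W X : List ι) {x x' : ℂ} (hx : x ∈ Y.K) (hx' : x' ∈ Y.K) :
    ‖Y.h (W ++ X) x x' - Y.h X x x'‖ ≤ Y.Cd * Y.D ^ Y.α * (Y.Cq * Y.D) * Y.ρα ^ X.length := by
  have hu := Y.F_mem X Y.z0_mem
  have hd := Y.dF_ne W hu
  have hb : ∀ z ∈ Y.K, ‖Y.F X z - Y.F X Y.z0‖ ≤ Y.ρ ^ X.length * Y.D := fun z hz =>
    (Y.F_lip X hz Y.z0_mem).trans (mul_le_mul_of_nonneg_left (Y.diam z hz _ Y.z0_mem)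
      (pow_nonneg Y.ρ_pos.le _))
  have h1 := Y.F_linear W hu (Y.F_mem X hx) (Y.F_mem X hx') (hb x hx) (hb x' hx')
  rw [Real.mul_rpow (pow_nonneg Y.ρ_pos.le _) Y.D_pos.le, Y.ρ_pow_rpow] at h1
  have e : Y.h (W ++ X) x x' - Y.h X x x' =
      (Y.F W (Y.F X x) - Y.F W (Y.F X x') - Y.dF W (Y.F X Y.z0) * (Y.F X x - Y.F X x')) /
        (Y.dF W (Y.F X Y.z0) * Y.S X) := by
    unfold h
    rw [S_append, F_append, F_append]
    have := Y.S_ne X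
    field_simp
  rw [e, norm_div, norm_mul, div_le_iff₀ (mul_pos (norm_pos_iff.2 hd) (Y.S_pos X))]
  refine h1.trans ?_
  have h2 : ‖Y.F X x - Y.F X x'‖ ≤ Y.Cq * Y.D * ‖Y.S X‖ := by
    refine (Y.F_upper X hx hx').trans ?_
    calc _ ≤ Y.Cq * ‖Y.S X‖ * Y.D := mul_le_mul_of_nonneg_left (Y.diam x hx x' hx')
          (mul_nonneg Y.Cq_pos.le (norm_nonneg _))
      _ = _ := by ring
  have h3 : 0 ≤ Y.Cd * (Y.ρα ^ X.length * Y.D ^ Y.α) * ‖Y.dF W (Y.F X Y.z0)‖ :=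
    mul_nonneg (mul_nonneg Y.Cd_nonneg (mul_nonneg (pow_nonneg Y.ρα_pos.le _)
      (Real.rpow_nonneg Y.D_pos.le _))) (norm_nonneg _)
  calc _ ≤ _ := mul_le_mul_of_nonneg_left h2 h3
    _ = _ := by ring

lemma norm_mul_sub_one_le (a b : ℂ) : ‖a * b - 1‖ ≤ ‖a - 1‖ + ‖b - 1‖ + ‖a - 1‖ * ‖b - 1‖ := by
  have : a * b - 1 = (a - 1) + (b - 1) + (a - 1) * (b - 1) := by ring
  rw [this]
  refine (norm_add_le _ _).trans ?_
  rw [norm_mul]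
  gcongr
  exact norm_add_le _ _

/-- Inserting one more copy of a letter into a long run multiplies the derivative by the
multiplier of the corresponding fixed point, up to a small relative error. -/
lemma S_rat (i : ι) {x : ℂ} (hx : x ∈ Y.K) (hfx : Y.f i x = x) {ε : ℝ} (hε : 0 < ε) :
    ∃ r0, ∀ r, r0 ≤ r → ∀ W X, ‖Y.S (W ++ List.replicate (r + 1) i ++ X) /
      Y.S (W ++ List.replicate r i ++ X) / Y.f' i x - 1‖ ≤ ε := by
  set A := Y.Cd * Y.D ^ Y.α with hA
  set B := Y.C * Y.D ^ Y.α / Y.κ with hB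
  have hDα := Real.rpow_nonneg Y.D_pos.le Y.α
  have hfix : ∀ r, Y.F (List.replicate r i) x = x := by
    intro r
    induction r with
    | zero => rfl
    | succ r ih => rw [List.replicate_succ, F_cons, ih, hfx]
  have ht : Tendsto (fun r : ℕ => A * Y.ρα ^ r + B * Y.ρα ^ r + (A * Y.ρα ^ r) * (B * Y.ρα ^ r))
      atTop (𝓝 0) := by
    have h0 := tendsto_pow_atTop_nhds_zero_of_lt_one Y.ρα_pos.le Y.ρα_lt
    have h1 := h0.const_mul A
    have h2 := h0.const_mul B
    have := (h1.add h2).add (h1.mul h2)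
    simpa using this
  obtain ⟨r0, hr0⟩ := (ht.eventually (ge_mem_nhds hε)).exists_forall_of_atTop
  refine ⟨r0, fun r hr W X => ?_⟩
  refine le_trans ?_ (hr0 r hr)
  set u := Y.F X Y.z0 with hu
  have huK : u ∈ Y.K := Y.F_mem X Y.z0_mem
  set y := Y.F (List.replicate r i) u with hy
  have hyK : y ∈ Y.K := Y.F_mem _ huK
  have e1 : Y.S (W ++ List.replicate (r + 1) i ++ X) =
      Y.dF W (Y.f i y) * (Y.f' i y * Y.S (List.replicate r i ++ X)) := by
    rw [List.append_assoc, S_append, List.replicate_succ, List.cons_append, F_cons, F_append]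
    congr 1
    simp only [S, dF_cons, F_append, ← hu, ← hy]
  have e2 : Y.S (W ++ List.replicate r i ++ X) =
      Y.dF W y * Y.S (List.replicate r i ++ X) := by
    rw [List.append_assoc, S_append, F_append]
  have hne1 := Y.dF_ne W hyK
  have hne2 := Y.S_ne (List.replicate r i ++ X)
  have hγ : 0 < ‖Y.f' i x‖ := Y.κ_pos.trans_le (Y.κ_le i x hx)
  have hne3 : Y.f' i x ≠ 0 := norm_pos_iff.1 hγ
  have e3 : Y.S (W ++ List.replicate (r + 1) i ++ X) / Y.S (W ++ List.replicate r i ++ X) /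
      Y.f' i x = (Y.dF W (Y.f i y) / Y.dF W y) * (Y.f' i y / Y.f' i x) := by
    rw [e1, e2]; field_simp
  rw [e3]
  have hρ : ∀ r, 0 ≤ Y.ρα ^ r := fun r => pow_nonneg Y.ρα_pos.le r
  have hb1 : ‖Y.dF W (Y.f i y) / Y.dF W y - 1‖ ≤ A * Y.ρα ^ r := by
    have h1 := Y.distortion W (Y.maps i hyK) hyK
    have e : Y.dF W (Y.f i y) / Y.dF W y - 1 = (Y.dF W (Y.f i y) - Y.dF W y) / Y.dF W y := by
      field_simp
    rw [e, norm_div, div_le_iff₀ (norm_pos_iff.2 hne1)]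
    refine h1.trans (mul_le_mul_of_nonneg_right ?_ (norm_nonneg _))
    have e4 : Y.f i y = Y.F (List.replicate r i) (Y.f i u) := by
      rw [hy, ← F_cons, ← List.replicate_succ, List.replicate_succ', F_append]; rfl
    have h2 := Y.F_holder (List.replicate r i) (Y.maps i huK) huK
    rw [← e4, ← hy, List.length_replicate] at h2
    have h3 : ‖Y.f i u - u‖ ^ Y.α ≤ Y.D ^ Y.α :=
      Real.rpow_le_rpow (norm_nonneg _) (Y.diam _ (Y.maps i huK) _ huK) Y.α_pos.le
    calc _ ≤ Y.Cd * (Y.ρα ^ r * Y.D ^ Y.α) := mul_le_mul_of_nonneg_left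
          (h2.trans (mul_le_mul_of_nonneg_left h3 (hρ r))) Y.Cd_nonneg
      _ = _ := by rw [hA]; ring
  have hb2 : ‖Y.f' i y / Y.f' i x - 1‖ ≤ B * Y.ρα ^ r := by
    have h1 := Y.holder i y hyK x hx
    have e : Y.f' i y / Y.f' i x - 1 = (Y.f' i y - Y.f' i x) / Y.f' i x := by field_simp
    rw [e, norm_div, div_le_iff₀ hγ]
    have h2 := Y.F_holder (List.replicate r i) huK hx
    rw [hfix, ← hy, List.length_replicate] at h2
    have h3 : ‖u - x‖ ^ Y.α ≤ Y.D ^ Y.α :=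
      Real.rpow_le_rpow (norm_nonneg _) (Y.diam _ huK _ hx) Y.α_pos.le
    have hB0 : 0 ≤ B := div_nonneg (mul_nonneg Y.C_nonneg hDα) Y.κ_pos.le
    calc _ ≤ Y.C * (Y.ρα ^ r * Y.D ^ Y.α) := h1.trans (mul_le_mul_of_nonneg_left
          (h2.trans (mul_le_mul_of_nonneg_left h3 (hρ r))) Y.C_nonneg)
      _ = B * Y.ρα ^ r * Y.κ := by rw [hB]; have := Y.κ_pos.ne'; field_simp
      _ ≤ _ := mul_le_mul_of_nonneg_left (Y.κ_le i x hx) (mul_nonneg hB0 (hρ r))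
  refine (norm_mul_sub_one_le _ _).trans ?_
  have := norm_nonneg (Y.f' i y / Y.f' i x - 1)
  have h0 : 0 ≤ A * Y.ρα ^ r := (norm_nonneg _).trans hb1
  gcongr

/-- The piece of the self-conformal measure coded by `w` is the mixture of the pieces coded by
its children. -/
lemma map_F_decomp (w : List ι) :
    Y.μ.map (Y.F w) = ∑ i, ENNReal.ofReal (Y.p i) • Y.μ.map (Y.F (w ++ [i])) := by
  conv_lhs => rw [Y.stat]
  ext A hA
  rw [Measure.map_apply (Y.measurable_F w) hA, Measure.finsetSum_apply, Measure.finsetSum_apply]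
  refine Finset.sum_congr rfl fun i _ => ?_
  rw [Measure.smul_apply, Measure.smul_apply, Measure.map_apply (Y.meas i) (Y.measurable_F w hA),
    Measure.map_apply (Y.measurable_F _) hA]
  congr 2
  ext z
  simp [F_append]

lemma ae_mem : ∀ᵐ x ∂Y.μ, x ∈ Y.K := by
  rw [ae_iff]; exact Y.supp

end Sys

/-! ### Stopping times on the tree of words -/

section Stop
variable {ι : Type*} [Fintype ι]

/-- The words of length `n`, as iterated products. -/
def Idx.{u} (ι : Type u) : ℕ → Type u
  | 0 => PUnit
  | n + 1 => ι × Idx ι n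

instance Idx.fintype : ∀ n, Fintype (Idx ι n)
  | 0 => inferInstanceAs (Fintype PUnit)
  | n + 1 => letI := Idx.fintype n; inferInstanceAs (Fintype (ι × Idx ι n))

/-- The product weight of a word. -/
def wtI (p : ι → ℝ) : (n : ℕ) → Idx ι n → ℝ
  | 0, _ => 1
  | n + 1, x => p x.1 * wtI p n x.2

/-- Append the letters of `x` to `w` until the stopping condition `P` is met. -/
noncomputable def endw (P : Set (List ι)) : (n : ℕ) → List ι → Idx ι n → List ι
  | 0, w, _ => w
  | n + 1, w, x => by
    classical
    exact if w ∈ P then w else endw P n (w ++ [x.1]) x.2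

lemma wtI_succ (p : ι → ℝ) (n : ℕ) (i : ι) (x : Idx ι n) :
    wtI p (n + 1) (i, x) = p i * wtI p n x := rfl

lemma endw_of_mem {P : Set (List ι)} {w : List ι} (h : w ∈ P) (n : ℕ) (x : Idx ι n) :
    endw P n w x = w := by
  cases n with
  | zero => rfl
  | succ n => simp [endw, h]

lemma endw_succ {P : Set (List ι)} {w : List ι} (h : w ∉ P) (n : ℕ) (i : ι) (x : Idx ι n) :
    endw P (n + 1) w (i, x) = endw P n (w ++ [i]) x := by
  simp [endw, h]

lemma sum_Idx_succ {β : Type*} [AddCommMonoid β] (n : ℕ) (g : Idx ι (n + 1) → β) :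
    ∑ x, g x = ∑ i, ∑ x : Idx ι n, g (i, x) :=
  Fintype.sum_prod_type (α₁ := ι) (α₂ := Idx ι n) g

variable {p : ι → ℝ}

lemma wtI_pos (hp : ∀ i, 0 < p i) (n : ℕ) (x : Idx ι n) : 0 < wtI p n x := by
  induction n with
  | zero => exact zero_lt_one
  | succ n ih => exact mul_pos (hp _) (ih _)

lemma wtI_sum (hp1 : ∑ i, p i = 1) (n : ℕ) : ∑ x, wtI p n x = 1 := by
  induction n with
  | zero => exact Fintype.sum_unique (ι := PUnit) _
  | succ n ih =>
    rw [sum_Idx_succ]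
    simp only [wtI, ← Finset.mul_sum, ih, mul_one, hp1]

/-- A family of measures that decomposes along children also decomposes along the stopped words
`endw P n w x`. -/
lemma measure_endw (hp : ∀ i, 0 < p i) (hp1 : ∑ i, p i = 1) (P : Set (List ι))
    {Φ : List ι → Measure ℂ}
    (hΦ : ∀ w, Φ w = ∑ i, ENNReal.ofReal (p i) • Φ (w ++ [i])) (n : ℕ) (w : List ι) :
    Φ w = ∑ x, ENNReal.ofReal (wtI p n x) • Φ (endw P n w x) := by
  induction n generalizing w with
  | zero =>
    have : ∑ x : Idx ι 0, ENNReal.ofReal (wtI p 0 x) • Φ (endw P 0 w x) = _ :=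
      Fintype.sum_unique (ι := PUnit) _
    rw [this]
    simp [wtI, endw]
  | succ n ih =>
    by_cases hw : w ∈ P
    · simp only [endw_of_mem hw]
      rw [← Finset.sum_smul, ← ENNReal.ofReal_sum_of_nonneg (fun x _ => (wtI_pos hp _ x).le),
        wtI_sum hp1]
      simp
    · rw [sum_Idx_succ, hΦ w]
      refine Finset.sum_congr rfl fun i _ => ?_
      rw [ih (w ++ [i]), Finset.smul_sum]
      refine Finset.sum_congr rfl fun x _ => ?_
      rw [endw_succ hw, smul_smul, wtI_succ, ENNReal.ofReal_mul (hp i).le]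

lemma endw_cases (P : Set (List ι)) (n : ℕ) (w : List ι) (x : Idx ι n) :
    endw P n w x ∈ P ∨ ∃ X : List ι, X.length = n ∧ endw P n w x = w ++ X := by
  induction n generalizing w with
  | zero => exact Or.inr ⟨[], rfl, by simp [endw]⟩
  | succ n ih =>
    by_cases hw : w ∈ P
    · left; rw [endw_of_mem hw]; exact hw
    · obtain ⟨i, x⟩ := x
      rw [endw_succ hw]
      rcases ih (w ++ [i]) x with h | ⟨X, hX, h⟩
      · exact Or.inl h
      · exact Or.inr ⟨i :: X, by simp [hX], by rw [h]; simp⟩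

lemma Sm_le_succ (hp : ∀ i, 0 ≤ p i) {φ : List ι → ℝ} (h : ∀ w, 0 ≤ φ w) (M : ℕ) (w : List ι) :
    Sm p M φ w ≤ Sm p (M + 1) φ w := by
  induction M generalizing w with
  | zero => exact Sm_nonneg hp h 1 w
  | succ M ih =>
    exact add_le_add le_rfl (Finset.sum_le_sum fun i _ => mul_le_mul_of_nonneg_left (ih _) (hp i))

lemma Sm_le_add (hp : ∀ i, 0 ≤ p i) {φ : List ι → ℝ} (h : ∀ w, 0 ≤ φ w) (M n : ℕ) (w : List ι) :
    Sm p M φ w ≤ Sm p (M + n) φ w := by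
  induction n with
  | zero => exact le_rfl
  | succ n ih => exact ih.trans (Sm_le_succ hp h _ w)

/-- Partial sums decrease along stopping times. -/
lemma Sm_endw (hp : ∀ i, 0 < p i) (hp1 : ∑ i, p i = 1) (P : Set (List ι)) {φ : List ι → ℝ}
    (h : ∀ w, 0 ≤ φ w) (M n : ℕ) (w : List ι) :
    ∑ x, wtI p n x * Sm p M φ (endw P n w x) ≤ Sm p (M + n) φ w := by
  have hp0 : ∀ i, 0 ≤ p i := fun i => (hp i).le
  induction n generalizing w with
  | zero =>
    have : ∑ x : Idx ι 0, wtI p 0 x * Sm p M φ (endw P 0 w x) = _ :=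
      Fintype.sum_unique (ι := PUnit) _
    rw [this]
    simp [wtI, endw]
  | succ n ih =>
    by_cases hw : w ∈ P
    · simp only [endw_of_mem hw]
      rw [← Finset.sum_mul, wtI_sum hp1, one_mul]
      exact Sm_le_add hp0 h M (n + 1) w
    · rw [sum_Idx_succ]
      have : Sm p (M + (n + 1)) φ w = φ w + ∑ i, p i * Sm p (M + n) φ (w ++ [i]) := rfl
      rw [this]
      refine le_trans ?_ (le_add_of_nonneg_left (h w))
      refine Finset.sum_le_sum fun i _ => ?_
      refine le_trans (le_of_eq ?_) (mul_le_mul_of_nonneg_left (ih (w ++ [i])) (hp0 i))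
      rw [Finset.mul_sum]
      exact Finset.sum_congr rfl fun x _ => by rw [endw_succ hw, wtI_succ]; ring

/-- Partial sums decrease strictly along stopping times which have not yet occurred. -/
lemma Sm_endw' (hp : ∀ i, 0 < p i) (hp1 : ∑ i, p i = 1) (P : Set (List ι)) {φ : List ι → ℝ}
    (h : ∀ w, 0 ≤ φ w) (M : ℕ) {n : ℕ} (hn : 0 < n) {w : List ι} (hw : w ∉ P) :
    φ w + ∑ x, wtI p n x * Sm p M φ (endw P n w x) ≤ Sm p (M + n) φ w := by
  have hp0 : ∀ i, 0 ≤ p i := fun i => (hp i).le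
  obtain ⟨n, rfl⟩ := Nat.exists_eq_succ_of_ne_zero hn.ne'
  rw [Nat.succ_eq_add_one, sum_Idx_succ]
  have : Sm p (M + (n + 1)) φ w = φ w + ∑ i, p i * Sm p (M + n) φ (w ++ [i]) := rfl
  rw [this]
  refine add_le_add le_rfl (Finset.sum_le_sum fun i _ => ?_)
  refine le_trans (le_of_eq ?_) (mul_le_mul_of_nonneg_left (Sm_endw hp hp1 P h M n (w ++ [i])) (hp0 i))
  rw [Finset.mul_sum]
  exact Finset.sum_congr rfl fun x _ => by rw [endw_succ hw, wtI_succ]; ring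

lemma le_Sm (hp : ∀ i, 0 ≤ p i) {φ : List ι → ℝ} (h : ∀ w, 0 ≤ φ w) {M : ℕ} (hM : 0 < M)
    (w : List ι) : φ w ≤ Sm p M φ w := by
  obtain ⟨n, rfl⟩ := Nat.exists_eq_succ_of_ne_zero hM.ne'
  exact le_add_of_nonneg_right (Finset.sum_nonneg fun i _ =>
    mul_nonneg (hp i) (Sm_nonneg hp h n _))

/-- The potential inequality for pairs of stopped words. -/
lemma Gs_endw {ι' : Type*} [Fintype ι'] {p' : ι' → ℝ} (hp : ∀ i, 0 < p i) (hp1 : ∑ i, p i = 1)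
    (hp' : ∀ i, 0 < p' i) (hp1' : ∑ i, p' i = 1) (P : Set (List ι)) (P' : Set (List ι'))
    {φ : List ι → List ι' → ℝ} (h : ∀ w v, 0 ≤ φ w v) (M : ℕ) {n : ℕ} (hn : 0 < n)
    (w : List ι) {v : List ι'} (hv : v ∉ P') :
    φ w v + ∑ x, ∑ y, wtI p n x * wtI p' n y * Gs p p' M φ (endw P n w x) (endw P' n v y) ≤
      Gs p p' (M + n) φ w v := by
  have hp0 : ∀ i, 0 ≤ p i := fun i => (hp i).le
  have hp0' : ∀ i, 0 ≤ p' i := fun i => (hp' i).le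
  set ψ : List ι → ℝ := fun W => ∑ y, wtI p' n y * Sm p' M (φ W) (endw P' n v y) with hψ
  have hψ0 : ∀ W, 0 ≤ ψ W := fun W => Finset.sum_nonneg fun y _ =>
    mul_nonneg (wtI_pos hp' n y).le (Sm_nonneg hp0' (h W) M _)
  have e : ∑ x, ∑ y, wtI p n x * wtI p' n y * Gs p p' M φ (endw P n w x) (endw P' n v y) =
      ∑ x, wtI p n x * Sm p M ψ (endw P n w x) := by
    refine Finset.sum_congr rfl fun x _ => ?_
    rw [hψ, Sm_sum, Finset.mul_sum]
    refine Finset.sum_congr rfl fun y _ => ?_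
    rw [Sm_const_mul]
    unfold Gs; ring
  rw [e]
  have h1 := Sm_endw hp hp1 P hψ0 M n w
  have h2 : ∀ W, φ W v + ψ W ≤ Sm p' (M + n) (φ W) v := fun W =>
    Sm_endw' hp' hp1' P' (h W) M hn hv
  have h3 := Sm_mono hp0 h2 (M + n) w
  rw [Sm_add] at h3
  have h4 := le_Sm hp0 (φ := fun W => φ W v) (fun W => h W v) (M := M + n) (by omega) w
  unfold Gs
  linarith

end Stop
end SC

/-! ### The tree of pairs of pieces -/

namespace SC

lemma endw_inv {ι : Type*} {P Q : Set (List ι)} (hQ : ∀ w, w ∉ P → ∀ i, w ++ [i] ∈ Q) (n : ℕ)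
    {w : List ι} (hw : w ∈ Q) (x : Idx ι n) : endw P n w x ∈ Q := by
  induction n generalizing w with
  | zero => exact hw
  | succ n ih =>
    by_cases h : w ∈ P
    · simpa [endw, h] using hw
    · obtain ⟨i, x⟩ := x
      have : endw P (n + 1) w (i, x) = endw P n (w ++ [i]) x := by simp [endw, h]
      rw [this]
      exact ih (hQ w h i) x

/-- Words whose contraction ratio is comparable to `r ^ k`. -/
def Sys.lvl {ι : Type*} [Fintype ι] (Y : Sys ι) (r : ℝ) (k : ℕ) : Set (List ι) :=
  {w | Y.cs * r ^ k < ‖Y.S w‖ ∧ ‖Y.S w‖ ≤ r ^ k}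

/-- The stopping set: words of contraction ratio at most `r ^ (k + 1)`. -/
def Sys.stp {ι : Type*} [Fintype ι] (Y : Sys ι) (r : ℝ) (k : ℕ) : Set (List ι) :=
  {w | ‖Y.S w‖ ≤ r ^ (k + 1)}

lemma Sys.nil_lvl {ι : Type*} [Fintype ι] (Y : Sys ι) (r : ℝ) : [] ∈ Y.lvl r 0 := by
  simp [lvl, Y.cs_lt]

lemma Sys.lvl_not_stp {ι : Type*} [Fintype ι] (Y : Sys ι) {r : ℝ} (h0 : 0 < r) (hr : r ≤ Y.cs)
    {k : ℕ} {w : List ι} (hw : w ∈ Y.lvl r k) : w ∉ Y.stp r k := by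
  intro h
  have h1 : ‖Y.S w‖ ≤ r ^ (k + 1) := h
  have h2 := hw.1
  rw [pow_succ] at h1
  nlinarith [pow_pos h0 k]

lemma Sys.endw_lvl {ι : Type*} [Fintype ι] (Y : Sys ι) {r : ℝ} (h0 : 0 < r) (hr : r ≤ Y.cs)
    {n : ℕ} (hn : Y.Cq * Y.ρ ^ n ≤ r) {k : ℕ} {w : List ι} (hw : w ∈ Y.lvl r k) (x : Idx ι n) :
    endw (Y.stp r k) n w x ∈ Y.lvl r (k + 1) := by
  refine ⟨?_, ?_⟩
  · have := endw_inv (P := Y.stp r k) (Q := {w | Y.cs * r ^ (k + 1) < ‖Y.S w‖}) ?_ n (w := w) ?_ x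
    · exact this
    · intro w hw i
      have h1 : r ^ (k + 1) < ‖Y.S w‖ := by simpa [stp] using hw
      exact (mul_lt_mul_of_pos_left h1 Y.cs_pos).trans_le (Y.S_snoc_ge w i)
    · have h1 : r ^ (k + 1) < ‖Y.S w‖ := by simpa [stp] using Y.lvl_not_stp h0 hr hw
      refine lt_of_le_of_lt ?_ h1
      exact mul_le_of_le_one_left (pow_pos h0 _).le Y.cs_lt.le
  · rcases endw_cases (Y.stp r k) n w x with h | ⟨X, hX, h⟩
    · exact h
    · rw [h]
      refine (Y.S_append_le w X).trans ?_
      rw [hX, pow_succ, mul_comm (r ^ k)]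
      exact mul_le_mul hn hw.2 (norm_nonneg _) h0.le

section Pair
variable {ι ι' : Type*} [Fintype ι] [Fintype ι'] (Y : Sys ι) (Z : Sys ι')

instance : IsProbabilityMeasure Y.μ := Y.prob

/-- The addition map `(x, y) ↦ F w x + G v y`. -/
noncomputable def sm (w : List ι) (v : List ι') (q : ℂ × ℂ) : ℂ := Y.F w q.1 + Z.F v q.2

lemma measurable_sm (w : List ι) (v : List ι') : Measurable (sm Y Z w v) :=
  ((Y.measurable_F w).comp measurable_fst).add ((Z.measurable_F v).comp measurable_snd)

/-- The convolution of the pieces of the two measures with codes `w` and `v`. -/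
noncomputable def pm (w : List ι) (v : List ι') : Measure ℂ := (Y.μ.prod Z.μ).map (sm Y Z w v)

instance (w : List ι) (v : List ι') : IsProbabilityMeasure (pm Y Z w v) :=
  Measure.isProbabilityMeasure_map (measurable_sm Y Z w v).aemeasurable

lemma pm_left (v : List ι') (w : List ι) :
    pm Y Z w v = ∑ i, ENNReal.ofReal (Y.p i) • pm Y Z (w ++ [i]) v := by
  ext A hA
  have key : ∀ w, pm Y Z w v A = ∫⁻ x, Z.μ {y | Y.F w x + Z.F v y ∈ A} ∂Y.μ := by
    intro w
    rw [pm, Measure.map_apply (measurable_sm _ _ _ _) hA,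
      Measure.prod_apply (measurable_sm _ _ _ _ hA)]
    rfl
  have hm : Measurable (fun z => Z.μ {y | z + Z.F v y ∈ A}) := by
    have h : Measurable (fun q : ℂ × ℂ => q.1 + Z.F v q.2) :=
      measurable_fst.add ((Z.measurable_F v).comp measurable_snd)
    exact measurable_measure_prodMk_left (h hA)
  rw [Measure.finsetSum_apply, key]
  conv_lhs => rw [Y.stat]
  rw [lintegral_finsetSum_measure]
  refine Finset.sum_congr rfl fun i _ => ?_
  rw [lintegral_smul_measure, lintegral_map (f := fun x => Z.μ {y | Y.F w x + Z.F v y ∈ A})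
    (hm.comp (Y.measurable_F w)) (Y.meas i),
    Measure.smul_apply, key]
  simp [Sys.F_append]

lemma pm_right (w : List ι) (v : List ι') :
    pm Y Z w v = ∑ i, ENNReal.ofReal (Z.p i) • pm Y Z w (v ++ [i]) := by
  ext A hA
  have key : ∀ v, pm Y Z w v A = ∫⁻ y, Y.μ {x | Y.F w x + Z.F v y ∈ A} ∂Z.μ := by
    intro v
    rw [pm, Measure.map_apply (measurable_sm _ _ _ _) hA,
      Measure.prod_apply_symm (measurable_sm _ _ _ _ hA)]
    rfl
  have hm : Measurable (fun z => Y.μ {x | Y.F w x + z ∈ A}) := by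
    have h : Measurable (fun q : ℂ × ℂ => Y.F w q.2 + q.1) :=
      ((Y.measurable_F w).comp measurable_snd).add measurable_fst
    exact measurable_measure_prodMk_left (h hA)
  rw [Measure.finsetSum_apply, key]
  conv_lhs => rw [Z.stat]
  rw [lintegral_finsetSum_measure]
  refine Finset.sum_congr rfl fun i _ => ?_
  rw [lintegral_smul_measure, lintegral_map (f := fun y => Y.μ {x | Y.F w x + Z.F v y ∈ A})
    (hm.comp (Z.measurable_F v)) (Z.meas i),
    Measure.smul_apply, key]
  simp [Sys.F_append]

/-- Admissible parameters for the tree of pairs: the ratio `r` between consecutive scales is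
so small that every passage to the next scale adds at least one letter to both words, and at most
`n` letters. -/
structure Adm (r : ℝ) (n : ℕ) : Prop where
  pos : 0 < r
  lt : r < 1
  leY : r ≤ Y.cs
  leZ : r ≤ Z.cs
  nY : Y.Cq * Y.ρ ^ n ≤ r
  nZ : Z.Cq * Z.ρ ^ n ≤ r

variable {Y Z} in
lemma Adm.n_pos {r : ℝ} {n : ℕ} (h : Adm Y Z r n) : 0 < n := by
  rcases Nat.eq_zero_or_pos n with rfl | h0
  · have := h.nY; have := h.lt; have := Y.Cq_ge; norm_num at *; linarith
  · exact h0

/-- Pairs of words of comparable contraction ratios. -/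
def Node (r : ℝ) : Type _ :=
  {s : ℕ × List ι × List ι' // s.2.1 ∈ Y.lvl r s.1 ∧ s.2.2 ∈ Z.lvl r s.1}

variable {Y Z} in
/-- The tree of pairs of pieces of two systems. -/
noncomputable def pairTree {r : ℝ} {n : ℕ} (h : Adm Y Z r n) :
    MTree (Node Y Z r) (Idx ι n × Idx ι' n) where
  lev s := s.1.1
  ch s j := ⟨(s.1.1 + 1, endw (Y.stp r s.1.1) n s.1.2.1 j.1, endw (Z.stp r s.1.1) n s.1.2.2 j.2),
    Y.endw_lvl h.pos h.leY h.nY s.2.1 j.1, Z.endw_lvl h.pos h.leZ h.nZ s.2.2 j.2⟩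
  lev_ch _ _ := rfl
  wt j := wtI Y.p n j.1 * wtI Z.p n j.2
  wt_pos j := mul_pos (wtI_pos Y.p_pos _ _) (wtI_pos Z.p_pos _ _)
  wt_sum := by
    rw [Fintype.sum_prod_type]
    simp only [← Finset.mul_sum, wtI_sum Z.p_sum, mul_one, wtI_sum Y.p_sum]
  θ s := pm Y Z s.1.2.1 s.1.2.2
  prob s := inferInstance
  decomp s := by
    rw [Fintype.sum_prod_type]
    rw [measure_endw Y.p_pos Y.p_sum (Y.stp r s.1.1) (Φ := fun w => pm Y Z w s.1.2.2)
      (pm_left Y Z s.1.2.2) n s.1.2.1]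
    refine Finset.sum_congr rfl fun x _ => ?_
    rw [measure_endw Z.p_pos Z.p_sum (Z.stp r s.1.1)
      (Φ := fun v => pm Y Z (endw (Y.stp r s.1.1) n s.1.2.1 x) v) (pm_right Y Z _) n s.1.2.2,
      Finset.smul_sum]
    refine Finset.sum_congr rfl fun y _ => ?_
    rw [smul_smul, ENNReal.ofReal_mul (wtI_pos Y.p_pos _ _).le]
  cen s := Y.F s.1.2.1 Y.z0 + Z.F s.1.2.2 Z.z0
  R := ⌈Y.Cq * Y.D + Z.Cq * Z.D⌉₊
  r := r
  r_pos := h.pos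
  r_lt := h.lt
  supp s := by
    rw [pm, Measure.map_apply (measurable_sm _ _ _ _) isClosed_closedBall.measurableSet.compl]
    have h1 : ∀ᵐ q ∂(Y.μ.prod Z.μ), q.1 ∈ Y.K ∧ q.2 ∈ Z.K := by
      have a1 : ∀ᵐ q ∂(Y.μ.prod Z.μ), q.1 ∈ Y.K :=
        Measure.quasiMeasurePreserving_fst.ae Y.ae_mem
      have a2 : ∀ᵐ q ∂(Y.μ.prod Z.μ), q.2 ∈ Z.K :=
        Measure.quasiMeasurePreserving_snd.ae Z.ae_mem
      exact a1.and a2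
    refine measure_mono_null ?_ (ae_iff.1 h1)
    intro q hq hq'
    refine hq ?_
    rw [mem_closedBall, dist_eq_norm, sm]
    have hk : 0 < r ^ s.1.1 := pow_pos h.pos _
    have b1 : ‖Y.F s.1.2.1 q.1 - Y.F s.1.2.1 Y.z0‖ ≤ Y.Cq * Y.D * r ^ s.1.1 := by
      refine (Y.F_upper _ hq'.1 Y.z0_mem).trans ?_
      have := Y.diam _ hq'.1 _ Y.z0_mem
      have := Y.Cq_pos
      have := s.2.1.2
      calc Y.Cq * ‖Y.S s.1.2.1‖ * ‖q.1 - Y.z0‖ ≤ Y.Cq * r ^ s.1.1 * Y.D := by gcongr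
        _ = _ := by ring
    have b2 : ‖Z.F s.1.2.2 q.2 - Z.F s.1.2.2 Z.z0‖ ≤ Z.Cq * Z.D * r ^ s.1.1 := by
      refine (Z.F_upper _ hq'.2 Z.z0_mem).trans ?_
      have := Z.diam _ hq'.2 _ Z.z0_mem
      have := Z.Cq_pos
      have := s.2.2.2
      calc Z.Cq * ‖Z.S s.1.2.2‖ * ‖q.2 - Z.z0‖ ≤ Z.Cq * r ^ s.1.1 * Z.D := by gcongr
        _ = _ := by ring
    have e : Y.F s.1.2.1 q.1 + Z.F s.1.2.2 q.2 - (Y.F s.1.2.1 Y.z0 + Z.F s.1.2.2 Z.z0) =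
      (Y.F s.1.2.1 q.1 - Y.F s.1.2.1 Y.z0) + (Z.F s.1.2.2 q.2 - Z.F s.1.2.2 Z.z0) := by ring
    rw [e]
    refine (norm_add_le _ _).trans ?_
    have := Nat.le_ceil (Y.Cq * Y.D + Z.Cq * Z.D)
    nlinarith

/-- The root of the tree of pairs. -/
def rootNode (r : ℝ) : Node Y Z r := ⟨(0, [], []), Y.nil_lvl r, Z.nil_lvl r⟩

lemma pm_root : pm Y Z [] [] = (Y.μ.prod Z.μ).map (fun q => q.1 + q.2) := rfl

end Pair

/-- The trivial system, with the point mass at the origin. -/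
noncomputable def trivSys : Sys Unit where
  p _ := 1
  p_pos _ := one_pos
  p_sum := by simp
  K := {0}
  conv := convex_singleton _
  z0 := 0
  z0_mem := rfl
  D := 1
  D_pos := one_pos
  diam := by rintro _ rfl _ rfl; simp
  f _ z := z / 2
  f' _ _ := 1 / 2
  meas _ := measurable_id.div_const _
  maps _ := by rintro _ rfl; simp
  deriv _ z _ := ((hasDerivAt_id z).div_const 2).hasDerivWithinAt
  C := 0
  C_nonneg := le_rfl
  α := 1
  α_pos := one_pos
  holder := by intros; simp
  κ := 1 / 2
  κ_pos := by norm_num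
  κ_le := by intros; norm_num
  ρ := 1 / 2
  ρ_pos := by norm_num
  ρ_lt := by norm_num
  le_ρ := by intros; norm_num
  c0 := 1
  c0_pos := one_pos
  bilip := by rintro _ _ rfl _ rfl; simp
  μ := Measure.dirac 0
  prob := inferInstance
  supp := by simp
  stat := by simp [Measure.map_dirac]

end SC

/-! ### The upper bound -/

namespace SC
open MTree

lemma mdim_le_two (θ : Measure ℂ) [IsProbabilityMeasure θ] : mdim θ ≤ 2 := by
  have h : mdim θ ≤ dimH (univ : Set ℂ) :=
    iInf_le_of_le univ (iInf_le_of_le MeasurableSet.univ (iInf_le_of_le (by simp) le_rfl))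
  refine h.trans (le_of_eq ?_)
  rw [Real.dimH_univ_eq_finrank ℂ, Complex.finrank_real_complex]
  norm_num

lemma mdim_eq_ofReal (θ : Measure ℂ) [IsProbabilityMeasure θ] :
    mdim θ = ENNReal.ofReal (mdim θ).toReal :=
  (ENNReal.ofReal_toReal ((mdim_le_two θ).trans_lt (by norm_num)).ne).symm

section Pair
variable {ι ι' : Type*} [Fintype ι] [Fintype ι'] (Y : Sys ι) (Z : Sys ι')

/-- Every small ratio `r` is admissible with a number of letters of order `log (1/r)`. -/
lemma exists_adm : ∃ Cn r1 : ℝ, 0 < Cn ∧ 0 < r1 ∧ r1 < 1 ∧ ∀ r, 0 < r → r ≤ r1 →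
    ∃ n, Adm Y Z r n ∧ (n : ℝ) ≤ Cn * Real.log (1 / r) := by
  set ρ := max Y.ρ Z.ρ with hρ
  set Q := max Y.Cq Z.Cq with hQ
  have hρ0 : 0 < ρ := lt_max_of_lt_left Y.ρ_pos
  have hρ1 : ρ < 1 := max_lt Y.ρ_lt Z.ρ_lt
  have hQ1 : 1 ≤ Q := le_max_of_le_left Y.Cq_ge
  have hL : 0 < Real.log (1 / ρ) := Real.log_pos (by rw [lt_div_iff₀ hρ0]; linarith)
  set L := Real.log (1 / ρ) with hLdef
  have hlQ : 0 ≤ Real.log Q := Real.log_nonneg hQ1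
  refine ⟨(Real.log Q + 1) / L + 1, min (min Y.cs Z.cs) (Real.exp (-1)), by positivity,
    lt_min (lt_min Y.cs_pos Z.cs_pos) (Real.exp_pos _), min_lt_of_right_lt (by simp), ?_⟩
  intro r hr hrr
  have hr1 : r ≤ Real.exp (-1) := hrr.trans (min_le_right _ _)
  have hrc : r ≤ min Y.cs Z.cs := hrr.trans (min_le_left _ _)
  have hlog : 1 ≤ Real.log (1 / r) := by
    rw [one_div, Real.log_inv]
    have := Real.log_le_log hr hr1
    rw [Real.log_exp] at this; linarith
  set x := (Real.log Q + Real.log (1 / r)) / L with hx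
  have hx0 : 0 ≤ x := by positivity
  have hn := Nat.le_ceil x
  have hρn : Q * ρ ^ ⌈x⌉₊ ≤ r := by
    have h1 : (Real.log Q + Real.log (1 / r)) ≤ ⌈x⌉₊ * L := by
      rw [hx, div_le_iff₀ hL] at hn; exact hn
    have h2 : Real.log (Q * ρ ^ ⌈x⌉₊) ≤ Real.log r := by
      rw [Real.log_mul (by positivity) (by positivity), Real.log_pow]
      rw [hLdef, one_div, Real.log_inv, one_div, Real.log_inv] at h1
      linarith
    exact (Real.log_le_log_iff (by positivity) hr).1 h2
  refine ⟨⌈x⌉₊, ⟨hr, hr1.trans_lt (by simp), hrc.trans (min_le_left _ _),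
    hrc.trans (min_le_right _ _), ?_, ?_⟩, ?_⟩
  · refine le_trans ?_ hρn
    exact mul_le_mul (le_max_left _ _) (pow_le_pow_left₀ Y.ρ_pos.le (le_max_left _ _) _)
      (pow_nonneg Y.ρ_pos.le _) (by linarith)
  · refine le_trans ?_ hρn
    exact mul_le_mul (le_max_right _ _) (pow_le_pow_left₀ Z.ρ_pos.le (le_max_right _ _) _)
      (pow_nonneg Z.ρ_pos.le _) (by linarith)
  · refine (Nat.ceil_lt_add_one hx0).le.trans ?_
    rw [hx]
    have : (Real.log Q + Real.log (1 / r)) / L ≤ (Real.log Q + 1) / L * Real.log (1 / r) := by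
      rw [div_mul_eq_mul_div]
      gcongr
      nlinarith
    nlinarith

end Pair

lemma ae_pair {ι ι' : Type*} [Fintype ι] [Fintype ι'] (Y : Sys ι) (Z : Sys ι') :
    ∀ᵐ q ∂(Y.μ.prod Z.μ), q.1 ∈ Y.K ∧ q.2 ∈ Z.K := by
  have a1 : ∀ᵐ q ∂(Y.μ.prod Z.μ), q.1 ∈ Y.K :=
    Measure.quasiMeasurePreserving_fst.ae Y.ae_mem
  have a2 : ∀ᵐ q ∂(Y.μ.prod Z.μ), q.2 ∈ Z.K :=
    Measure.quasiMeasurePreserving_snd.ae Z.ae_mem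
  exact a1.and a2

/-- The truncated entropy of a self-conformal measure at scale `ρ` is at most its dimension times
`log (1/ρ)`, up to an additive constant. -/
lemma single_upper {ι : Type*} [Fintype ι] (Y : Sys ι) : ∃ A ρ1 : ℝ, 0 < ρ1 ∧
    ∀ ρ, 0 < ρ → ρ ≤ ρ1 → ∀ B, 0 ≤ B →
      ∫ x, tlog B (Y.μ.real (closedBall x ρ)) ∂Y.μ ≤ (mdim Y.μ).toReal * Real.log (1 / ρ) + A := by
  obtain ⟨c1, hc1, hlow⟩ := Y.exists_F_lower
  obtain ⟨Cn, r1, -, hr1, hr1', hadm⟩ := exists_adm Y trivSys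
  set R := ⌈Y.Cq * Y.D + trivSys.Cq * trivSys.D⌉₊ with hR
  set C := (2 * (R : ℝ) + 2) / (c1 * Y.cs) with hC
  have hC0 : 0 < C := by have := Y.cs_pos; positivity
  set a := (mdim Y.μ).toReal with ha
  have ha0 : 0 ≤ a := ENNReal.toReal_nonneg
  refine ⟨a * Real.log C + Real.log ((2 * ((2 * R + 2 : ℕ) : ℝ) + 1) ^ 2), C * r1,
    by positivity, ?_⟩
  intro ρ hρ hρ1 B hB
  set r := ρ / C with hr
  have hr0 : 0 < r := div_pos hρ hC0
  have hrr1 : r ≤ r1 := by rw [hr, div_le_iff₀ hC0]; linarith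
  obtain ⟨n, had, -⟩ := hadm r hr0 hrr1
  set T := pairTree had with hT
  set I := ∫ x, tlog B (Y.μ.real (closedBall x ρ)) ∂Y.μ with hI
  have hent : ∀ s, I ≤ T.ent B s := by
    intro s
    have hkey : ∀ q : ℂ × ℂ, q.1 ∈ Y.K ∧ q.2 ∈ trivSys.K →
        tlog B (Y.μ.real (closedBall q.1 ρ)) ≤ tlog B ((pm Y trivSys s.1.2.1 s.1.2.2).real
          (closedBall (sm Y trivSys s.1.2.1 s.1.2.2 q) ((2 * R + 2) * r ^ (s.1.1 + 1)))) := by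
      intro q hq
      refine tlog_anti ?_
      have h0 : Y.μ.real (closedBall q.1 ρ) =
          (Y.μ.prod trivSys.μ).real (Prod.fst ⁻¹' (closedBall q.1 ρ)) := by
        have : (Y.μ.prod trivSys.μ).map Prod.fst = Y.μ := Measure.fst_prod
        conv_lhs => rw [← this]
        rw [measureReal_def, Measure.map_apply measurable_fst isClosed_closedBall.measurableSet]
        rfl
      rw [h0, measureReal_def, measureReal_def, pm,
        Measure.map_apply (measurable_sm _ _ _ _) isClosed_closedBall.measurableSet]
      refine ENNReal.toReal_mono (measure_ne_top _ _) (measure_mono_ae ?_)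
      filter_upwards [ae_pair Y trivSys] with q' hq' hmem
      have hmem' : ‖sm Y trivSys s.1.2.1 s.1.2.2 q' - sm Y trivSys s.1.2.1 s.1.2.2 q‖ ≤
        (2 * R + 2) * r ^ (s.1.1 + 1) := by rw [← dist_eq_norm]; exact hmem
      have h2 : q'.2 = q.2 := by
        have e1 : q'.2 = 0 := hq'.2
        have e2 : q.2 = 0 := hq.2
        rw [e1, e2]
      change dist q'.1 q.1 ≤ ρ
      rw [dist_eq_norm]
      have e : sm Y trivSys s.1.2.1 s.1.2.2 q' - sm Y trivSys s.1.2.1 s.1.2.2 q =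
        Y.F s.1.2.1 q'.1 - Y.F s.1.2.1 q.1 := by simp [sm, h2]
      rw [e] at hmem'
      have h3 := (hlow s.1.2.1 _ hq'.1 _ hq.1).trans hmem'
      have h4 := s.2.1.1
      have hk : 0 < r ^ s.1.1 := pow_pos hr0 _
      have h5 : c1 * Y.cs * r ^ s.1.1 * ‖q'.1 - q.1‖ ≤ (2 * R + 2) * r * r ^ s.1.1 := by
        calc _ = c1 * (Y.cs * r ^ s.1.1) * ‖q'.1 - q.1‖ := by ring
          _ ≤ c1 * ‖Y.S s.1.2.1‖ * ‖q'.1 - q.1‖ := by gcongr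
          _ ≤ _ := by rw [pow_succ] at h3; linarith
      have hcs := Y.cs_pos
      have h6 : c1 * Y.cs * ‖q'.1 - q.1‖ ≤ (2 * R + 2) * r := by
        refine le_of_mul_le_mul_right ?_ hk
        linarith
      have h7 : ρ = C * r := by rw [hr]; field_simp
      rw [h7, hC, div_mul_eq_mul_div, le_div_iff₀ (by positivity)]
      linarith
    have e1 : T.ent B s = ∫ q, tlog B ((pm Y trivSys s.1.2.1 s.1.2.2).real
          (closedBall (sm Y trivSys s.1.2.1 s.1.2.2 q) ((2 * R + 2) * r ^ (s.1.1 + 1))))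
          ∂(Y.μ.prod trivSys.μ) := by
      have := integral_map (μ := Y.μ.prod trivSys.μ) (measurable_sm Y trivSys s.1.2.1 s.1.2.2).aemeasurable
        (f := fun z => tlog B ((pm Y trivSys s.1.2.1 s.1.2.2).real
          (closedBall z ((2 * R + 2) * r ^ (s.1.1 + 1)))))
        ((measurable_tlog B).comp (measurable_ball_real _ _)).aestronglyMeasurable
      exact this
    have e2 : I = ∫ q, tlog B (Y.μ.real (closedBall q.1 ρ)) ∂(Y.μ.prod trivSys.μ) := by
      have h1 : (Y.μ.prod trivSys.μ).map Prod.fst = Y.μ := Measure.fst_prod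
      have := integral_map (μ := Y.μ.prod trivSys.μ) measurable_fst.aemeasurable
        (f := fun x => tlog B (Y.μ.real (closedBall x ρ)))
        ((measurable_tlog B).comp (measurable_ball_real _ _)).aestronglyMeasurable
      rw [h1] at this
      exact this
    rw [e1, e2]
    refine integral_mono_ae ?_ ?_ ?_
    · refine Integrable.of_bound ((measurable_tlog B).comp
        ((measurable_ball_real Y.μ ρ).comp measurable_fst)).aestronglyMeasurable
        B (Eventually.of_forall fun z => ?_)
      rw [Real.norm_of_nonneg (tlog_nonneg hB measureReal_le_one)]
      exact tlog_le
    · refine Integrable.of_bound ((measurable_tlog B).comp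
        ((measurable_ball_real _ _).comp (measurable_sm _ _ _ _))).aestronglyMeasurable
        B (Eventually.of_forall fun z => ?_)
      rw [Real.norm_of_nonneg (tlog_nonneg hB measureReal_le_one)]
      exact tlog_le
    · filter_upwards [ae_pair Y trivSys] with q hq using hkey q hq
  by_contra hcon
  push Not at hcon
  have hlog : 0 < Real.log (1 / r) := by
    refine Real.log_pos ?_
    rw [lt_div_iff₀ hr0]; linarith
  have hlr : Real.log (1 / r) = Real.log (1 / ρ) + Real.log C := by
    rw [hr, one_div_div, ← Real.log_mul (by positivity) hC0.ne']
    congr 1; ring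
  have hCc : T.Cc = (2 * ((2 * R + 2 : ℕ) : ℝ) + 1) ^ 2 := rfl
  rw [← hCc] at hcon
  have h1 : a < (I - Real.log T.Cc) / Real.log (1 / r) := by
    rw [lt_div_iff₀ hlog, hlr]; linarith
  obtain ⟨t, hat, ht⟩ := exists_between h1
  rw [lt_div_iff₀ hlog] at ht
  have h2 := T.le_mdim (h := I) (t := t) hB one_pos (fun s => by
      have : T.gain B 1 s = T.ent B s := by simp [gain]
      rw [this]; simpa using hent s) (ha0.trans_lt hat) ht (s := rootNode Y trivSys r) rfl
  have h3 : T.θ (rootNode Y trivSys r) = Y.μ := by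
    change pm Y trivSys [] [] = Y.μ
    rw [pm_root]
    have : (Y.μ.prod trivSys.μ).map (fun q => q.1 + q.2) = Y.μ ∗ Measure.dirac 0 := rfl
    rw [this, Measure.conv_dirac_zero]
  rw [h3, mdim_eq_ofReal Y.μ, ENNReal.ofReal_le_ofReal_iff ENNReal.toReal_nonneg] at h2
  exact absurd h2 (not_le.2 hat)

lemma tlog_mul {B x y : ℝ} (hB : 0 ≤ B) (hx : x ≤ 1) (hy : y ≤ 1) :
    tlog B (x * y) ≤ tlog B x + tlog B y := by
  unfold tlog
  have he := Real.exp_pos (-B)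
  have he1 : Real.exp (-B) ≤ 1 := Real.exp_le_one_iff.2 (by linarith)
  set e := Real.exp (-B)
  have h1 : 0 < max x e := lt_max_of_lt_right he
  have h2 : 0 < max y e := lt_max_of_lt_right he
  have : max x e * max y e ≤ max (x * y) e := by
    rcases le_total x e with h | h
    · rw [max_eq_right h]
      exact le_max_of_le_right (mul_le_of_le_one_right he.le (max_le hy he1))
    · rcases le_total y e with h' | h'
      · rw [max_eq_right h']
        exact le_max_of_le_right (mul_le_of_le_one_left he.le (max_le hx he1))
      · rw [max_eq_left h, max_eq_left h']
        exact le_max_left _ _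
  have := Real.log_le_log (mul_pos h1 h2) this
  rw [Real.log_mul h1.ne' h2.ne'] at this
  linarith

lemma tendsto_measure_of_ae {X : Type*} [MeasurableSpace X] (θ : Measure X) [IsProbabilityMeasure θ]
    {E : ℕ → Set X} (hE : ∀ n, MeasurableSet (E n)) (h : ∀ᵐ z ∂θ, ∀ᶠ n in atTop, z ∈ E n) :
    Tendsto (fun n => θ.real (E n)) atTop (𝓝 1) := by
  have h1 : Tendsto (fun n => ∫ z, (E n).indicator (fun _ => (1 : ℝ)) z ∂θ) atTop
      (𝓝 (∫ _, (1 : ℝ) ∂θ)) := by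
    refine tendsto_integral_of_dominated_convergence (fun _ => 1)
      (fun n => (measurable_const.indicator (hE n)).aestronglyMeasurable)
      (integrable_const _) (fun n => Eventually.of_forall fun z => ?_) ?_
    · by_cases hz : z ∈ E n <;> simp [hz]
    · filter_upwards [h] with z hz
      refine tendsto_const_nhds.congr' ?_
      filter_upwards [hz] with n hn
      simp [hn]
  simpa [integral_indicator_const, hE] using h1

/-- The easy inequality `dim (μ * ν) ≤ dim μ + dim ν` for self-conformal measures. -/
lemma upper_bound {ι ι' : Type*} [Fintype ι] [Fintype ι'] (Y : Sys ι) (Z : Sys ι') :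
    mdim (pm Y Z [] []) ≤ mdim Y.μ + mdim Z.μ := by
  set θ := pm Y Z [] [] with hθ
  obtain ⟨A, ρ1, hρ1, hA⟩ := single_upper Y
  obtain ⟨A', ρ1', hρ1', hA'⟩ := single_upper Z
  by_contra hcon
  push Not at hcon
  set a := (mdim Y.μ).toReal with ha
  set b := (mdim Z.μ).toReal with hb
  have ha0 : 0 ≤ a := ENNReal.toReal_nonneg
  have hb0 : 0 ≤ b := ENNReal.toReal_nonneg
  rw [mdim_eq_ofReal Y.μ, mdim_eq_ofReal Z.μ, ← ENNReal.ofReal_add ENNReal.toReal_nonneg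
    ENNReal.toReal_nonneg, ← ha, ← hb, mdim_eq_ofReal θ] at hcon
  have hcon' := (ENNReal.ofReal_lt_ofReal_iff_of_nonneg (by positivity)).1 hcon
  obtain ⟨s, hs1, hs2⟩ := exists_between hcon'
  have hs0 : 0 < s := lt_of_le_of_lt (by positivity) hs1
  have hs3 : ENNReal.ofReal s < mdim θ := by
    rw [mdim_eq_ofReal θ]
    exact (ENNReal.ofReal_lt_ofReal_iff_of_nonneg hs0.le).2 hs2
  set E : ℕ → Set ℂ := fun n => {z | θ (closedBall z ((1 / 2 : ℝ) ^ n)) ≤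
    ENNReal.ofReal (((1 / 2 : ℝ) ^ n) ^ s)} with hE
  have hEm : ∀ n, MeasurableSet (E n) := by
    intro n
    have hm : MeasurableSet {p : ℂ × ℂ | dist p.2 p.1 ≤ (1 / 2 : ℝ) ^ n} :=
      measurableSet_le (measurable_snd.dist measurable_fst) measurable_const
    exact measurableSet_le (measurable_measure_prodMk_left hm) measurable_const
  have hlim := tendsto_measure_of_ae θ hEm
    (ae_eventually_ball_le θ hs0.le hs3 (r := 1 / 2) (by norm_num) (by norm_num))
  have hl2 : 0 < Real.log 2 := Real.log_pos one_lt_two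
  have hmain : ∀ᶠ n : ℕ in atTop, θ.real (E n) * (s * n * Real.log 2) ≤
      (a + b) * (n * Real.log 2 + Real.log 2) + (A + A') := by
    have hev : ∀ᶠ n : ℕ in atTop, (1 / 2 : ℝ) ^ n < min ρ1 ρ1' :=
      (tendsto_pow_atTop_nhds_zero_of_lt_one (by norm_num) (by norm_num)).eventually
        (gt_mem_nhds (lt_min hρ1 hρ1'))
    filter_upwards [hev] with n hn
    set ρ := (1 / 2 : ℝ) ^ n / 2 with hρ
    have hp : (0 : ℝ) < (1 / 2) ^ n := by positivity
    have hρ0 : 0 < ρ := by positivity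
    have hρa : ρ ≤ ρ1 := by have := min_le_left ρ1 ρ1'; linarith
    have hρb : ρ ≤ ρ1' := by have := min_le_right ρ1 ρ1'; linarith
    set B := s * n * Real.log 2 with hB
    have hB0 : 0 ≤ B := by positivity
    have h1 := hA ρ hρ0 hρa B hB0
    have h2 := hA' ρ hρ0 hρb B hB0
    have hlogρ : Real.log (1 / ρ) = n * Real.log 2 + Real.log 2 := by
      rw [hρ]
      have : 1 / ((1 / 2 : ℝ) ^ n / 2) = 2 ^ n * 2 := by
        rw [one_div_pow]; field_simp
      rw [this, Real.log_mul (by positivity) (by norm_num), Real.log_pow]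
    have h3 : θ.real (E n) * B ≤ ∫ z, tlog B (θ.real (closedBall z ((1 / 2 : ℝ) ^ n))) ∂θ := by
      have : θ.real (E n) * B = ∫ z, (E n).indicator (fun _ => B) z ∂θ := by
        rw [integral_indicator_const _ (hEm n), smul_eq_mul]
      rw [this]
      refine integral_mono ((integrable_const B).indicator (hEm n))
        (integrable_tlog_ball θ θ hB0 _) fun z => ?_
      by_cases hz : z ∈ E n
      · simp only [hz, indicator_of_mem]
        have hz' : θ.real (closedBall z ((1 / 2 : ℝ) ^ n)) ≤ ((1 / 2 : ℝ) ^ n) ^ s :=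
          ENNReal.toReal_le_of_le_ofReal (by positivity) hz
        have e : ((1 / 2 : ℝ) ^ n) ^ s = Real.exp (-B) := by
          rw [Real.rpow_def_of_pos hp, Real.log_pow, one_div, Real.log_inv, hB]
          congr 1; ring
        rw [e] at hz'
        unfold tlog
        rw [max_eq_right hz', Real.log_exp, neg_neg]
      · simp only [hz, not_false_eq_true, indicator_of_notMem]
        exact tlog_nonneg hB0 measureReal_le_one
    have hInt : ∀ g : ℂ → ℝ, Measurable g → (∀ z, 0 ≤ g z ∧ g z ≤ 1) → ∀ u : ℂ × ℂ → ℂ,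
        Measurable u → Integrable (fun q => tlog B (g (u q))) (Y.μ.prod Z.μ) := by
      intro g hg hg1 u hu
      refine Integrable.of_bound ((measurable_tlog B).comp
        (hg.comp hu)).aestronglyMeasurable B (Eventually.of_forall fun z => ?_)
      rw [Real.norm_of_nonneg (tlog_nonneg hB0 (hg1 _).2)]
      exact tlog_le
    have i1 := hInt _ (measurable_ball_real Y.μ ρ)
      (fun z => ⟨measureReal_nonneg, measureReal_le_one⟩) Prod.fst measurable_fst
    have i2 := hInt _ (measurable_ball_real Z.μ ρ)
      (fun z => ⟨measureReal_nonneg, measureReal_le_one⟩) Prod.snd measurable_snd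
    have i3 := hInt _ (measurable_ball_real θ ((1 / 2 : ℝ) ^ n))
      (fun z => ⟨measureReal_nonneg, measureReal_le_one⟩) _ (measurable_sm Y Z [] [])
    have h4 : ∫ z, tlog B (θ.real (closedBall z ((1 / 2 : ℝ) ^ n))) ∂θ ≤
        ∫ q, (tlog B (Y.μ.real (closedBall q.1 ρ)) + tlog B (Z.μ.real (closedBall q.2 ρ)))
          ∂(Y.μ.prod Z.μ) := by
      have e0 : ∫ z, tlog B (θ.real (closedBall z ((1 / 2 : ℝ) ^ n))) ∂θ =
          ∫ q, tlog B (θ.real (closedBall (sm Y Z [] [] q) ((1 / 2 : ℝ) ^ n))) ∂(Y.μ.prod Z.μ) :=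
        integral_map (μ := Y.μ.prod Z.μ) (measurable_sm Y Z [] []).aemeasurable
          (f := fun z => tlog B (θ.real (closedBall z ((1 / 2 : ℝ) ^ n))))
          ((measurable_tlog B).comp (measurable_ball_real _ _)).aestronglyMeasurable
      rw [e0]
      refine integral_mono i3 (i1.add i2) fun q => ?_
      refine le_trans (tlog_anti ?_) (tlog_mul hB0
        measureReal_le_one measureReal_le_one)
      rw [← measureReal_prod_prod, hθ, pm, measureReal_def, measureReal_def,
        Measure.map_apply (measurable_sm _ _ _ _) isClosed_closedBall.measurableSet]
      refine ENNReal.toReal_mono (measure_ne_top _ _) (measure_mono ?_)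
      rintro q' ⟨hq1, hq2⟩
      rw [mem_closedBall, dist_eq_norm] at hq1 hq2
      rw [mem_preimage, mem_closedBall, dist_eq_norm]
      have e : sm Y Z [] [] q' - sm Y Z [] [] q = (q'.1 - q.1) + (q'.2 - q.2) := by
        simp [sm]; ring
      rw [e]
      refine (norm_add_le _ _).trans ?_
      rw [hρ] at hq1 hq2
      linarith
    rw [integral_add i1 i2] at h4
    have e1 : ∫ q, tlog B (Y.μ.real (closedBall q.1 ρ)) ∂(Y.μ.prod Z.μ) =
        ∫ x, tlog B (Y.μ.real (closedBall x ρ)) ∂Y.μ := by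
      rw [integral_fun_fst (f := fun x => tlog B (Y.μ.real (closedBall x ρ)))]; simp
    have e2 : ∫ q, tlog B (Z.μ.real (closedBall q.2 ρ)) ∂(Y.μ.prod Z.μ) =
        ∫ x, tlog B (Z.μ.real (closedBall x ρ)) ∂Z.μ := by
      rw [integral_fun_snd (f := fun x => tlog B (Z.μ.real (closedBall x ρ)))]; simp
    rw [e1, e2] at h4
    rw [hlogρ] at h1 h2
    linarith
  have hlim1 : Tendsto (fun n : ℕ => θ.real (E n) * (s * Real.log 2)) atTop
      (𝓝 (1 * (s * Real.log 2))) := hlim.mul_const _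
  have hlim2 : Tendsto (fun n : ℕ => (a + b) * (Real.log 2 + Real.log 2 / n) + (A + A') / n) atTop
      (𝓝 ((a + b) * (Real.log 2 + 0) + 0)) :=
    ((tendsto_const_nhds.add (tendsto_const_div_atTop_nhds_zero_nat _)).const_mul _).add
      (tendsto_const_div_atTop_nhds_zero_nat _)
  have := le_of_tendsto_of_tendsto hlim1 hlim2 (by
    filter_upwards [hmain, eventually_gt_atTop 0] with n hn hn0
    have hn0' : (0 : ℝ) < n := by exact_mod_cast hn0
    have e : (a + b) * (Real.log 2 + Real.log 2 / n) + (A + A') / n =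
      ((a + b) * (n * Real.log 2 + Real.log 2) + (A + A')) / n := by field_simp
    rw [e, le_div_iff₀ hn0']
    linarith)
  nlinarith
end SC

/-! ### Good points and the smoothed correlation -/

namespace SC
open MTree

/-- `G` consists of points around which balls satisfy a uniform power bound. -/
structure Good (μ : Measure ℂ) (G : Set ℂ) (Cg a : ℝ) : Prop where
  meas : MeasurableSet G
  bound : ∀ x ∈ G, ∀ R, 0 < R → μ.real (closedBall x R) ≤ Cg * R ^ a

/-- Below the dimension there are uniform power bounds on balls around points of a set of almost
full measure. -/
lemma exists_good (μ : Measure ℂ) [IsProbabilityMeasure μ] {a δ : ℝ} (ha : 0 ≤ a)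
    (h : a = 0 ∨ ENNReal.ofReal a < mdim μ) (hδ : 0 < δ) :
    ∃ G Cg, 0 < Cg ∧ Good μ G Cg a ∧ 1 - δ ≤ μ.real G := by
  rcases h with rfl | h
  · refine ⟨univ, 1, one_pos, ⟨MeasurableSet.univ, fun x _ R _ => ?_⟩, ?_⟩
    · simp
    · simp [hδ.le]
  set E : ℕ → Set ℂ := fun n => {z | μ (closedBall z ((1 / 2 : ℝ) ^ n)) ≤
    ENNReal.ofReal (((1 / 2 : ℝ) ^ n) ^ a)} with hE
  have hEm : ∀ n, MeasurableSet (E n) := by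
    intro n
    have hm : MeasurableSet {p : ℂ × ℂ | dist p.2 p.1 ≤ (1 / 2 : ℝ) ^ n} :=
      measurableSet_le (measurable_snd.dist measurable_fst) measurable_const
    exact measurableSet_le (measurable_measure_prodMk_left hm) measurable_const
  have hlim := tendsto_measure_of_ae μ (E := fun m => ⋂ n, ⋂ (_ : m ≤ n), E n)
    (fun m => MeasurableSet.iInter fun n => MeasurableSet.iInter fun _ => hEm n) (by
      filter_upwards [ae_eventually_ball_le μ ha h (r := 1 / 2) (by norm_num) (by norm_num)] with z hz
      obtain ⟨m, hm⟩ := eventually_atTop.1 hz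
      filter_upwards [eventually_ge_atTop m] with m' hm'
      simp only [mem_iInter]
      exact fun n hn => hm n (hm'.trans hn))
  obtain ⟨m, hm⟩ := (hlim.eventually (le_mem_nhds (show 1 - δ < 1 by linarith))).exists
  refine ⟨_, ((2 : ℝ) ^ (m + 1)) ^ a, by positivity, ⟨MeasurableSet.iInter fun n =>
    MeasurableSet.iInter fun _ => hEm n, fun x hx R hR => ?_⟩, hm⟩
  rw [← Real.mul_rpow (by positivity) hR.le]
  rcases le_or_gt ((1 / 2 : ℝ) ^ m) R with h1 | h1
  · refine measureReal_le_one.trans (Real.one_le_rpow ?_ ha)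
    calc (1 : ℝ) ≤ 2 := by norm_num
      _ = 2 ^ (m + 1) * (1 / 2 : ℝ) ^ m := by rw [pow_succ, one_div_pow]; field_simp
      _ ≤ _ := by gcongr
  · have hm1 : (1 / 2 : ℝ) ^ m ≤ 1 := pow_le_one₀ (by norm_num) (by norm_num)
    obtain ⟨n, hn1, hn2⟩ := exists_nat_pow_near_of_lt_one hR (by linarith : R ≤ 1)
      (by norm_num : (0 : ℝ) < 1 / 2) (by norm_num)
    have hmn : m ≤ n := by
      by_contra hlt
      have : n + 1 ≤ m := by omega
      have := pow_le_pow_of_le_one (by norm_num : (0 : ℝ) ≤ 1 / 2) (by norm_num) this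
      linarith
    simp only [mem_iInter] at hx
    have hx' : μ.real (closedBall x ((1 / 2 : ℝ) ^ n)) ≤ ((1 / 2 : ℝ) ^ n) ^ a :=
      ENNReal.toReal_le_of_le_ofReal (by positivity) (hx n hmn)
    refine (measureReal_mono (closedBall_subset_closedBall hn2)).trans (hx'.trans ?_)
    refine Real.rpow_le_rpow (by positivity) ?_ ha
    rw [pow_succ] at hn1
    have h2 : (1 : ℝ) ≤ 2 ^ m := one_le_pow₀ (by norm_num)
    rw [pow_succ]
    nlinarith

/-- Cut-off function: `1` on `[0,1]` and `0` on `[2,∞)`. -/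
noncomputable def chi (t : ℝ) : ℝ := max 0 (min 1 (2 - t))

lemma chi_nonneg (t : ℝ) : 0 ≤ chi t := le_max_left _ _
lemma chi_le (t : ℝ) : chi t ≤ 1 := max_le zero_le_one (min_le_left _ _)
lemma chi_one {t : ℝ} (h : t ≤ 1) : chi t = 1 := by
  unfold chi; rw [min_eq_left (by linarith)]; simp
lemma chi_zero {t : ℝ} (h : 2 ≤ t) : chi t = 0 := by
  unfold chi; exact max_eq_left (min_le_of_right_le (by linarith))
lemma clamp_lip (s t : ℝ) : |max 0 (min 1 s) - max 0 (min 1 t)| ≤ |s - t| := by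
  rcases abs_cases (s - t) with ⟨h, h'⟩ | ⟨h, h'⟩ <;> rw [h, abs_le] <;>
  rcases max_cases (0 : ℝ) (min 1 s) with ⟨h1, h1'⟩ | ⟨h1, h1'⟩ <;>
  rcases max_cases (0 : ℝ) (min 1 t) with ⟨h2, h2'⟩ | ⟨h2, h2'⟩ <;>
  rcases min_cases (1 : ℝ) s with ⟨h3, h3'⟩ | ⟨h3, h3'⟩ <;>
  rcases min_cases (1 : ℝ) t with ⟨h4, h4'⟩ | ⟨h4, h4'⟩ <;> constructor <;> linarith
lemma chi_lip (s t : ℝ) : |chi s - chi t| ≤ |s - t| := by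
  refine (clamp_lip _ _).trans (le_of_eq ?_)
  rw [show 2 - s - (2 - t) = -(s - t) by ring, abs_neg]
lemma measurable_chi : Measurable chi :=
  measurable_const.max (measurable_const.min (measurable_const.sub measurable_id))

/-- Cut-off function: `1` on `[c, 1/c]` and `0` off `[c/2, 2/c]`. -/
noncomputable def eta (c t : ℝ) : ℝ := max 0 (min 1 (min (2 * t / c - 1) (2 - c * t)))

lemma eta_nonneg (c t : ℝ) : 0 ≤ eta c t := le_max_left _ _
lemma eta_le (c t : ℝ) : eta c t ≤ 1 := max_le zero_le_one (min_le_left _ _)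
lemma eta_one {c t : ℝ} (hc : 0 < c) (h1 : c ≤ t) (h2 : t ≤ 1 / c) : eta c t = 1 := by
  unfold eta
  have h3 : 1 ≤ 2 * t / c - 1 := by
    have : 2 ≤ 2 * t / c := by rw [le_div_iff₀ hc]; linarith
    linarith
  have h4 : 1 ≤ 2 - c * t := by rw [le_div_iff₀ hc] at h2; linarith
  rw [min_eq_left (le_min h3 h4)]; simp
lemma eta_supp {c t : ℝ} (hc : 0 < c) (h : eta c t ≠ 0) : c / 2 ≤ t ∧ t ≤ 2 / c := by
  have h1 : 0 < min 1 (min (2 * t / c - 1) (2 - c * t)) := by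
    by_contra h2
    exact h (max_eq_left (not_lt.1 h2))
  have h2 := lt_min_iff.1 (lt_min_iff.1 h1).2
  constructor
  · have : 1 < 2 * t / c := by linarith
    rw [lt_div_iff₀ hc] at this; linarith
  · rw [le_div_iff₀ hc]; linarith
lemma eta_lip {c : ℝ} (hc : 0 < c) (hc1 : c ≤ 1) (s t : ℝ) :
    |eta c s - eta c t| ≤ 2 / c * |s - t| := by
  refine (clamp_lip _ _).trans ?_
  have h1 := abs_min_sub_min_le_max (2 * s / c - 1) (2 - c * s) (2 * t / c - 1) (2 - c * t)
  refine h1.trans (max_le ?_ ?_)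
  · rw [show 2 * s / c - 1 - (2 * t / c - 1) = 2 / c * (s - t) by ring, abs_mul,
      abs_of_pos (by positivity)]
  · rw [show 2 - c * s - (2 - c * t) = -c * (s - t) by ring, abs_mul, abs_neg, abs_of_pos hc]
    gcongr
    rw [le_div_iff₀ hc]; nlinarith

section Pair
variable {ι ι' : Type*} [Fintype ι] [Fintype ι'] (Y : Sys ι) (Z : Sys ι')

/-- The normalized increment of the addition map between two points of the product. -/
noncomputable def lin (L : ℂ) (W : List ι) (V : List ι') (u : (ℂ × ℂ) × (ℂ × ℂ)) : ℂ :=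
  L * Y.h W u.2.1 u.1.1 + Z.h V u.2.2 u.1.2

lemma measurable_lin (L : ℂ) (W : List ι) (V : List ι') : Measurable (lin Y Z L W V) := by
  have m1 : Measurable (fun u : (ℂ × ℂ) × (ℂ × ℂ) => (u.2.1, u.1.1)) := by fun_prop
  have m2 : Measurable (fun u : (ℂ × ℂ) × (ℂ × ℂ) => (u.2.2, u.1.2)) := by fun_prop
  exact (((Y.measurable_h W).comp m1).const_mul L).add ((Z.measurable_h V).comp m2)

/-- The points of the double product with all coordinates in the supporting sets. -/
def KK : Set ((ℂ × ℂ) × (ℂ × ℂ)) :=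
  {u | (u.1.1 ∈ Y.K ∧ u.1.2 ∈ Z.K) ∧ (u.2.1 ∈ Y.K ∧ u.2.2 ∈ Z.K)}

/-- The product of the pair measure with itself, the first copy being restricted to `G`. -/
noncomputable def mG (G : Set (ℂ × ℂ)) : Measure ((ℂ × ℂ) × (ℂ × ℂ)) :=
  ((Y.μ.prod Z.μ).restrict G).prod (Y.μ.prod Z.μ)

instance (G : Set (ℂ × ℂ)) : IsFiniteMeasure (mG Y Z G) := by unfold mG; infer_instance

lemma mG_le (G : Set (ℂ × ℂ)) : (mG Y Z G).real univ ≤ 1 := by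
  have : mG Y Z G univ ≤ 1 := by
    rw [mG, ← univ_prod_univ, Measure.prod_prod]
    simp only [measure_univ, mul_one, Measure.restrict_apply MeasurableSet.univ, univ_inter]
    exact prob_le_one
  exact ENNReal.toReal_le_of_le_ofReal zero_le_one (by simpa using this)

lemma ae_mG (G : Set (ℂ × ℂ)) : ∀ᵐ u ∂(mG Y Z G), u ∈ KK Y Z := by
  have h0 := ae_pair Y Z
  have h1 : ∀ᵐ u ∂(mG Y Z G), u.1.1 ∈ Y.K ∧ u.1.2 ∈ Z.K :=
    Measure.quasiMeasurePreserving_fst.ae (ae_restrict_of_ae h0)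
  have h2 : ∀ᵐ u ∂(mG Y Z G), u.2.1 ∈ Y.K ∧ u.2.2 ∈ Z.K :=
    Measure.quasiMeasurePreserving_snd.ae h0
  exact h1.and h2

variable {Y Z}

lemma integrable_bdd (G : Set (ℂ × ℂ)) {g : (ℂ × ℂ) × (ℂ × ℂ) → ℝ} (hg : Measurable g)
    {b : ℝ} (h : ∀ u, |g u| ≤ b) : Integrable g (mG Y Z G) :=
  Integrable.of_bound hg.aestronglyMeasurable b (Eventually.of_forall h)

lemma integral_le_of_ae {G : Set (ℂ × ℂ)} {g : (ℂ × ℂ) × (ℂ × ℂ) → ℝ} {b : ℝ} (hb : 0 ≤ b)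
    (hg : Integrable g (mG Y Z G)) (h : ∀ u ∈ KK Y Z, g u ≤ b) : ∫ u, g u ∂(mG Y Z G) ≤ b := by
  have h1 : ∫ u, g u ∂(mG Y Z G) ≤ ∫ _, b ∂(mG Y Z G) := by
    refine integral_mono_ae hg (integrable_const b) ?_
    filter_upwards [ae_mG Y Z G] with u hu using h u hu
  refine h1.trans ?_
  rw [integral_const, smul_eq_mul]
  have := mG_le Y Z G
  nlinarith

variable (Y Z)

/-- The integrand of the smoothed correlation. -/
noncomputable def fchi (ρ1 : ℝ) (L : ℂ) (W : List ι) (V : List ι') (u : (ℂ × ℂ) × (ℂ × ℂ)) : ℝ :=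
  chi (‖lin Y Z L W V u‖ / ρ1)

lemma measurable_fchi (ρ1 : ℝ) (L : ℂ) (W : List ι) (V : List ι') :
    Measurable (fchi Y Z ρ1 L W V) :=
  measurable_chi.comp ((measurable_lin Y Z L W V).norm.div_const _)

lemma integrable_fchi (G : Set (ℂ × ℂ)) (ρ1 : ℝ) (L : ℂ) (W : List ι) (V : List ι') :
    Integrable (fchi Y Z ρ1 L W V) (mG Y Z G) :=
  integrable_bdd G (measurable_fchi Y Z ρ1 L W V) (b := 1) fun u => by
    unfold fchi; rw [abs_of_nonneg (chi_nonneg _)]; exact chi_le _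

/-- Smoothed correlation at scale `ρ1` of the renormalized pair of pieces, with a cut-off of the
relative scale `‖L‖`. -/
noncomputable def xi (G : Set (ℂ × ℂ)) (c ρ1 : ℝ) (L : ℂ) (W : List ι) (V : List ι') : ℝ :=
  eta c ‖L‖ * ∫ u, fchi Y Z ρ1 L W V u ∂(mG Y Z G)

lemma fchi_int_nonneg (G : Set (ℂ × ℂ)) (ρ1 : ℝ) (L : ℂ) (W : List ι) (V : List ι') :
    0 ≤ ∫ u, fchi Y Z ρ1 L W V u ∂(mG Y Z G) := integral_nonneg fun _ => chi_nonneg _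

lemma fchi_int_le (G : Set (ℂ × ℂ)) (ρ1 : ℝ) (L : ℂ) (W : List ι) (V : List ι') :
    ∫ u, fchi Y Z ρ1 L W V u ∂(mG Y Z G) ≤ 1 :=
  integral_le_of_ae zero_le_one (integrable_fchi Y Z G ρ1 L W V) fun _ _ => chi_le _

lemma xi_nonneg (G : Set (ℂ × ℂ)) (c ρ1 : ℝ) (L : ℂ) (W : List ι) (V : List ι') :
    0 ≤ xi Y Z G c ρ1 L W V := mul_nonneg (eta_nonneg _ _) (fchi_int_nonneg Y Z G ρ1 L W V)

lemma xi_le (G : Set (ℂ × ℂ)) (c ρ1 : ℝ) (L : ℂ) (W : List ι) (V : List ι') :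
    xi Y Z G c ρ1 L W V ≤ 1 :=
  mul_le_one₀ (eta_le _ _) (fchi_int_nonneg Y Z G ρ1 L W V) (fchi_int_le Y Z G ρ1 L W V)

lemma fchi_int_diff {G : Set (ℂ × ℂ)} {ρ1 : ℝ} (hρ : 0 < ρ1) {L L' : ℂ} {W W' : List ι}
    {V V' : List ι'} {b : ℝ} (hb : 0 ≤ b)
    (h : ∀ u ∈ KK Y Z, ‖lin Y Z L W V u - lin Y Z L' W' V' u‖ ≤ b) :
    |∫ u, fchi Y Z ρ1 L W V u ∂(mG Y Z G) - ∫ u, fchi Y Z ρ1 L' W' V' u ∂(mG Y Z G)| ≤ b / ρ1 := by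
  rw [← integral_sub (integrable_fchi ..) (integrable_fchi ..)]
  refine abs_integral_le_integral_abs.trans ?_
  refine integral_le_of_ae (by positivity)
    ((integrable_fchi Y Z G ρ1 L W V).sub (integrable_fchi Y Z G ρ1 L' W' V')).abs fun u hu => ?_
  refine (chi_lip _ _).trans ?_
  rw [← sub_div, abs_div, abs_of_pos hρ]
  gcongr
  exact (abs_norm_sub_norm_le _ _).trans (h u hu)

/-- The correlation is multiplicatively Lipschitz in the ratio. -/
lemma xi_lip {c ρ1 : ℝ} (hc : 0 < c) (hc1 : c ≤ 1) (hρ : 0 < ρ1) (G : Set (ℂ × ℂ)) (L u : ℂ)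
    (W : List ι) (V : List ι') : |xi Y Z G c ρ1 (L * u) W V - xi Y Z G c ρ1 L W V| ≤
      (2 / c * (4 / c) + 4 / c * (Y.Cq * Y.D) / ρ1 + 2) * ‖u - 1‖ := by
  have hCD : 0 ≤ Y.Cq * Y.D := mul_nonneg Y.Cq_pos.le Y.D_pos.le
  have hu := norm_nonneg (u - 1)
  rcases le_or_gt ‖L‖ (4 / c) with h | h
  · have h1 : |eta c ‖L * u‖ - eta c ‖L‖| ≤ 2 / c * (4 / c) * ‖u - 1‖ := by
      refine (eta_lip hc hc1 _ _).trans ?_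
      rw [mul_assoc]
      gcongr
      refine (abs_norm_sub_norm_le _ _).trans ?_
      rw [show L * u - L = L * (u - 1) by ring, norm_mul]
      gcongr
    have h2 := fchi_int_diff Y Z (G := G) (L := L * u) (L' := L) (W := W) (W' := W) (V := V)
      (V' := V) hρ (b := 4 / c * (Y.Cq * Y.D) * ‖u - 1‖) (by positivity) (by
        intro q hq
        have e : lin Y Z (L * u) W V q - lin Y Z L W V q = L * Y.h W q.2.1 q.1.1 * (u - 1) := by
          unfold lin; ring
        rw [e, norm_mul, norm_mul]
        have := Y.h_bdd W hq.2.1 hq.1.1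
        gcongr)
    have i1 := fchi_int_nonneg Y Z G ρ1 L W V
    have i2 := fchi_int_le Y Z G ρ1 L W V
    unfold xi
    set A := ∫ u, fchi Y Z ρ1 L W V u ∂(mG Y Z G)
    set A' := ∫ q, fchi Y Z ρ1 (L * u) W V q ∂(mG Y Z G)
    set x := eta c ‖L * u‖ with hx
    set y := eta c ‖L‖
    have e : x * A' - y * A = x * (A' - A) + (x - y) * A := by ring
    rw [e]
    refine (abs_add_le _ _).trans ?_
    rw [abs_mul, abs_mul, abs_of_nonneg i1, abs_of_nonneg (eta_nonneg c ‖L * u‖)]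
    have h3 : x * |A' - A| ≤ 1 * (4 / c * (Y.Cq * Y.D) * ‖u - 1‖ / ρ1) :=
      mul_le_mul (eta_le _ _) h2 (abs_nonneg _) zero_le_one
    have h4 : |x - y| * A ≤ (2 / c * (4 / c) * ‖u - 1‖) * 1 :=
      mul_le_mul h1 i2 i1 (by positivity)
    have h5 : 4 / c * (Y.Cq * Y.D) * ‖u - 1‖ / ρ1 = 4 / c * (Y.Cq * Y.D) / ρ1 * ‖u - 1‖ := by ring
    rw [one_mul, h5] at h3
    nlinarith
  · have hc2 : 0 < 2 / c := by positivity
    have h1 : eta c ‖L‖ = 0 := by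
      by_contra hne
      have := (eta_supp hc hne).2
      have : 2 / c < 4 / c := by gcongr; norm_num
      linarith
    have e1 : xi Y Z G c ρ1 L W V = 0 := by unfold xi; rw [h1, zero_mul]
    rw [e1, sub_zero, abs_of_nonneg (xi_nonneg ..)]
    by_cases h2 : eta c ‖L * u‖ = 0
    · have : xi Y Z G c ρ1 (L * u) W V = 0 := by unfold xi; rw [h2, zero_mul]
      rw [this]; positivity
    · have h3 := (eta_supp hc h2).2
      rw [norm_mul] at h3
      have h4 : ‖u‖ ≤ 1 / 2 := by
        have : 4 / c = 2 * (2 / c) := by ring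
        by_contra h5
        push Not at h5
        nlinarith [norm_nonneg u]
      have h5 : 1 / 2 ≤ ‖u - 1‖ := by
        have := norm_sub_norm_le (1 : ℂ) u
        rw [norm_one, norm_sub_rev] at this
        linarith
      refine (xi_le ..).trans ?_
      have : 0 ≤ (2 / c * (4 / c) + 4 / c * (Y.Cq * Y.D) / ρ1) * ‖u - 1‖ := by positivity
      linarith

lemma xi_supp {c ρ1 : ℝ} (hc : 0 < c) (G : Set (ℂ × ℂ)) (L : ℂ)
    (W : List ι) (V : List ι') (h : xi Y Z G c ρ1 L W V ≠ 0) : c / 2 ≤ ‖L‖ ∧ ‖L‖ ≤ 2 / c :=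
  eta_supp hc (left_ne_zero_of_mul h)

lemma xi_diff {c ρ1 : ℝ} (hc : 0 < c) (hρ : 0 < ρ1) (G : Set (ℂ × ℂ)) (L : ℂ) {W W' : List ι}
    {V V' : List ι'} {b : ℝ} (hb : 0 ≤ b)
    (h : ‖L‖ ≤ 2 / c → ∀ u ∈ KK Y Z, ‖lin Y Z L W V u - lin Y Z L W' V' u‖ ≤ b) :
    |xi Y Z G c ρ1 L W V - xi Y Z G c ρ1 L W' V'| ≤ b / ρ1 := by
  by_cases h2 : eta c ‖L‖ = 0
  · unfold xi; rw [h2]; simp; positivity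
  · unfold xi
    rw [← mul_sub, abs_mul, abs_of_nonneg (eta_nonneg _ _)]
    have := fchi_int_diff Y Z (G := G) hρ hb (h (eta_supp hc h2).2)
    exact (mul_le_of_le_one_left (abs_nonneg _) (eta_le _ _)).trans this

/-- The correlation depends on the first word essentially through its last letters, since these
determine the normalized increments `h w` up to a small error. -/
lemma xi_W {c ρ1 : ℝ} (hc : 0 < c) (hρ : 0 < ρ1) (G : Set (ℂ × ℂ)) {ε : ℝ} (hε : 0 < ε) :
    ∃ k0, ∀ L W W' X V, k0 ≤ X.length →
      |xi Y Z G c ρ1 L (W ++ X) V - xi Y Z G c ρ1 L (W' ++ X) V| ≤ ε := by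
  set A := Y.Cd * Y.D ^ Y.α * (Y.Cq * Y.D) with hA
  have hA0 : 0 ≤ A := mul_nonneg (mul_nonneg Y.Cd_nonneg (Real.rpow_nonneg Y.D_pos.le _))
    (mul_nonneg Y.Cq_pos.le Y.D_pos.le)
  have ht : Tendsto (fun k : ℕ => 2 / c * (2 * A) / ρ1 * Y.ρα ^ k) atTop (𝓝 0) := by
    simpa using (tendsto_pow_atTop_nhds_zero_of_lt_one Y.ρα_pos.le Y.ρα_lt).const_mul
      (2 / c * (2 * A) / ρ1)
  obtain ⟨k0, hk0⟩ := (ht.eventually (ge_mem_nhds hε)).exists_forall_of_atTop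
  refine ⟨k0, fun L W W' X V hX => le_trans ?_ (hk0 _ hX)⟩
  have hp : 0 ≤ Y.ρα ^ X.length := pow_nonneg Y.ρα_pos.le _
  have := xi_diff Y Z hc hρ G L (W := W ++ X) (W' := W' ++ X) (V := V) (V' := V)
    (b := 2 / c * (2 * A) * Y.ρα ^ X.length) (by positivity) (by
      intro hL u hu
      have e : lin Y Z L (W ++ X) V u - lin Y Z L (W' ++ X) V u =
        L * ((Y.h (W ++ X) u.2.1 u.1.1 - Y.h X u.2.1 u.1.1) -
          (Y.h (W' ++ X) u.2.1 u.1.1 - Y.h X u.2.1 u.1.1)) := by unfold lin; ring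
      rw [e, norm_mul, mul_assoc]
      refine mul_le_mul hL ?_ (norm_nonneg _) (by positivity)
      refine (norm_sub_le _ _).trans ?_
      have h1 := Y.h_append W X hu.2.1 hu.1.1
      have h2 := Y.h_append W' X hu.2.1 hu.1.1
      linarith)
  refine this.trans (le_of_eq ?_)
  ring

/-- The analogue of `xi_W` for the second word. -/
lemma xi_V {c ρ1 : ℝ} (hc : 0 < c) (hρ : 0 < ρ1) (G : Set (ℂ × ℂ)) {ε : ℝ} (hε : 0 < ε) :
    ∃ k0, ∀ L W V V' X, k0 ≤ X.length →
      |xi Y Z G c ρ1 L W (V ++ X) - xi Y Z G c ρ1 L W (V' ++ X)| ≤ ε := by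
  set A := Z.Cd * Z.D ^ Z.α * (Z.Cq * Z.D) with hA
  have hA0 : 0 ≤ A := mul_nonneg (mul_nonneg Z.Cd_nonneg (Real.rpow_nonneg Z.D_pos.le _))
    (mul_nonneg Z.Cq_pos.le Z.D_pos.le)
  have ht : Tendsto (fun k : ℕ => 2 * A / ρ1 * Z.ρα ^ k) atTop (𝓝 0) := by
    simpa using (tendsto_pow_atTop_nhds_zero_of_lt_one Z.ρα_pos.le Z.ρα_lt).const_mul
      (2 * A / ρ1)
  obtain ⟨k0, hk0⟩ := (ht.eventually (ge_mem_nhds hε)).exists_forall_of_atTop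
  refine ⟨k0, fun L W V V' X hX => le_trans ?_ (hk0 _ hX)⟩
  have hp : 0 ≤ Z.ρα ^ X.length := pow_nonneg Z.ρα_pos.le _
  have := xi_diff Y Z hc hρ G L (W := W) (W' := W) (V := V ++ X) (V' := V' ++ X)
    (b := 2 * A * Z.ρα ^ X.length) (by positivity) (by
      intro hL u hu
      have e : lin Y Z L W (V ++ X) u - lin Y Z L W (V' ++ X) u =
        (Z.h (V ++ X) u.2.2 u.1.2 - Z.h X u.2.2 u.1.2) -
          (Z.h (V' ++ X) u.2.2 u.1.2 - Z.h X u.2.2 u.1.2) := by unfold lin; ring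
      rw [e]
      refine (norm_sub_le _ _).trans ?_
      have h1 := Z.h_append V X hu.2.2 hu.1.2
      have h2 := Z.h_append V' X hu.2.2 hu.1.2
      linarith)
  refine this.trans (le_of_eq ?_)
  ring

end Pair
end SC

/-! ### Averaging the correlation over multipliers -/

namespace SC
open MTree

lemma card_near {n : ℕ} (s : Finset (Fin n)) {t l : ℝ} (hl : 0 ≤ l)
    (h : ∀ j ∈ s, |(j : ℝ) - t| ≤ l) : (s.card : ℝ) ≤ 2 * l + 1 := by
  have h1 : s.card ≤ (Finset.Icc ⌈t - l⌉ ⌊t + l⌋).card := by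
    refine Finset.card_le_card_of_injOn (fun j => ((j : ℕ) : ℤ)) (fun j hj => ?_) ?_
    · have := abs_le.1 (h j hj)
      simp only [Finset.coe_Icc, mem_Icc]
      constructor
      · rw [Int.ceil_le]; push_cast; linarith
      · rw [Int.le_floor]; push_cast; linarith
    · intro i _ j _ hij
      simp only [Nat.cast_inj] at hij
      exact Fin.ext hij
  rw [Int.card_Icc] at h1
  have h2 : (s.card : ℝ) ≤ ((⌊t + l⌋ + 1 - ⌈t - l⌉).toNat : ℝ) := by exact_mod_cast h1
  refine h2.trans ?_
  rcases le_total (⌊t + l⌋ + 1 - ⌈t - l⌉) 0 with h3 | h3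
  · rw [Int.toNat_of_nonpos h3]; simp; linarith
  · have h4 : ((⌊t + l⌋ + 1 - ⌈t - l⌉).toNat : ℝ) = ((⌊t + l⌋ + 1 - ⌈t - l⌉ : ℤ) : ℝ) := by
      exact_mod_cast congrArg (Int.cast (R := ℝ)) (Int.toNat_of_nonneg h3)
    rw [h4]; push_cast
    have := Int.floor_le (t + l)
    have := Int.le_ceil (t - l)
    linarith

/-- The grid of multipliers `1 + (j + k i) / n` used for averaging. -/
noncomputable def gr (n : ℕ) (s : Fin n × Fin n) : ℂ := 1 + ⟨(s.1 : ℝ) / n, (s.2 : ℝ) / n⟩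

lemma gr_coord {n : ℕ} (j : Fin n) : 0 ≤ (j : ℝ) / n ∧ (j : ℝ) / n ≤ 1 := by
  refine ⟨by positivity, div_le_one_of_le₀ ?_ (by positivity)⟩
  exact_mod_cast j.2.le

lemma gr_ge (n : ℕ) (s : Fin n × Fin n) : 1 ≤ ‖gr n s‖ := by
  refine le_trans ?_ (Complex.re_le_norm _)
  have := (gr_coord s.1).1
  simp [gr, this]

lemma gr_le (n : ℕ) (s : Fin n × Fin n) : ‖gr n s‖ ≤ 3 := by
  refine (Complex.norm_le_abs_re_add_abs_im _).trans ?_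
  have h1 := gr_coord s.1
  have h2 := gr_coord s.2
  have e1 : (gr n s).re = 1 + (s.1 : ℝ) / n := by simp [gr]
  have e2 : (gr n s).im = (s.2 : ℝ) / n := by simp [gr]
  rw [e1, e2, abs_of_nonneg (by linarith [h1.1]), abs_of_nonneg h2.1]
  linarith [h1.2, h2.2]

/-- Few grid points put `gr s * a + b` in a small disc. -/
lemma gr_count {n : ℕ} (hn : 0 < n) {a b : ℂ} (ha : a ≠ 0) {ϱ : ℝ} (hϱ : 0 ≤ ϱ) :
    ((Finset.univ.filter fun s : Fin n × Fin n => ‖gr n s * a + b‖ ≤ ϱ).card : ℝ) ≤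
      (2 * (ϱ / ‖a‖ * n) + 1) ^ 2 := by
  classical
  have hn' : (0 : ℝ) < n := by exact_mod_cast hn
  have ha' : 0 < ‖a‖ := norm_pos_iff.2 ha
  set A := Finset.univ.filter fun j : Fin n => |(j : ℝ) - (-(1 + (b / a).re) * n)| ≤ ϱ / ‖a‖ * n
  set B := Finset.univ.filter fun j : Fin n => |(j : ℝ) - (-((b / a).im) * n)| ≤ ϱ / ‖a‖ * n
  have hl : 0 ≤ ϱ / ‖a‖ * n := by positivity
  have hA : (A.card : ℝ) ≤ 2 * (ϱ / ‖a‖ * n) + 1 :=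
    card_near A hl fun j hj => (Finset.mem_filter.1 hj).2
  have hB : (B.card : ℝ) ≤ 2 * (ϱ / ‖a‖ * n) + 1 :=
    card_near B hl fun j hj => (Finset.mem_filter.1 hj).2
  have hsub : (Finset.univ.filter fun s : Fin n × Fin n => ‖gr n s * a + b‖ ≤ ϱ) ⊆ A ×ˢ B := by
    intro s hs
    have hs := (Finset.mem_filter.1 hs).2
    have h1 : ‖gr n s + b / a‖ ≤ ϱ / ‖a‖ := by
      rw [le_div_iff₀ ha', ← norm_mul, add_mul, div_mul_cancel₀ _ ha]; exact hs
    rw [Finset.mem_product]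
    constructor
    · refine Finset.mem_filter.2 ⟨Finset.mem_univ _, ?_⟩
      have h2 := (Complex.abs_re_le_norm _).trans h1
      have e : ((s.1 : ℕ) : ℝ) - (-(1 + (b / a).re) * n) = (gr n s + b / a).re * n := by
        simp [gr]; field_simp; ring
      rw [e, abs_mul, abs_of_pos hn']
      gcongr
    · refine Finset.mem_filter.2 ⟨Finset.mem_univ _, ?_⟩
      have h2 := (Complex.abs_im_le_norm _).trans h1
      have e : ((s.2 : ℕ) : ℝ) - (-((b / a).im) * n) = (gr n s + b / a).im * n := by
        simp [gr]; field_simp; 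
      rw [e, abs_mul, abs_of_pos hn']
      gcongr
  have h3 : ((Finset.univ.filter fun s : Fin n × Fin n => ‖gr n s * a + b‖ ≤ ϱ).card : ℝ) ≤
      A.card * B.card := by exact_mod_cast (Finset.card_le_card hsub).trans (Finset.card_product _ _).le
  refine h3.trans ?_
  rw [sq]
  exact mul_le_mul hA hB (by positivity) (by positivity)

section Pair
variable {ι ι' : Type*} [Fintype ι] [Fintype ι'] (Y : Sys ι) (Z : Sys ι')

/-- Pairs of pairs which are close at scale `2 ^ j * ρ1` in both coordinates. -/
def Ecl (C ρ1 : ℝ) (j : ℕ) : Set ((ℂ × ℂ) × (ℂ × ℂ)) :=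
  {u | dist u.2.1 u.1.1 ≤ 2 ^ j * ρ1 ∧ dist u.2.2 u.1.2 ≤ C * (2 ^ j * ρ1)}

lemma measurable_Ecl (C ρ1 : ℝ) (j : ℕ) : MeasurableSet (Ecl C ρ1 j) := by
  have m1 : Measurable fun u : (ℂ × ℂ) × (ℂ × ℂ) => dist u.2.1 u.1.1 := by fun_prop
  have m2 : Measurable fun u : (ℂ × ℂ) × (ℂ × ℂ) => dist u.2.2 u.1.2 := by fun_prop
  exact (measurableSet_le m1 measurable_const).inter (measurableSet_le m2 measurable_const)

/-- Pairs of points of the product, the first one being good, are close to each other with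
probability at most the product of the two power bounds. -/
lemma mG_Ecl {G1 G2 : Set ℂ} {Cg Cg' a b C ρ1 : ℝ} (hG1 : Good Y.μ G1 Cg a)
    (hG2 : Good Z.μ G2 Cg' b) (hCg : 0 < Cg) (hCg' : 0 < Cg') (hC : 0 < C) (hρ : 0 < ρ1) (j : ℕ) :
    (mG Y Z (G1 ×ˢ G2)).real (Ecl C ρ1 j) ≤
      Cg * (2 ^ j * ρ1) ^ a * (Cg' * (C * (2 ^ j * ρ1)) ^ b) := by
  have hR : 0 < 2 ^ j * ρ1 := by positivity
  set Bd := Cg * (2 ^ j * ρ1) ^ a * (Cg' * (C * (2 ^ j * ρ1)) ^ b)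
  have hBd : 0 ≤ Bd := by positivity
  refine ENNReal.toReal_le_of_le_ofReal hBd ?_
  unfold mG
  rw [Measure.prod_apply (measurable_Ecl ..)]
  have h1 : ∀ q ∈ G1 ×ˢ G2, (Y.μ.prod Z.μ) (Prod.mk q ⁻¹' Ecl C ρ1 j) ≤ ENNReal.ofReal Bd := by
    intro q hq
    have e : Prod.mk q ⁻¹' Ecl C ρ1 j =
      closedBall q.1 (2 ^ j * ρ1) ×ˢ closedBall q.2 (C * (2 ^ j * ρ1)) := by ext; rfl
    rw [e, Measure.prod_prod, ← ofReal_measureReal, ← ofReal_measureReal,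
      ← ENNReal.ofReal_mul measureReal_nonneg]
    refine ENNReal.ofReal_le_ofReal ?_
    exact mul_le_mul (hG1.bound _ hq.1 _ hR) (hG2.bound _ hq.2 _ (by positivity))
      measureReal_nonneg (by positivity)
  calc ∫⁻ q, (Y.μ.prod Z.μ) (Prod.mk q ⁻¹' Ecl C ρ1 j) ∂((Y.μ.prod Z.μ).restrict (G1 ×ˢ G2))
      ≤ ∫⁻ _, ENNReal.ofReal Bd ∂((Y.μ.prod Z.μ).restrict (G1 ×ˢ G2)) :=
        setLIntegral_mono measurable_const h1
    _ ≤ ENNReal.ofReal Bd := by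
        rw [lintegral_const, Measure.restrict_apply MeasurableSet.univ]
        exact mul_le_of_le_one_right' prob_le_one

/-- Number of grid points for which the integrand is non-zero, bounded by a dyadic sum. -/
lemma pointwise_count {c : ℝ} (hc : 0 < c) : ∃ C K : ℝ, 0 < C ∧ 0 < K ∧
    ∀ (ρ1 : ℝ) (n J : ℕ), 0 < ρ1 → 1 ≤ ρ1 * n → Y.D ≤ 2 ^ J * ρ1 → ∀ L W V, ∀ u ∈ KK Y Z,
      ∑ s, eta c ‖gr n s * L‖ * fchi Y Z ρ1 (gr n s * L) W V u ≤
        n ^ 2 * ∑ j ∈ Finset.range (J + 1), K * (1 / 4) ^ j * (Ecl C ρ1 j).indicator (fun _ => 1) u := by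
  classical
  obtain ⟨c1, hc1p, hlow⟩ := Y.exists_F_lower
  obtain ⟨c2, hc2p, hlow2⟩ := Z.exists_F_lower
  have hYC := Y.Cq_pos
  have hYD := Y.D_pos
  set A := 2 / c * (Y.Cq * Y.D) with hA
  have hA0 : 0 < A := by positivity
  set K := 1 + ((8 * (1 / A) * A + A) * (24 / (c * c1))) ^ 2 with hK
  set C := (3 * (2 / c * Y.Cq) + 2) / c2 with hCdef
  refine ⟨C, K, by positivity, by positivity, ?_⟩
  intro ρ1 n J hρ hn hJ L W V u hu
  have hn0 : 0 < n := by
    rcases Nat.eq_zero_or_pos n with h | h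
    · subst h; norm_num at hn
    · exact h
  have hn' : (0 : ℝ) < n := by exact_mod_cast hn0
  set a := L * Y.h W u.2.1 u.1.1 with ha
  set b := Z.h V u.2.2 u.1.2 with hb
  set d := dist u.2.1 u.1.1 with hd
  have hd0 : 0 ≤ d := dist_nonneg
  have hdD : d ≤ Y.D := by rw [hd, dist_eq_norm]; exact Y.diam _ hu.2.1 _ hu.1.1
  have hind : ∀ j, 0 ≤ (Ecl C ρ1 j).indicator (fun _ => (1 : ℝ)) u :=
    fun j => indicator_nonneg (fun _ _ => zero_le_one) _
  have hR0 : 0 ≤ (n : ℝ) ^ 2 * ∑ j ∈ Finset.range (J + 1),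
      K * (1 / 4) ^ j * (Ecl C ρ1 j).indicator (fun _ => 1) u :=
    mul_nonneg (by positivity) (Finset.sum_nonneg fun j _ => mul_nonneg (by positivity) (hind j))
  -- support condition of a single term
  have hterm : ∀ s, eta c ‖gr n s * L‖ * fchi Y Z ρ1 (gr n s * L) W V u ≠ 0 →
      (c / 6 ≤ ‖L‖ ∧ ‖L‖ ≤ 2 / c) ∧ ‖gr n s * a + b‖ ≤ 2 * ρ1 := by
    intro s hs
    have h1 := eta_supp hc (left_ne_zero_of_mul hs)
    have h2 := right_ne_zero_of_mul hs
    rw [norm_mul] at h1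
    have g1 := gr_ge n s
    have g2 := gr_le n s
    have hL := norm_nonneg L
    refine ⟨⟨by nlinarith, by nlinarith⟩, ?_⟩
    by_contra h3
    push Not at h3
    apply h2
    unfold fchi
    apply chi_zero
    rw [le_div_iff₀ hρ]
    have e : lin Y Z (gr n s * L) W V u = gr n s * a + b := by rw [ha]; unfold lin; ring
    rw [e]; exact h3.le
  set T := Finset.univ.filter fun s : Fin n × Fin n => ‖gr n s * a + b‖ ≤ 2 * ρ1 with hT
  by_cases hz : ∀ s, eta c ‖gr n s * L‖ * fchi Y Z ρ1 (gr n s * L) W V u = 0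
  · rw [Finset.sum_eq_zero fun s _ => hz s]; exact hR0
  push Not at hz
  obtain ⟨s0, hs0⟩ := hz
  obtain ⟨⟨hL1, hL2⟩, hs0'⟩ := hterm s0 hs0
  have hsum : ∑ s, eta c ‖gr n s * L‖ * fchi Y Z ρ1 (gr n s * L) W V u ≤ T.card := by
    have h1 : ∀ s ∈ Finset.univ, eta c ‖gr n s * L‖ * fchi Y Z ρ1 (gr n s * L) W V u ≤
        if ‖gr n s * a + b‖ ≤ 2 * ρ1 then (1 : ℝ) else 0 := by
      intro s _
      split_ifs with h
      · exact mul_le_one₀ (eta_le _ _) (chi_nonneg _) (chi_le _)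
      · by_contra h'
        exact h (hterm s (fun h0 => h' h0.le)).2
    refine (Finset.sum_le_sum h1).trans (le_of_eq ?_)
    rw [Finset.sum_boole]
  have hTn : (T.card : ℝ) ≤ n ^ 2 := by
    have : T.card ≤ n * n := by
      refine (Finset.card_le_univ T).trans ?_
      simp
    rw [sq]; exact_mod_cast this
  -- size of a and b
  have hha : ‖a‖ ≤ 2 / c * Y.Cq * d := by
    rw [ha, norm_mul, mul_assoc]
    have := Y.h_le W hu.2.1 hu.1.1
    rw [← dist_eq_norm] at this
    exact mul_le_mul hL2 this (norm_nonneg _) (by positivity)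
  have hhb : ‖b‖ ≤ 3 * ‖a‖ + 2 * ρ1 := by
    have h1 : ‖b‖ ≤ ‖gr n s0 * a + b‖ + ‖gr n s0 * a‖ := by
      have := norm_sub_le (gr n s0 * a + b) (gr n s0 * a)
      simpa using this
    rw [norm_mul] at h1
    have := gr_le n s0
    have := mul_le_mul_of_nonneg_right this (norm_nonneg a)
    linarith
  have hb2 : c2 * dist u.2.2 u.1.2 ≤ ‖b‖ := by
    rw [hb]; unfold Sys.h
    rw [norm_div, le_div_iff₀ (Z.S_pos V), dist_eq_norm]
    have := hlow2 V _ hu.2.2 _ hu.1.2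
    linarith
  have ha2 : c / 6 * (c1 * d) ≤ ‖a‖ := by
    rw [ha, norm_mul]
    refine mul_le_mul hL1 ?_ (by positivity) (norm_nonneg _)
    unfold Sys.h
    rw [norm_div, le_div_iff₀ (Y.S_pos W), hd, dist_eq_norm]
    have := hlow W _ hu.2.1 _ hu.1.1
    linarith
  -- it suffices to find one good index
  suffices h : ∃ j ∈ Finset.range (J + 1), d ≤ 2 ^ j * ρ1 ∧ (T.card : ℝ) ≤ n ^ 2 * (K * (1 / 4) ^ j) by
    obtain ⟨j, hj, hj1, hj2⟩ := h
    have hmem : u ∈ Ecl C ρ1 j := by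
      refine ⟨hj1, ?_⟩
      have h2j : (1 : ℝ) ≤ 2 ^ j := one_le_pow₀ (by norm_num)
      have h3 : c2 * dist u.2.2 u.1.2 ≤ (3 * (2 / c * Y.Cq) + 2) * (2 ^ j * ρ1) := by
        have h4 : 2 / c * Y.Cq * d ≤ 2 / c * Y.Cq * (2 ^ j * ρ1) := by gcongr
        have h5 : ρ1 ≤ 2 ^ j * ρ1 := le_mul_of_one_le_left hρ.le h2j
        linarith
      rw [hCdef, div_mul_eq_mul_div, le_div_iff₀ hc2p]
      linarith
    refine hsum.trans (hj2.trans ?_)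
    gcongr
    refine le_trans (le_of_eq ?_) (Finset.single_le_sum (f := fun j => K * (1 / 4) ^ j *
      (Ecl C ρ1 j).indicator (fun _ => (1 : ℝ)) u)
      (fun j _ => mul_nonneg (by positivity) (hind j)) hj)
    simp [indicator_of_mem hmem]
  have hex : ∃ j, d ≤ 2 ^ j * ρ1 := ⟨J, hdD.trans hJ⟩
  refine ⟨Nat.find hex, ?_, Nat.find_spec hex, ?_⟩
  · rw [Finset.mem_range]
    exact Nat.lt_succ_of_le (Nat.find_min' hex (hdD.trans hJ))
  rcases Nat.eq_zero_or_pos (Nat.find hex) with h0 | h0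
  · rw [h0, pow_zero, mul_one]
    refine hTn.trans (le_mul_of_one_le_right (by positivity) ?_)
    rw [hK]; linarith [sq_nonneg ((8 * (1 / A) * A + A) * (24 / (c * c1)))]
  · obtain ⟨i, hi⟩ := Nat.exists_eq_add_of_lt h0
    rw [zero_add] at hi
    have h1 := Nat.find_min hex (m := i) (by omega)
    push Not at h1
    rw [hi]
    have hal : c * c1 / 6 * (2 ^ i * ρ1) ≤ ‖a‖ := by
      refine le_trans ?_ ha2
      rw [show c / 6 * (c1 * d) = c * c1 / 6 * d by ring]
      gcongr
    have hap : 0 < ‖a‖ := lt_of_lt_of_le (by positivity) hal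
    have hcount := gr_count hn0 (b := b) (norm_pos_iff.1 hap) (ϱ := 2 * ρ1) (by positivity)
    refine hcount.trans ?_
    have haA : ‖a‖ ≤ A := by
      refine hha.trans ?_
      rw [hA, ← mul_assoc]; gcongr
    have h2 : 2 * (2 * ρ1 / ‖a‖ * n) + 1 ≤ (4 + A) * (ρ1 * n / ‖a‖) := by
      have : 1 ≤ A * (ρ1 * n / ‖a‖) := by
        rw [← mul_div_assoc, le_div_iff₀ hap]; nlinarith
      have e : 2 * (2 * ρ1 / ‖a‖ * n) = 4 * (ρ1 * n / ‖a‖) := by ring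
      linarith
    have h3 : ρ1 * n / ‖a‖ ≤ n * (6 / (c * c1) * (1 / 2) ^ i) := by
      rw [div_le_iff₀ hap]
      have e : n * (6 / (c * c1) * (1 / 2) ^ i) * (c * c1 / 6 * (2 ^ i * ρ1)) = ρ1 * n := by
        rw [one_div, inv_pow]; field_simp
      rw [← e]
      gcongr
    have h4 : 2 * (2 * ρ1 / ‖a‖ * n) + 1 ≤ n * ((8 + A) * (24 / (c * c1)) * (1 / 2) ^ (i + 1)) := by
      refine h2.trans ((mul_le_mul_of_nonneg_left h3 (by positivity)).trans ?_)
      rw [pow_succ, show n * ((8 + A) * (24 / (c * c1)) * ((1 / 2 : ℝ) ^ i * (1 / 2))) =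
        (16 + 2 * A) * (n * (6 / (c * c1) * (1 / 2) ^ i)) by ring]
      gcongr <;> linarith
    calc (2 * (2 * ρ1 / ‖a‖ * n) + 1) ^ 2 
        ≤ (n * ((8 + A) * (24 / (c * c1)) * (1 / 2) ^ (i + 1))) ^ 2 := by gcongr
      _ = n ^ 2 * (((8 + A) * (24 / (c * c1))) ^ 2 * (1 / 4) ^ (i + 1)) := by
          rw [mul_pow, mul_pow _ ((1 / 2 : ℝ) ^ (i + 1)), ← pow_mul, mul_comm (i + 1) 2, pow_mul]
          norm_num
      _ ≤ n ^ 2 * (K * (1 / 4) ^ (i + 1)) := by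
          gcongr
          rw [hK, mul_assoc, one_div, inv_mul_cancel₀ hA0.ne', mul_one]
          linarith

/-- The mean over the multiplier grid of the correlation at scale `ρ1` is at most of order
`ρ1 ^ (a + b)`. The condition `a + b < 2` makes the sum over dyadic distances converge: at
distance `2 ^ j ρ1` a proportion of order `4 ^ (-j)` of the multipliers contributes. -/
lemma average_bound {c : ℝ} (hc : 0 < c) {G1 G2 : Set ℂ} {Cg Cg' a b : ℝ}
    (hG1 : Good Y.μ G1 Cg a) (hG2 : Good Z.μ G2 Cg' b) (hCg : 0 < Cg) (hCg' : 0 < Cg')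
    (hab : a + b < 2) : ∃ Ca : ℝ, 0 < Ca ∧ ∀ (ρ1 : ℝ) (n : ℕ), 0 < ρ1 → 1 ≤ ρ1 * n → ∀ L W V,
      ∑ s, xi Y Z (G1 ×ˢ G2) c ρ1 (gr n s * L) W V ≤ n ^ 2 * (Ca * ρ1 ^ (a + b)) := by
  obtain ⟨C, K, hC, hK, hpt⟩ := pointwise_count Y Z hc
  set q : ℝ := 2 ^ (a + b) / 4 with hq
  have hq0 : 0 < q := by positivity
  have hq1 : q < 1 := by
    rw [hq, div_lt_one (by norm_num)]
    calc (2 : ℝ) ^ (a + b) < 2 ^ (2 : ℝ) := Real.rpow_lt_rpow_of_exponent_lt (by norm_num) hab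
      _ = 4 := by norm_num
  set Ca := K * (Cg * (Cg' * C ^ b)) * (1 - q)⁻¹ with hCa
  have h1q : 0 < 1 - q := by linarith
  refine ⟨Ca, by positivity, fun ρ1 n hρ hn L W V => ?_⟩
  obtain ⟨J, hJ⟩ : ∃ J : ℕ, Y.D ≤ 2 ^ J * ρ1 := by
    obtain ⟨J, hJ⟩ := pow_unbounded_of_one_lt (Y.D / ρ1) (by norm_num : (1 : ℝ) < 2)
    exact ⟨J, by rw [div_lt_iff₀ hρ] at hJ; exact hJ.le⟩
  have hInt : ∀ s ∈ Finset.univ, Integrable (fun u => eta c ‖gr n s * L‖ *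
    fchi Y Z ρ1 (gr n s * L) W V u) (mG Y Z (G1 ×ˢ G2)) :=
    fun s _ => (integrable_fchi Y Z _ ρ1 (gr n s * L) W V).const_mul _
  have e : ∑ s, xi Y Z (G1 ×ˢ G2) c ρ1 (gr n s * L) W V = ∫ u, ∑ s, eta c ‖gr n s * L‖ *
      fchi Y Z ρ1 (gr n s * L) W V u ∂(mG Y Z (G1 ×ˢ G2)) := by
    rw [integral_finsetSum _ hInt]
    refine Finset.sum_congr rfl fun s _ => ?_
    rw [integral_const_mul]; rfl
  rw [e]
  have hind : ∀ j ∈ Finset.range (J + 1), Integrable (fun u => K * (1 / 4) ^ j *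
      (Ecl C ρ1 j).indicator (fun _ => (1 : ℝ)) u) (mG Y Z (G1 ×ˢ G2)) := fun j _ =>
    ((integrable_const (1 : ℝ)).indicator (measurable_Ecl C ρ1 j)).const_mul _
  have h1 : ∫ u, ∑ s, eta c ‖gr n s * L‖ * fchi Y Z ρ1 (gr n s * L) W V u ∂(mG Y Z (G1 ×ˢ G2)) ≤
      ∫ u, n ^ 2 * ∑ j ∈ Finset.range (J + 1), K * (1 / 4) ^ j *
        (Ecl C ρ1 j).indicator (fun _ => 1) u ∂(mG Y Z (G1 ×ˢ G2)) := by
    refine integral_mono_ae (integrable_finsetSum _ hInt)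
      ((integrable_finsetSum _ hind).const_mul _) ?_
    filter_upwards [ae_mG Y Z (G1 ×ˢ G2)] with u hu using hpt ρ1 n J hρ hn hJ L W V u hu
  refine h1.trans ?_
  rw [integral_const_mul]
  refine mul_le_mul_of_nonneg_left ?_ (by positivity)
  rw [integral_finsetSum _ hind]
  have h2 : ∀ j ∈ Finset.range (J + 1), ∫ u, K * (1 / 4) ^ j *
      (Ecl C ρ1 j).indicator (fun _ => 1) u ∂(mG Y Z (G1 ×ˢ G2)) ≤
      K * (Cg * (Cg' * C ^ b)) * ρ1 ^ (a + b) * q ^ j := by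
    intro j _
    rw [integral_const_mul, integral_indicator (measurable_Ecl C ρ1 j)]
    simp only [integral_const, smul_eq_mul, mul_one, measureReal_restrict_apply MeasurableSet.univ,
      univ_inter]
    refine (mul_le_mul_of_nonneg_left (mG_Ecl Y Z hG1 hG2 hCg hCg' hC hρ j) (by positivity)).trans
      (le_of_eq ?_)
    have h2j : (0 : ℝ) < 2 ^ j := by positivity
    rw [Real.mul_rpow hC.le (by positivity), Real.mul_rpow h2j.le hρ.le, Real.mul_rpow h2j.le hρ.le,
      hq, Real.rpow_add hρ, Real.rpow_add (by norm_num)]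
    have e2 : ∀ t : ℝ, ((2 : ℝ) ^ j) ^ t = (2 ^ t) ^ j := fun t => by
      rw [← Real.rpow_natCast_mul (by norm_num), ← Real.rpow_mul_natCast (by norm_num), mul_comm]
    rw [e2, e2, div_pow, div_pow, mul_pow]
    ring
  refine (Finset.sum_le_sum h2).trans ?_
  rw [← Finset.mul_sum, hCa]
  have h3 : ∑ j ∈ Finset.range (J + 1), q ^ j ≤ (1 - q)⁻¹ :=
    (summable_geometric_of_lt_one hq0.le hq1).sum_le_tsum _ (fun _ _ => by positivity) |>.trans
      (tsum_geometric_of_lt_one hq0.le hq1).le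
  calc _ ≤ K * (Cg * (Cg' * C ^ b)) * ρ1 ^ (a + b) * (1 - q)⁻¹ := by gcongr
    _ = _ := by ring

end Pair
end SC

/-! ### The lower bound -/

namespace SC
open MTree

/-- Tangent line bound for the truncated logarithm at the truncation point. -/
lemma tlog_ge {B x : ℝ} (hx : 0 ≤ x) : B - x / Real.exp (-B) ≤ tlog B x := by
  unfold tlog
  have hq := Real.exp_pos (-B)
  have hm : 0 < max x (Real.exp (-B)) := lt_max_of_lt_right hq
  have h1 : Real.log (max x (Real.exp (-B))) =
      -B + Real.log (max x (Real.exp (-B)) / Real.exp (-B)) := by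
    rw [Real.log_div hm.ne' hq.ne', Real.log_exp]; ring
  have h2 := Real.log_le_sub_one_of_pos (div_pos hm hq)
  have h3 : max x (Real.exp (-B)) / Real.exp (-B) ≤ x / Real.exp (-B) + 1 := by
    rw [div_le_iff₀ hq, add_mul, div_mul_cancel₀ _ hq.ne', one_mul]
    exact max_le (by linarith) (by linarith)
  linarith

section Pair
variable {ι ι' : Type*} [Fintype ι] [Fintype ι'] (Y : Sys ι) (Z : Sys ι')

/-- The common lower bound for one-step contractions. -/
noncomputable def cc : ℝ := min Y.cs Z.cs

lemma cc_pos : 0 < cc Y Z := lt_min Y.cs_pos Z.cs_pos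
lemma cc_le : cc Y Z ≤ 1 := (min_le_left _ _).trans Y.cs_lt.le

/-- The factor relating the normalized scale of the children and the ratio `r`. -/
noncomputable def Cr : ℝ := (2 * (⌈Y.Cq * Y.D + Z.Cq * Z.D⌉₊ : ℝ) + 2) / Z.cs

lemma Cr_pos : 0 < Cr Y Z := div_pos (by positivity) Z.cs_pos

/-- The truncated entropy of a node of the tree of pairs is bounded below by the correlation at the
ratio `S w / T v`, by the tangent line of `-log`. -/
lemma ent_ge {r : ℝ} {n : ℕ} (h : Adm Y Z r n) {B : ℝ} (hB : 0 ≤ B) (G : Set (ℂ × ℂ)) (s : Node Y Z r) :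
    (Y.μ.prod Z.μ).real G * B - xi Y Z G (cc Y Z) (Cr Y Z * r) (Y.S s.1.2.1 / Z.S s.1.2.2)
      s.1.2.1 s.1.2.2 / Real.exp (-B) ≤ (pairTree h).ent B s := by
  set w := s.1.2.1 with hw
  set v := s.1.2.2 with hv
  set k := s.1.1 with hk
  set P := Y.μ.prod Z.μ with hP
  set R0 : ℝ := (2 * (⌈Y.Cq * Y.D + Z.Cq * Z.D⌉₊ : ℝ) + 2) * r ^ (k + 1) with hR0
  have hrk : 0 < r ^ k := pow_pos h.pos _
  have hS := Y.S_pos w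
  have hT := Z.S_pos v
  have hTne := Z.S_ne v
  set θ := pm Y Z w v with hθ
  have hent : (pairTree h).ent B s = ∫ q, tlog B (θ.real (closedBall (sm Y Z w v q) R0)) ∂P := by
    change ∫ z, tlog B (θ.real (closedBall z R0)) ∂(P.map (sm Y Z w v)) = _
    exact integral_map (measurable_sm Y Z w v).aemeasurable
      ((measurable_tlog B).comp (measurable_ball_real θ R0)).aestronglyMeasurable
  set g : ℂ × ℂ → ℝ := fun q => θ.real (closedBall (sm Y Z w v q) R0) with hg
  have hgm : Measurable g := (measurable_ball_real θ R0).comp (measurable_sm Y Z w v)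
  have hg1 : ∀ q, ‖g q‖ ≤ 1 := fun q => by
    rw [Real.norm_of_nonneg measureReal_nonneg]; exact measureReal_le_one
  have hgi : Integrable g P := Integrable.of_bound hgm.aestronglyMeasurable 1
    (Eventually.of_forall hg1)
  have hti : Integrable (fun q => tlog B (g q)) P := by
    refine Integrable.of_bound ((measurable_tlog B).comp hgm).aestronglyMeasurable B
      (Eventually.of_forall fun q => ?_)
    rw [Real.norm_of_nonneg (tlog_nonneg hB measureReal_le_one)]
    exact tlog_le
  have h1 : ∫ q in G, (B - g q / Real.exp (-B)) ∂P ≤ ∫ q, tlog B (g q) ∂P := by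
    refine le_trans ?_ (setIntegral_le_integral (s := G) hti
      (Eventually.of_forall fun q => tlog_nonneg hB measureReal_le_one))
    refine integral_mono ((integrable_const B).sub (hgi.integrableOn.div_const _))
      hti.integrableOn fun q => tlog_ge measureReal_nonneg
  have h2 : ∫ q in G, (B - g q / Real.exp (-B)) ∂P =
      P.real G * B - (∫ q in G, g q ∂P) / Real.exp (-B) := by
    rw [integral_sub (integrable_const B) (hgi.integrableOn.div_const _), integral_div,
      setIntegral_const, smul_eq_mul]
  -- the correlation integral
  set A : Set ((ℂ × ℂ) × (ℂ × ℂ)) := {u | dist (sm Y Z w v u.2) (sm Y Z w v u.1) ≤ R0} with hA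
  have hAm : MeasurableSet A := measurableSet_le
    (((measurable_sm Y Z w v).comp measurable_snd).dist
      ((measurable_sm Y Z w v).comp measurable_fst)) measurable_const
  have h3 : ∫ q in G, g q ∂P = (mG Y Z G).real A := by
    have e : ∀ q, g q = (P (Prod.mk q ⁻¹' A)).toReal := by
      intro q
      simp only [hg, hθ, pm, measureReal_def]
      rw [Measure.map_apply (measurable_sm Y Z w v) isClosed_closedBall.measurableSet]
      rfl
    simp only [e]
    rw [integral_toReal (measurable_measure_prodMk_left hAm).aemeasurable
      (Eventually.of_forall fun q => measure_lt_top _ _), measureReal_def, mG,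
      Measure.prod_apply hAm]
  have h4 : (mG Y Z G).real A ≤ ∫ u, fchi Y Z (Cr Y Z * r) (Y.S w / Z.S v) w v u ∂(mG Y Z G) := by
    have e : (mG Y Z G).real A = ∫ u, A.indicator (fun _ => (1 : ℝ)) u ∂(mG Y Z G) := by
      rw [integral_indicator hAm, setIntegral_const]; simp
    rw [e]
    refine integral_mono ((integrable_const 1).indicator hAm) (integrable_fchi ..) fun u => ?_
    by_cases hu : u ∈ A
    · rw [indicator_of_mem hu]
      unfold fchi
      rw [chi_one]
      rw [div_le_one (mul_pos (Cr_pos Y Z) h.pos)]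
      have e2 : sm Y Z w v u.2 - sm Y Z w v u.1 =
          Z.S v * lin Y Z (Y.S w / Z.S v) w v u := by
        unfold lin sm Sys.h
        have := Y.S_ne w
        field_simp
        ring
      have hu' : dist (sm Y Z w v u.2) (sm Y Z w v u.1) ≤ R0 := hu
      rw [dist_eq_norm, e2, norm_mul] at hu'
      have h5 : Z.cs * r ^ k * ‖lin Y Z (Y.S w / Z.S v) w v u‖ ≤ R0 :=
        (mul_le_mul_of_nonneg_right s.2.2.1.le (norm_nonneg _)).trans hu'
      have h6 : R0 = Z.cs * r ^ k * (Cr Y Z * r) := by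
        have := Z.cs_pos.ne'
        rw [hR0, pow_succ]; unfold Cr; field_simp
      rw [h6] at h5
      exact le_of_mul_le_mul_left h5 (mul_pos Z.cs_pos hrk)
    · rw [indicator_of_notMem hu]; exact chi_nonneg _
  have h5 : xi Y Z G (cc Y Z) (Cr Y Z * r) (Y.S w / Z.S v) w v =
      ∫ u, fchi Y Z (Cr Y Z * r) (Y.S w / Z.S v) w v u ∂(mG Y Z G) := by
    unfold xi
    rw [eta_one (cc_pos Y Z), one_mul]
    · rw [norm_div, le_div_iff₀ hT]
      calc cc Y Z * ‖Z.S v‖ ≤ Y.cs * r ^ k :=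
            mul_le_mul (min_le_left _ _) s.2.2.2 hT.le Y.cs_pos.le
        _ ≤ ‖Y.S w‖ := s.2.1.1.le
    · rw [norm_div, div_le_div_iff₀ hT (cc_pos Y Z), one_mul, mul_comm]
      calc cc Y Z * ‖Y.S w‖ ≤ Z.cs * r ^ k :=
            mul_le_mul (min_le_right _ _) s.2.1.2 hS.le Z.cs_pos.le
        _ ≤ ‖Z.S v‖ := s.2.2.1.le
  rw [hent, h5]
  have h6 : (∫ q in G, g q ∂P) / Real.exp (-B) ≤
      (∫ u, fchi Y Z (Cr Y Z * r) (Y.S w / Z.S v) w v u ∂(mG Y Z G)) / Real.exp (-B) := by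
    rw [h3]; gcongr
  linarith

/-- Summation of `ent_ge` over `N` generations of the tree of pairs. Each generation uses at most `n`
letters, so the nodes met are among the pairs of words entering the double sum `Gs` over `N * n`
generations. -/
lemma gain_ge {r : ℝ} {n : ℕ} (h : Adm Y Z r n) {B : ℝ} (hB : 0 ≤ B) (G : Set (ℂ × ℂ)) (N : ℕ) (s : Node Y Z r) :
    N * ((Y.μ.prod Z.μ).real G * B) - Gs Y.p Z.p (N * n)
      (fun w v => xi Y Z G (cc Y Z) (Cr Y Z * r) (Y.S w / Z.S v) w v) s.1.2.1 s.1.2.2 /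
        Real.exp (-B) ≤ (pairTree h).gain B N s := by
  have hq := Real.exp_pos (-B)
  set φ := fun w v => xi Y Z G (cc Y Z) (Cr Y Z * r) (Y.S w / Z.S v) w v with hφ
  have hφ0 : ∀ w v, 0 ≤ φ w v := fun w v => xi_nonneg ..
  induction N generalizing s with
  | zero =>
    have : 0 ≤ Gs Y.p Z.p (0 * n) φ s.1.2.1 s.1.2.2 :=
      Sm_nonneg (fun i => (Y.p_pos i).le)
        (fun W => Sm_nonneg (fun i => (Z.p_pos i).le) (fun V => hφ0 W V) _ _) _ _
    have h2 := div_nonneg this hq.le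
    simp only [Nat.cast_zero, zero_mul, MTree.gain] at h2 ⊢
    linarith
  | succ N ih =>
    set PB := (Y.μ.prod Z.μ).real G * B
    have h1 := ent_ge Y Z h hB G s
    have h2 := Gs_endw Y.p_pos Y.p_sum Z.p_pos Z.p_sum (Y.stp r s.1.1) (Z.stp r s.1.1) hφ0 (N * n)
      h.n_pos s.1.2.1 (Z.lvl_not_stp h.pos h.leZ s.2.2)
    have h3 : ∑ j, (pairTree h).wt j * (N * PB - Gs Y.p Z.p (N * n) φ
        ((pairTree h).ch s j).1.2.1 ((pairTree h).ch s j).1.2.2 / Real.exp (-B)) ≤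
        ∑ j, (pairTree h).wt j * (pairTree h).gain B N ((pairTree h).ch s j) :=
      Finset.sum_le_sum fun j _ => mul_le_mul_of_nonneg_left (ih _) ((pairTree h).wt_pos j).le
    have h4 : ∑ j, (pairTree h).wt j * (N * PB - Gs Y.p Z.p (N * n) φ
        ((pairTree h).ch s j).1.2.1 ((pairTree h).ch s j).1.2.2 / Real.exp (-B)) =
        N * PB - (∑ x, ∑ y, wtI Y.p n x * wtI Z.p n y * Gs Y.p Z.p (N * n) φ
          (endw (Y.stp r s.1.1) n s.1.2.1 x) (endw (Z.stp r s.1.1) n s.1.2.2 y)) /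
            Real.exp (-B) := by
      simp only [mul_sub, Finset.sum_sub_distrib, ← Finset.sum_mul, (pairTree h).wt_sum, one_mul,
        ← mul_div_assoc, ← Finset.sum_div]
      congr 2
      rw [Fintype.sum_prod_type]
      rfl
    rw [h4] at h3
    have h5 := div_le_div_of_nonneg_right h2 hq.le
    rw [add_div] at h5
    have e : (N + 1) * n = N * n + n := by ring
    simp only [MTree.gain]
    rw [e]
    push_cast
    linarith

/-- The equidistribution data attached to a pair of systems. -/
noncomputable def mkEqui (x : ι → ℂ) (hx : ∀ i, x i ∈ Y.K) (hfx : ∀ i, Y.f i (x i) = x i)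
    (y : ι' → ℂ) (hy : ∀ i, y i ∈ Z.K) (hfy : ∀ i, Z.f i (y i) = y i)
    (hne : ∀ i, Y.f' i (x i) ≠ 0) (hne' : ∀ i, Z.f' i (y i) ≠ 0)
    (dense : ∀ H : Subgroup ℂˣ, IsClosed (H : Set ℂˣ) →
      (∀ i, Units.mk0 (Y.f' i (x i)) (hne i) ∈ H) →
      (∀ i, Units.mk0 (Z.f' i (y i)) (hne' i) ∈ H) → H = ⊤)
    (k : ℕ) (hk : max Y.Cq Z.Cq * max Y.ρ Z.ρ ^ k * (3 * (2 / cc Y Z)) < cc Y Z / 2)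
    (G : Set (ℂ × ℂ)) {ρ1 : ℝ} (hρ : 0 < ρ1) : Equi ι ι' where
  p := Y.p
  p_pos := Y.p_pos
  p_sum := Y.p_sum
  p' := Z.p
  p'_pos := Z.p_pos
  p'_sum := Z.p_sum
  S := Y.S
  S_ne := Y.S_ne
  T := Z.S
  T_ne := Z.S_ne
  C := max Y.Cq Z.Cq
  C_pos := lt_max_of_lt_left Y.Cq_pos
  ρ := max Y.ρ Z.ρ
  ρ_pos := lt_max_of_lt_left Y.ρ_pos
  ρ_lt := max_lt Y.ρ_lt Z.ρ_lt
  S_dec w X := by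
    refine (Y.S_append_le w X).trans ?_
    have h1 := Y.ρ_pos.le
    have h2 : 0 ≤ max Y.Cq Z.Cq := Y.Cq_pos.le.trans (le_max_left _ _)
    gcongr
    · exact le_max_left _ _
    · exact le_max_left _ _
  T_dec w X := by
    refine (Z.S_append_le w X).trans ?_
    have h1 := Z.ρ_pos.le
    have h2 : 0 ≤ max Y.Cq Z.Cq := Y.Cq_pos.le.trans (le_max_left _ _)
    gcongr
    · exact le_max_right _ _
    · exact le_max_right _ _
  γ i := Y.f' i (x i)
  γ' i := Z.f' i (y i)
  γ_ne := hne
  γ'_ne := hne'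
  S_rat i _ hε := Y.S_rat i (hx i) (hfx i) hε
  T_rat i _ hε := Z.S_rat i (hy i) (hfy i) hε
  Ξ := xi Y Z G (cc Y Z) ρ1
  Ξ_nonneg := xi_nonneg Y Z G _ _
  Ξ_le := xi_le Y Z G _ _
  a := cc Y Z / 2
  b := 2 / cc Y Z
  a_pos := half_pos (cc_pos Y Z)
  Ξ_supp := xi_supp Y Z (cc_pos Y Z) G
  Lip := 2 / cc Y Z * (4 / cc Y Z) + 4 / cc Y Z * (Y.Cq * Y.D) / ρ1 + 2
  Lip_nonneg := by
    have := cc_pos Y Z; have := Y.Cq_pos; have := Y.D_pos; positivity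
  Ξ_lip := xi_lip Y Z (cc_pos Y Z) (cc_le Y Z) hρ G
  Ξ_W _ hε := xi_W Y Z (cc_pos Y Z) hρ G hε
  Ξ_V _ hε := xi_V Y Z (cc_pos Y Z) hρ G hε
  dense := dense
  k := k
  k_band := hk

set_option maxHeartbeats 1600000 in
/-- The inequality `min (2, dim μ + dim ν) ≤ dim (μ * ν)`, if the derivatives at the fixed points
generate a dense subgroup of `ℂˣ`. -/
theorem lower_bound (x : ι → ℂ) (hx : ∀ i, x i ∈ Y.K) (hfx : ∀ i, Y.f i (x i) = x i)
    (y : ι' → ℂ) (hy : ∀ i, y i ∈ Z.K) (hfy : ∀ i, Z.f i (y i) = y i)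
    (hne : ∀ i, Y.f' i (x i) ≠ 0) (hne' : ∀ i, Z.f' i (y i) ≠ 0)
    (dense : ∀ H : Subgroup ℂˣ, IsClosed (H : Set ℂˣ) →
      (∀ i, Units.mk0 (Y.f' i (x i)) (hne i) ∈ H) →
      (∀ i, Units.mk0 (Z.f' i (y i)) (hne' i) ∈ H) → H = ⊤) :
    min 2 (mdim Y.μ + mdim Z.μ) ≤ mdim (pm Y Z [] []) := by
  set a := (mdim Y.μ).toReal with ha
  set b := (mdim Z.μ).toReal with hb
  have ha0 : 0 ≤ a := ENNReal.toReal_nonneg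
  have hb0 : 0 ≤ b := ENNReal.toReal_nonneg
  have hmin : min 2 (mdim Y.μ + mdim Z.μ) = ENNReal.ofReal (min 2 (a + b)) := by
    rw [mdim_eq_ofReal Y.μ, mdim_eq_ofReal Z.μ, ← ENNReal.ofReal_add ha0 hb0,
      ENNReal.ofReal_min]
    simp
  rw [hmin]
  set m := min 2 (a + b) with hm
  by_contra hcon
  push Not at hcon
  rw [mdim_eq_ofReal (pm Y Z [] [])] at hcon
  have hm0 : 0 < m := by
    by_contra h
    rw [ENNReal.ofReal_of_nonpos (not_lt.1 h)] at hcon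
    exact not_lt_zero hcon
  obtain ⟨t, ht1, htm⟩ := exists_between ((ENNReal.ofReal_lt_ofReal_iff hm0).1 hcon)
  have ht0 : 0 < t := lt_of_le_of_lt ENNReal.toReal_nonneg ht1
  suffices hsuf : ENNReal.ofReal t ≤ mdim (pm Y Z [] []) by
    rw [mdim_eq_ofReal (pm Y Z [] []), ENNReal.ofReal_le_ofReal_iff ENNReal.toReal_nonneg] at hsuf
    linarith
  have hab : 0 < a + b := hm0.trans_le (min_le_right _ _)
  -- Exponents `t < σ < u < m`: the truncation is at `r ^ σ`, the correlation is `O(r ^ u)`.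
  obtain ⟨u, htu, hum⟩ := exists_between htm
  obtain ⟨σ, htσ, hσu⟩ := exists_between htu
  have hσ0 : 0 < σ := ht0.trans htσ
  have hu0 : 0 < u := hσ0.trans hσu
  set l := u / (a + b) with hl
  have hl0 : 0 < l := by positivity
  have hl1 : l < 1 := by
    rw [hl, div_lt_one hab]; exact hum.trans_le (min_le_right _ _)
  have hlu : l * a + l * b = u := by rw [← mul_add, hl, div_mul_cancel₀ _ hab.ne']
  have hu2 : u < 2 := hum.trans_le (min_le_left _ _)
  have hgood : ∀ (μ : Measure ℂ) [IsProbabilityMeasure μ], l * (mdim μ).toReal = 0 ∨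
      ENNReal.ofReal (l * (mdim μ).toReal) < mdim μ := by
    intro μ _
    rcases (ENNReal.toReal_nonneg (a := mdim μ)).eq_or_lt with h | h
    · left; rw [← h, mul_zero]
    · right
      conv_rhs => rw [mdim_eq_ofReal μ]
      rw [ENNReal.ofReal_lt_ofReal_iff h]
      exact mul_lt_of_lt_one_left h hl1
  -- With this `δ`, discarding bad points costs less than half of the gap `σ - t`.
  set δ := (σ - t) / (4 * σ) with hδ
  have hδ0 : 0 < δ := div_pos (by linarith) (by positivity)
  have hδ1 : δ ≤ 1 := by rw [hδ, div_le_one (by positivity)]; linarith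
  obtain ⟨G1, Cg, hCg, hG1, hG1'⟩ := exists_good Y.μ (a := l * a) (by positivity) (hgood Y.μ) hδ0
  obtain ⟨G2, Cg', hCg', hG2, hG2'⟩ := exists_good Z.μ (a := l * b) (by positivity) (hgood Z.μ) hδ0
  set G := G1 ×ˢ G2 with hG
  set τ := (σ + t) / 2 with hτ
  have hτt : t < τ := by rw [hτ]; linarith
  have hPG : τ ≤ (Y.μ.prod Z.μ).real G * σ := by
    rw [hG, measureReal_prod_prod]
    have h1 : (1 - δ) * (1 - δ) ≤ Y.μ.real G1 * Z.μ.real G2 :=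
      mul_le_mul hG1' hG2' (by linarith) measureReal_nonneg
    have h2 : δ * σ = (σ - t) / 4 := by rw [hδ]; field_simp
    have h3 : (1 - δ) * (1 - δ) * σ ≤ Y.μ.real G1 * Z.μ.real G2 * σ := by gcongr
    have h4 : 0 ≤ δ * δ * σ := by positivity
    rw [hτ]; nlinarith
  obtain ⟨Ca, hCa, hav⟩ := average_bound Y Z (cc_pos Y Z) hG1 hG2 hCg hCg' (by rw [hlu]; exact hu2)
  rw [hlu] at hav
  have hρm : max Y.ρ Z.ρ < 1 := max_lt Y.ρ_lt Z.ρ_lt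
  have hρm0 : 0 < max Y.ρ Z.ρ := lt_max_of_lt_left Y.ρ_pos
  -- After `k` further letters the ratio leaves the band of moduli where the correlation lives.
  obtain ⟨k, hk0, hk⟩ : ∃ k : ℕ, 0 < k ∧
      max Y.Cq Z.Cq * max Y.ρ Z.ρ ^ k * (3 * (2 / cc Y Z)) < cc Y Z / 2 := by
    have : Tendsto (fun k : ℕ => max Y.Cq Z.Cq * max Y.ρ Z.ρ ^ k * (3 * (2 / cc Y Z))) atTop
        (𝓝 0) := by
      simpa using ((tendsto_pow_atTop_nhds_zero_of_lt_one hρm0.le hρm).const_mul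
        (max Y.Cq Z.Cq)).mul_const (3 * (2 / cc Y Z))
    exact ((eventually_gt_atTop 0).and
      (this.eventually (gt_mem_nhds (half_pos (cc_pos Y Z))))).exists
  obtain ⟨Cn, r1, hCn, hr1, hr1', hadm⟩ := exists_adm Y Z
  set Q := 2 * k * (Ca * Cr Y Z ^ u) * Cn with hQ
  set Rn := ⌈Y.Cq * Y.D + Z.Cq * Z.D⌉₊ with hRn
  set Lc := Real.log ((2 * ((2 * Rn + 2 : ℕ) : ℝ) + 1) ^ 2) with hLc
  -- For small `r` both the correlation term and the overlap constant of the tree are negligible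
  -- compared with `log (1 / r)`.
  obtain ⟨r, hr0, hrr1, hrQ, hrL⟩ : ∃ r, 0 < r ∧ r ≤ r1 ∧ Q * r ^ (u - σ) < (τ - t) / 2 ∧
      Lc < (τ - t) / 2 * Real.log (1 / r) := by
    have hp : 0 < (τ - t) / 2 := by linarith
    have e1 : ∀ᶠ r in 𝓝[>] (0 : ℝ), 0 < r := self_mem_nhdsWithin
    have e2 : ∀ᶠ r in 𝓝[>] (0 : ℝ), r ≤ r1 := nhdsWithin_le_nhds (ge_mem_nhds hr1)
    have e3 : Tendsto (fun r : ℝ => Q * r ^ (u - σ)) (𝓝[>] 0) (𝓝 0) := by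
      have h1 : Tendsto (fun r : ℝ => r ^ (u - σ)) (𝓝 0) (𝓝 0) := by
        have := (Real.continuousAt_rpow_const 0 (u - σ) (Or.inr (by linarith))).tendsto
        rwa [Real.zero_rpow (by linarith)] at this
      simpa using (h1.mono_left nhdsWithin_le_nhds).const_mul Q
    have e4 : Tendsto (fun r : ℝ => (τ - t) / 2 * Real.log (1 / r)) (𝓝[>] 0) atTop := by
      have : Tendsto (fun r : ℝ => Real.log (1 / r)) (𝓝[>] 0) atTop := by
        simp only [one_div]
        exact Real.tendsto_log_atTop.comp tendsto_inv_nhdsGT_zero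
      exact this.const_mul_atTop hp
    exact (e1.and (e2.and ((e3.eventually (gt_mem_nhds hp)).and (e4.eventually_gt_atTop Lc)))).exists
  obtain ⟨n, hn, hnle⟩ := hadm r hr0 hrr1
  set ℓ := Real.log (1 / r) with hℓ
  have hℓ0 : 0 < ℓ := Real.log_pos (by rw [lt_div_iff₀ hr0]; linarith [hn.lt])
  set B := σ * ℓ with hB
  have hB0 : 0 < B := by positivity
  have hexp : Real.exp (-B) = r ^ σ := by
    rw [Real.rpow_def_of_pos hr0, hB, hℓ, one_div, Real.log_inv]; congr 1; ring
  set ρ1 := Cr Y Z * r with hρ1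
  have hCr := Cr_pos Y Z
  have hρ10 : 0 < ρ1 := by positivity
  set E := mkEqui Y Z x hx hfx y hy hfy hne hne' dense k hk G hρ10 with hE
  obtain ⟨n', hn'⟩ := exists_nat_ge (1 / ρ1)
  have hn'1 : 1 ≤ ρ1 * n' := by rw [div_le_iff₀ hρ10] at hn'; linarith
  have hn'0 : 0 < n' := by
    rcases Nat.eq_zero_or_pos n' with h | h
    · subst h; norm_num at hn'1
    · exact h
  have : Nonempty (Fin n') := ⟨⟨0, hn'0⟩⟩
  obtain ⟨M0, hM0⟩ := E.main (gr n') (gr_ge n') (gr_le n') (B := Ca * ρ1 ^ u) (by positivity) hk0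
    (by
      intro L W V
      refine (hav ρ1 n' hρ10 hn'1 L W V).trans (le_of_eq ?_)
      simp only [Fintype.card_prod, Fintype.card_fin]
      push_cast; ring)
  set N := M0 + 1 with hN
  have hNn : M0 ≤ N * n := by
    have := hn.n_pos
    rw [hN]; nlinarith
  have hgs : ∀ w v, Gs Y.p Z.p (N * n) (fun w v => xi Y Z G (cc Y Z) (Cr Y Z * r)
      (Y.S w / Z.S v) w v) w v ≤ 2 * k * (Ca * ρ1 ^ u) * ((N * n : ℕ) : ℝ) := by
    intro w v
    have h1 := hM0 _ hNn w v
    have e : E.φ 1 = fun w v => xi Y Z G (cc Y Z) (Cr Y Z * r) (Y.S w / Z.S v) w v := by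
      funext w v
      simp only [Equi.φ, one_mul]
      rfl
    rw [e] at h1
    exact h1
  set hh := τ * ℓ - Q * r ^ (u - σ) * ℓ with hhh
  have hgain : ∀ s, N * hh ≤ (pairTree hn).gain B N s := by
    intro s
    refine le_trans ?_ (gain_ge Y Z hn hB0.le G N s)
    have h1 := div_le_div_of_nonneg_right (hgs s.1.2.1 s.1.2.2) (Real.exp_pos (-B)).le
    have h2 : 2 * k * (Ca * ρ1 ^ u) * ((N * n : ℕ) : ℝ) / Real.exp (-B) ≤
        N * (Q * r ^ (u - σ) * ℓ) := by
      rw [hexp, hρ1, Real.mul_rpow hCr.le hr0.le, Real.rpow_sub hr0, hQ]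
      have e : 2 * (k : ℝ) * (Ca * (Cr Y Z ^ u * r ^ u)) * ((N * n : ℕ) : ℝ) / r ^ σ =
        N * (2 * k * (Ca * Cr Y Z ^ u) * (r ^ u / r ^ σ)) * n := by push_cast; ring
      rw [e]
      have : 0 ≤ N * (2 * k * (Ca * Cr Y Z ^ u) * (r ^ u / r ^ σ)) := by positivity
      refine (mul_le_mul_of_nonneg_left hnle this).trans (le_of_eq ?_)
      ring
    have h3 : (N : ℝ) * (τ * ℓ) ≤ N * ((Y.μ.prod Z.μ).real G * B) := by
      rw [hB, ← mul_assoc ((Y.μ.prod Z.μ).real G)]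
      gcongr
    rw [hhh, mul_sub]
    linarith
  refine (pairTree hn).le_mdim hB0.le (by omega : 0 < N) hgain ht0 ?_ (s := rootNode Y Z r) rfl
  change t * ℓ < hh - Lc
  rw [hhh]
  nlinarith

end Pair
end SC

/-! ### Rotations and closed subgroups of `ℂˣ` -/

namespace SC

/-- The matrix of multiplication by a complex number in the basis `1, i`. -/
def rot (u : ℂ) : Matrix (Fin 2) (Fin 2) ℝ := !![u.re, -u.im; u.im, u.re]

lemma rot_mul (u v : ℂ) : rot u * rot v = rot (u * v) := by
  ext i j
  fin_cases i <;> fin_cases j <;> simp [rot, Matrix.mul_apply, Fin.sum_univ_two] <;> ring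

lemma rot_one : rot 1 = 1 := by
  ext i j
  fin_cases i <;> fin_cases j <;> simp [rot]

lemma rot_det (u : ℂ) : (rot u).det = ‖u‖ ^ 2 := by
  rw [Complex.sq_norm, Complex.normSq_apply, rot, Matrix.det_fin_two]
  simp

lemma rot_smul (c : ℝ) (u : ℂ) : c • rot u = rot (c * u) := by
  ext i j
  fin_cases i <;> fin_cases j <;> simp [rot]

lemma rot_inv {u : ℂ} (hu : u ≠ 0) : (rot u)⁻¹ = rot u⁻¹ :=
  Matrix.inv_eq_right_inv (by rw [rot_mul, mul_inv_cancel₀ hu, rot_one])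

lemma rot_inj {u v : ℂ} (h : rot u = rot v) : u = v := by
  have h1 := congrFun (congrFun h 0) 0
  have h2 := congrFun (congrFun h 1) 0
  exact Complex.ext (by simpa [rot] using h1) (by simpa [rot] using h2)

lemma rot_mem_SO {u : ℂ} (hu : ‖u‖ = 1) : rot u ∈ SOset 2 := by
  refine ⟨?_, by rw [rot_det, hu, one_pow]⟩
  have h : u.re * u.re + u.im * u.im = 1 := by
    rw [← Complex.normSq_apply, ← Complex.sq_norm, hu, one_pow]
  rw [Matrix.mem_orthogonalGroup_iff]
  ext i j
  fin_cases i <;> fin_cases j <;>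
    simp [rot, Matrix.mul_apply, Fin.sum_univ_two] <;> linarith

/-- A closed subgroup of `ℂˣ` containing two positive reals with irrational log-ratio contains
all positive reals. -/
lemma pos_mem (H : Subgroup ℂˣ) (hH : IsClosed (H : Set ℂˣ)) {s t : ℝ}
    (hs : ∃ u ∈ H, (u : ℂ) = Complex.exp s) (ht : ∃ u ∈ H, (u : ℂ) = Complex.exp t)
    (hst : Irrational (s / t)) (u : ℂˣ) {x : ℝ} (hu : (u : ℂ) = Complex.exp x) : u ∈ H := by
  let E : ℝ → ℂˣ := fun x => Units.mk0 (Complex.exp x) (Complex.exp_ne_zero _)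
  have hE : Continuous E := by
    rw [Units.isEmbedding_val₀.continuous_iff]
    exact Complex.continuous_exp.comp Complex.continuous_ofReal
  have hEeq : ∀ (u : ℂˣ) (x : ℝ), (u : ℂ) = Complex.exp x → u = E x := fun u x h => Units.ext h
  let A : AddSubgroup ℝ :=
    { carrier := {x | E x ∈ H}
      zero_mem' := by
        change E 0 ∈ H
        rw [← hEeq 1 0 (by simp)]; exact H.one_mem
      add_mem' := by
        intro a b (ha : E a ∈ H) (hb : E b ∈ H)
        change E (a + b) ∈ H
        rw [← hEeq (E a * E b) (a + b) (by simp [E, Complex.exp_add])]; exact H.mul_mem ha hb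
      neg_mem' := by
        intro a (ha : E a ∈ H)
        change E (-a) ∈ H
        rw [← hEeq (E a)⁻¹ (-a) (by simp [E, Complex.exp_neg])]; exact H.inv_mem ha }
  have hA : IsClosed (A : Set ℝ) := hH.preimage hE
  have hsA : s ∈ A := by
    obtain ⟨u, hu, h⟩ := hs
    change E s ∈ H
    rwa [← hEeq u s h]
  have htA : t ∈ A := by
    obtain ⟨u, hu, h⟩ := ht
    change E t ∈ H
    rwa [← hEeq u t h]
  have hd := dense_addSubgroupClosure_pair_iff.2 hst
  have hle : AddSubgroup.closure {s, t} ≤ A := by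
    rw [AddSubgroup.closure_le]
    rintro y (rfl | rfl)
    · exact hsA
    · exact htA
  have hx : x ∈ (A : Set ℝ) := by
    have := hd.mono hle
    rw [← hA.closure_eq]
    exact this x
  rw [hEeq u x hu]
  exact hx

/-- A closed subgroup of `ℂˣ` is everything if it contains numbers `g i`, `g' j` whose rotation
parts satisfy the generation hypothesis, and among which there are two pairs of equal rotation
parts whose differences of log-moduli have irrational ratio. -/
lemma closed_eq_top {ι ι' : Type*} (H : Subgroup ℂˣ) (hH : IsClosed (H : Set ℂˣ))
    (g : ι → ℂˣ) (g' : ι' → ℂˣ) (hg : ∀ i, g i ∈ H) (hg' : ∀ i, g' i ∈ H)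
    (h1 : SOset 2 ⊆ genClosure {M : Matrix (Fin 2) (Fin 2) ℝ |
        ∃ A ∈ {M | ∃ i, M = rot ((‖(g i : ℂ)‖⁻¹ : ℝ) * g i) ∨ M = (rot ((‖(g i : ℂ)‖⁻¹ : ℝ) * g i))⁻¹},
        ∃ B ∈ {M | ∃ i, M = rot ((‖(g' i : ℂ)‖⁻¹ : ℝ) * g' i) ∨ M = (rot ((‖(g' i : ℂ)‖⁻¹ : ℝ) * g' i))⁻¹},
          M = A * B⁻¹})
    (k₁ k₂ k₃ k₄ : ι ⊕ ι')
    (h12 : rot ((‖((Sum.elim g g' k₁ : ℂˣ) : ℂ)‖⁻¹ : ℝ) * (Sum.elim g g' k₁ : ℂˣ)) =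
      rot ((‖((Sum.elim g g' k₂ : ℂˣ) : ℂ)‖⁻¹ : ℝ) * (Sum.elim g g' k₂ : ℂˣ)))
    (h34 : rot ((‖((Sum.elim g g' k₃ : ℂˣ) : ℂ)‖⁻¹ : ℝ) * (Sum.elim g g' k₃ : ℂˣ)) =
      rot ((‖((Sum.elim g g' k₄ : ℂˣ) : ℂ)‖⁻¹ : ℝ) * (Sum.elim g g' k₄ : ℂˣ)))
    (hirr : Irrational ((Real.log ‖((Sum.elim g g' k₁ : ℂˣ) : ℂ)‖ - Real.log ‖((Sum.elim g g' k₂ : ℂˣ) : ℂ)‖) /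
      (Real.log ‖((Sum.elim g g' k₃ : ℂˣ) : ℂ)‖ - Real.log ‖((Sum.elim g g' k₄ : ℂˣ) : ℂ)‖))) : H = ⊤ := by
  have hmem : ∀ k, Sum.elim g g' k ∈ H := by rintro (i | i) <;> simp [hg, hg']
  have hpos : ∀ u : ℂˣ, 0 < ‖(u : ℂ)‖ := fun u => norm_pos_iff.2 u.ne_zero
  have hratio : ∀ u v : ℂˣ, u ∈ H → v ∈ H →
      rot ((‖(u : ℂ)‖⁻¹ : ℝ) * u) = rot ((‖(v : ℂ)‖⁻¹ : ℝ) * v) →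
      ∃ w ∈ H, (w : ℂ) = Complex.exp (Real.log ‖(u : ℂ)‖ - Real.log ‖(v : ℂ)‖ : ℝ) := by
    intro u v hu hv h
    refine ⟨u * v⁻¹, H.mul_mem hu (H.inv_mem hv), ?_⟩
    have e := rot_inj h
    have hu' : (‖(u : ℂ)‖ : ℂ) ≠ 0 := by exact_mod_cast (hpos u).ne'
    have hv' : (‖(v : ℂ)‖ : ℂ) ≠ 0 := by exact_mod_cast (hpos v).ne'
    have hvn := v.ne_zero
    rw [← Real.log_div (hpos u).ne' (hpos v).ne', ← Complex.ofReal_exp,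
      Real.exp_log (div_pos (hpos u) (hpos v))]
    push_cast at e ⊢
    field_simp at e ⊢
    linear_combination e
  have hposmem : ∀ (u : ℂˣ) (x : ℝ), 0 < x → (u : ℂ) = x → u ∈ H := by
    intro u x hx hu
    refine pos_mem H hH (hratio _ _ (hmem k₁) (hmem k₂) h12) (hratio _ _ (hmem k₃) (hmem k₄) h34)
      hirr u (x := Real.log x) ?_
    rw [hu, ← Complex.ofReal_exp, Real.exp_log hx]
  have hnorm : ∀ u : ℂˣ, ∃ q : ℂˣ, (q : ℂ) = (‖(u : ℂ)‖⁻¹ : ℝ) ∧ q ∈ H := by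
    intro u
    have h0 : 0 < ‖(u : ℂ)‖⁻¹ := inv_pos.2 (hpos u)
    refine ⟨Units.mk0 ((‖(u : ℂ)‖⁻¹ : ℝ) : ℂ) (by exact_mod_cast h0.ne'), rfl, ?_⟩
    exact hposmem _ _ h0 rfl
  have hrot : ∀ u ∈ H, ∀ M, (M = rot ((‖(u : ℂ)‖⁻¹ : ℝ) * u) ∨ M = (rot ((‖(u : ℂ)‖⁻¹ : ℝ) * u))⁻¹) →
      ∃ v ∈ H, M = rot (v : ℂ) := by
    intro u hu M hM
    obtain ⟨q, hq, hqH⟩ := hnorm u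
    rcases hM with rfl | rfl
    · exact ⟨q * u, H.mul_mem hqH hu, by rw [← hq]; rfl⟩
    · refine ⟨(q * u)⁻¹, H.inv_mem (H.mul_mem hqH hu), ?_⟩
      rw [← hq, ← Units.val_mul, rot_inv (Units.ne_zero _), Units.val_inv_eq_inv_val]
  have hprod : ∀ l : List (Matrix (Fin 2) (Fin 2) ℝ), (∀ x ∈ l, ∃ v ∈ H, x = rot (v : ℂ)) →
      ∃ v ∈ H, l.prod = rot (v : ℂ) := by
    intro l
    induction l with
    | nil => exact fun _ => ⟨1, H.one_mem, by simp [rot_one]⟩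
    | cons a l ih =>
      intro h
      obtain ⟨v, hv, ha⟩ := h a (by simp)
      obtain ⟨w, hw, hl⟩ := ih (fun x hx => h x (by simp [hx]))
      exact ⟨v * w, H.mul_mem hv hw, by rw [List.prod_cons, ha, hl, rot_mul, Units.val_mul]⟩
  let τ : Matrix (Fin 2) (Fin 2) ℝ → ℂ := fun M => (M 0 0 : ℂ) + (M 1 0 : ℂ) * Complex.I
  have hτ : Continuous τ := by fun_prop
  have hτr : ∀ u, τ (rot u) = u := fun u => by simp [τ, rot, Complex.re_add_im]
  have hcirc : ∀ u : ℂˣ, ‖(u : ℂ)‖ = 1 → u ∈ H := by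
    intro u hu
    have h2 := h1 (rot_mem_SO hu)
    have h3 : τ (rot u) ∈ closure ((fun v : ℂˣ => (v : ℂ)) '' (H : Set ℂˣ)) := by
      refine closure_mono ?_ (image_closure_subset_closure_image hτ ⟨_, h2, rfl⟩)
      rintro _ ⟨_, ⟨l, -, hl, rfl⟩, rfl⟩
      obtain ⟨v, hv, e⟩ := hprod l (by
        intro x hx
        obtain ⟨A, ⟨i, hA⟩, B, ⟨j, hB⟩, rfl⟩ := hl x hx
        obtain ⟨a, ha, rfl⟩ := hrot _ (hg i) _ hA
        obtain ⟨b, hb, rfl⟩ := hrot _ (hg' j) _ hB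
        exact ⟨a * b⁻¹, H.mul_mem ha (H.inv_mem hb), by
          rw [rot_inv b.ne_zero, rot_mul, Units.val_mul, Units.val_inv_eq_inv_val]⟩)
      exact ⟨v, hv, by rw [e, hτr]⟩
    rw [hτr] at h3
    have h4 : u ∈ closure (H : Set ℂˣ) := by
      rw [Units.isEmbedding_val₀.isInducing.closure_eq_preimage_closure_image]
      exact h3
    rwa [hH.closure_eq] at h4
  rw [eq_top_iff]
  intro u _
  obtain ⟨q, hq, hqH⟩ := hnorm u
  have h5 : q * u ∈ H := hcirc _ (by
    rw [Units.val_mul, hq, norm_mul, Complex.norm_real, norm_inv, norm_norm,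
      inv_mul_cancel₀ (hpos u).ne'])
  simpa using H.mul_mem (H.inv_mem hqH) h5

end SC

/-! ### Passage from the plane to `ℂ` -/

namespace SC

/-- The identification of the plane with `ℂ`. -/
noncomputable def eC : Euc 2 ≃L[ℝ] ℂ := Complex.basisOneI.equivFunL.symm

lemma eC_apply (x : Euc 2) : eC x = x 0 + x 1 * Complex.I := by
  have h : eC x = Complex.basisOneI.equivFun.symm x := rfl
  rw [h, Module.Basis.equivFun_symm_apply, Fin.sum_univ_two]
  simp [Complex.basisOneI]

lemma eC_symm (z : ℂ) : eC.symm z = ![z.re, z.im] := by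
  rw [ContinuousLinearEquiv.symm_apply_eq, eC_apply]
  simp [Complex.re_add_im]

/-- The derivative of `eC ∘ f ∘ eC⁻¹` at the point corresponding to `x`. -/
noncomputable def dc (f : Euc 2 → Euc 2) (x : Euc 2) : ℂ := eC (fderiv ℝ f x (eC.symm 1))

lemma orth_two {O : Matrix (Fin 2) (Fin 2) ℝ} (hO : O ∈ Matrix.orthogonalGroup (Fin 2) ℝ)
    (hdet : 0 < O.det) : ∃ u : ℂ, u ≠ 0 ∧ O = rot u := by
  rw [Matrix.mem_orthogonalGroup_iff] at hO
  have h00 := congrFun (congrFun hO 0) 0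
  have h01 := congrFun (congrFun hO 0) 1
  have h11 := congrFun (congrFun hO 1) 1
  simp [Matrix.mul_apply, Fin.sum_univ_two] at h00 h01 h11
  rw [Matrix.det_fin_two] at hdet
  set a := O 0 0
  set b := O 0 1
  set c := O 1 0
  set d := O 1 1
  have hd1 : a * d - b * c = 1 := by
    have : (a * d - b * c) ^ 2 = 1 := by
      linear_combination (c * c + d * d) * h00 + h11 - (a * c + b * d) * h01
    nlinarith
  have hda : d = a := by linear_combination (-d) * h00 + a * hd1 + b * h01
  have hcb : c = -b := by linear_combination (-c) * h00 - b * hd1 + a * h01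
  refine ⟨⟨a, c⟩, ?_, ?_⟩
  · intro h
    have h1 := congrArg Complex.re h
    have h2 := congrArg Complex.im h
    simp at h1 h2
    rw [h1, h2] at hd1
    rw [hda, h1] at hd1
    simp at hd1
  · ext i j
    fin_cases i <;> fin_cases j
    · simp [rot, a]
    · simp [rot]; change b = -c; rw [hcb, neg_neg]
    · simp [rot, c]
    · simp [rot]; exact hda

/-- The derivative of an orientation preserving conformal map is a complex multiplication. -/
lemma fderiv_eq {f : Euc 2 → Euc 2} {x : Euc 2}
    (h : ∃ c : ℝ, 0 < c ∧ ∃ O ∈ Matrix.orthogonalGroup (Fin 2) ℝ,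
      (fderiv ℝ f x : Euc 2 →ₗ[ℝ] Euc 2) = c • O.mulVecLin)
    (hdet : 0 < LinearMap.det (fderiv ℝ f x : Euc 2 →ₗ[ℝ] Euc 2)) :
    dc f x ≠ 0 ∧ Dmat f x = rot (dc f x) ∧ ∀ v, eC (fderiv ℝ f x v) = dc f x * eC v := by
  obtain ⟨c, hc, O, hO, hf⟩ := h
  have hdO : 0 < O.det := by
    rw [hf, LinearMap.det_smul, ← Matrix.toLin'_apply', LinearMap.det_toLin'] at hdet
    exact pos_of_mul_pos_right hdet (by positivity)
  obtain ⟨u, hu, rfl⟩ := orth_two hO hdO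
  have hv : ∀ v, fderiv ℝ f x v = c • (rot u).mulVec v := fun v => by
    have := congrArg (fun L : Euc 2 →ₗ[ℝ] Euc 2 => L v) hf
    simpa using this
  have hev : ∀ v, eC (fderiv ℝ f x v) = (c * u) * eC v := by
    intro v
    rw [hv, eC_apply, eC_apply]
    apply Complex.ext <;>
      simp [rot, dotProduct, Fin.sum_univ_two] <;> ring
  have hdc : dc f x = c * u := by rw [dc, hev]; simp
  refine ⟨?_, ?_, by rw [hdc]; exact hev⟩
  · rw [hdc]; exact mul_ne_zero (by exact_mod_cast hc.ne') hu
  · rw [hdc, ← rot_smul, Dmat, hf, map_smul, ← Matrix.toLin'_apply', LinearMap.toMatrix'_toLin']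

lemma confScale_eq {f : Euc 2 → Euc 2} {x : Euc 2} (h : Dmat f x = rot (dc f x)) :
    confScale f x = ‖dc f x‖ := by
  have h1 : LinearMap.det (fderiv ℝ f x : Euc 2 →ₗ[ℝ] Euc 2) = ‖dc f x‖ ^ 2 := by
    rw [← rot_det, ← h, Dmat, LinearMap.det_toMatrix']
  rw [confScale, h1, abs_of_nonneg (by positivity), ← Real.rpow_natCast, ← Real.rpow_mul (norm_nonneg _)]
  simp

lemma hasDerivAt_conj {f : Euc 2 → Euc 2} {x : Euc 2} (hd : DifferentiableAt ℝ f x)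
    (h : ∀ v, eC (fderiv ℝ f x v) = dc f x * eC v) :
    HasDerivAt (fun z => eC (f (eC.symm z))) (dc f x) (eC x) := by
  have h1 : HasFDerivAt (fun z => eC (f (eC.symm z)))
      ((eC : Euc 2 →L[ℝ] ℂ).comp ((fderiv ℝ f x).comp (eC.symm : ℂ →L[ℝ] Euc 2))) (eC x) := by
    refine (eC : Euc 2 →L[ℝ] ℂ).hasFDerivAt.comp (eC x) (HasFDerivAt.comp (eC x) ?_
      (eC.symm : ℂ →L[ℝ] Euc 2).hasFDerivAt)
    simpa using hd.hasFDerivAt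
  refine hasFDerivAt_of_restrictScalars ℝ h1 ?_
  ext; simp [h, mul_comm]

lemma mdim_map {X Y : Type*} [NormedAddCommGroup X] [NormedSpace ℝ X] [NormedAddCommGroup Y]
    [NormedSpace ℝ Y] [MeasurableSpace X] [BorelSpace X] [MeasurableSpace Y] [BorelSpace Y]
    (e : X ≃L[ℝ] Y) (θ : Measure X) : mdim (θ.map e) = mdim θ := by
  have hm : Measurable e := e.continuous.measurable
  have hm' : Measurable e.symm := e.symm.continuous.measurable
  apply le_antisymm
  · refine le_iInf fun A => le_iInf fun hA => le_iInf fun hpos => ?_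
    have hA' : MeasurableSet (e.symm ⁻¹' A) := hm' hA
    have h1 : 0 < θ.map e (e.symm ⁻¹' A) := by
      rw [Measure.map_apply hm hA']
      convert hpos using 2
      ext x; simp
    refine (iInf₂_le_of_le (e.symm ⁻¹' A) hA' (iInf_le _ h1)).trans ?_
    rw [← e.image_eq_preimage_symm, e.dimH_image]
  · refine le_iInf fun A => le_iInf fun hA => le_iInf fun hpos => ?_
    have hA' : MeasurableSet (e ⁻¹' A) := hm hA
    rw [Measure.map_apply hm hA] at hpos
    refine (iInf₂_le_of_le (e ⁻¹' A) hA' (iInf_le _ hpos)).trans ?_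
    rw [e.dimH_preimage]

lemma exists_pos_le {ι : Type*} [Finite ι] (a : ι → ℝ) (ha : ∀ i, 0 < a i) :
    ∃ m, 0 < m ∧ ∀ i, m ≤ a i := by
  obtain ⟨M, hM⟩ := Finite.exists_le (fun i => (a i)⁻¹)
  refine ⟨(max M 1)⁻¹, by positivity, fun i => ?_⟩
  exact inv_le_of_inv_le₀ (ha i) ((hM i).trans (le_max_left _ _))

/-- An injective map with non-vanishing Hölder derivative on a convex compact set is bi-Lipschitz. -/
lemma exists_bilip {K : Set ℂ} (hK : IsCompact K) (hc : Convex ℝ K) {g g' : ℂ → ℂ}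
    (hg : ∀ z ∈ K, HasDerivWithinAt g (g' z) K z) (hinj : InjOn g K) {C α κ : ℝ}
    (hC : 0 ≤ C) (hα : 0 < α)
    (hol : ∀ z ∈ K, ∀ z' ∈ K, ‖g' z - g' z'‖ ≤ C * ‖z - z'‖ ^ α) (hκ : 0 < κ)
    (hκg : ∀ z ∈ K, κ ≤ ‖g' z‖) :
    ∃ c, 0 < c ∧ ∀ z ∈ K, ∀ z' ∈ K, c * ‖z - z'‖ ≤ ‖g z - g z'‖ := by
  have hcont : ContinuousOn g K := fun z hz => (hg z hz).continuousWithinAt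
  obtain ⟨δ, hδ, hδC⟩ : ∃ δ : ℝ, 0 < δ ∧ C * δ ^ α ≤ κ / 2 := by
    refine ⟨(κ / 2 / (C + 1)) ^ α⁻¹, by positivity, ?_⟩
    rw [← Real.rpow_mul (by positivity), inv_mul_cancel₀ hα.ne', Real.rpow_one]
    rw [mul_div_assoc', div_le_iff₀ (by positivity)]
    nlinarith
  have near : ∀ z ∈ K, ∀ z' ∈ K, ‖z - z'‖ ≤ δ → κ / 2 * ‖z - z'‖ ≤ ‖g z - g z'‖ := by
    intro z hz z' hz' hzz
    let s := K ∩ closedBall z' ‖z - z'‖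
    have hs : Convex ℝ s := hc.inter (convex_closedBall _ _)
    have h1 : ∀ y ∈ s, HasDerivWithinAt (fun y => g y - g' z' * y) (g' y - g' z') s y := by
      intro y hy
      have := ((hg y hy.1).mono inter_subset_left (s := s)).sub
        ((hasDerivWithinAt_id y s).const_mul (g' z'))
      rw [mul_one] at this
      exact this
    have h2 : ∀ y ∈ s, ‖g' y - g' z'‖ ≤ κ / 2 := by
      intro y hy
      refine (hol y hy.1 z' hz').trans (le_trans ?_ hδC)
      have : ‖y - z'‖ ≤ δ := by
        have := hy.2
        rw [mem_closedBall, dist_eq_norm] at this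
        linarith
      gcongr
    have h3 := hs.norm_image_sub_le_of_norm_hasDerivWithin_le h1 h2
      (⟨hz', mem_closedBall_self (norm_nonneg _)⟩ : z' ∈ s)
      (⟨hz, by rw [mem_closedBall, dist_eq_norm]⟩ : z ∈ s)
    have h4 : ‖g' z' * (z - z')‖ ≤ ‖g z - g z'‖ +
        ‖g z - g' z' * z - (g z' - g' z' * z')‖ := by
      have e : g' z' * (z - z') = (g z - g z') - (g z - g' z' * z - (g z' - g' z' * z')) := by ring
      conv_lhs => rw [e]
      exact norm_sub_le _ _
    rw [norm_mul] at h4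
    have h5 := mul_le_mul_of_nonneg_right (hκg z' hz') (norm_nonneg (z - z'))
    linarith
  let Q : Set (ℂ × ℂ) := (K ×ˢ K) ∩ {q | δ ≤ ‖q.1 - q.2‖}
  have hQ : IsCompact Q := (hK.prod hK).inter_right
    (isClosed_le continuous_const (by fun_prop))
  obtain ⟨R, hR⟩ := hK.isBounded.exists_norm_le
  rcases Q.eq_empty_or_nonempty with he | hne
  · refine ⟨κ / 2, by positivity, fun z hz z' hz' => near z hz z' hz' ?_⟩
    by_contra h
    push Not at h
    have : (z, z') ∈ Q := ⟨⟨hz, hz'⟩, h.le⟩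
    rw [he] at this
    exact this
  · have hcQ : ContinuousOn (fun q : ℂ × ℂ => ‖g q.1 - g q.2‖) Q := by
      refine ContinuousOn.norm (ContinuousOn.sub ?_ ?_)
      · exact hcont.comp continuousOn_fst (fun q hq => hq.1.1)
      · exact hcont.comp continuousOn_snd (fun q hq => hq.1.2)
    obtain ⟨q, hq, hmin⟩ := hQ.exists_isMinOn hne hcQ
    have hm : 0 < ‖g q.1 - g q.2‖ := by
      rw [norm_pos_iff, sub_ne_zero]
      intro h
      have := hinj hq.1.1 hq.1.2 h
      have h2 : δ ≤ ‖q.1 - q.2‖ := hq.2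
      rw [this, sub_self, norm_zero] at h2
      linarith
    set m := ‖g q.1 - g q.2‖
    have hR0 : 0 ≤ R := (norm_nonneg _).trans (hR q.1 hq.1.1)
    refine ⟨min (κ / 2) (m / (2 * R + 1)), by positivity, fun z hz z' hz' => ?_⟩
    rcases le_or_gt ‖z - z'‖ δ with h | h
    · refine le_trans ?_ (near z hz z' hz' h)
      gcongr
      exact min_le_left _ _
    · have h6 : m ≤ ‖g z - g z'‖ := hmin (show (z, z') ∈ Q from ⟨⟨hz, hz'⟩, h.le⟩)
      have h7 : ‖z - z'‖ ≤ 2 * R + 1 := by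
        have := norm_sub_le z z'
        have := hR z hz
        have := hR z' hz'
        linarith
      calc min (κ / 2) (m / (2 * R + 1)) * ‖z - z'‖ ≤ m / (2 * R + 1) * (2 * R + 1) := by
            gcongr
            exact min_le_right _ _
        _ = m := div_mul_cancel₀ _ (by positivity)
        _ ≤ _ := h6

end SC

/-! ### The system attached to a self-conformal measure -/

namespace SC

/-- The square `[-R, R]²` as a subset of `ℂ`. -/
def sq (R : ℝ) : Set ℂ := eC.symm ⁻¹' closedBall (0 : Euc 2) R

lemma sq_compact (R : ℝ) : IsCompact (sq R) := by
  have : sq R = eC '' closedBall (0 : Euc 2) R := by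
    rw [sq, ← eC.image_eq_preimage_symm]
  rw [this]
  exact (isCompact_closedBall _ _).image eC.continuous

lemma sq_convex (R : ℝ) : Convex ℝ (sq R) :=
  (convex_closedBall (0 : Euc 2) R).linear_preimage (eC.symm : ℂ →ₗ[ℝ] Euc 2)

lemma sq_ball {R : ℝ} (hR : R < 1) {z : ℂ} (hz : z ∈ sq R) : eC.symm z ∈ ball (0 : Euc 2) 1 :=
  closedBall_subset_ball hR hz

/-- Compactness of the square `[-R, R]²` turns the local hypotheses on a conformal map into the
uniform bounds required in `Sys`. -/
lemma map_data {f : Euc 2 → Euc 2} (hf : IsConformalMapOn 2 f (ball 0 1))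
    (hor : ∀ x ∈ ball (0 : Euc 2) 1, 0 < LinearMap.det (fderiv ℝ f x : Euc 2 →ₗ[ℝ] Euc 2))
    {R : ℝ} (hR : 0 < R) (hR1 : R < 1) :
    ∃ C α κ c : ℝ, 0 ≤ C ∧ 0 < α ∧ 0 < κ ∧ 0 < c ∧
      (∀ z ∈ sq R, ∀ z' ∈ sq R, ‖dc f (eC.symm z) - dc f (eC.symm z')‖ ≤ C * ‖z - z'‖ ^ α) ∧
      (∀ z ∈ sq R, κ ≤ ‖dc f (eC.symm z)‖) ∧
      (∀ z ∈ sq R, ∀ z' ∈ sq R, c * ‖z - z'‖ ≤ ‖eC (f (eC.symm z)) - eC (f (eC.symm z'))‖) := by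
  obtain ⟨hinj, -, hdiff, hconf, C, α, hα, hol⟩ := hf
  have hder : ∀ z ∈ sq R, HasDerivWithinAt (fun z => eC (f (eC.symm z))) (dc f (eC.symm z))
      (sq R) z := by
    intro z hz
    have hb := sq_ball hR1 hz
    have := hasDerivAt_conj (hdiff _ hb) (fderiv_eq (hconf _ hb) (hor _ hb)).2.2
    rw [eC.apply_symm_apply] at this
    exact this.hasDerivWithinAt
  set c1 := ‖(eC : Euc 2 →L[ℝ] ℂ)‖ * ‖eC.symm 1‖ with hc1
  set c2 := ‖(eC.symm : ℂ →L[ℝ] Euc 2)‖ with hc2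
  have hα' : (0 : ℝ) < α := hα
  have hol' : ∀ z ∈ sq R, ∀ z' ∈ sq R, ‖dc f (eC.symm z) - dc f (eC.symm z')‖ ≤
      (c1 * (C * c2 ^ (α : ℝ))) * ‖z - z'‖ ^ (α : ℝ) := by
    intro z hz z' hz'
    have h1 := hol.dist_le (sq_ball hR1 hz) (sq_ball hR1 hz')
    have h2 : dist (eC.symm z) (eC.symm z') ≤ c2 * ‖z - z'‖ := by
      rw [dist_eq_norm, ← map_sub]
      exact (eC.symm : ℂ →L[ℝ] Euc 2).le_opNorm _
    have h3 : ‖dc f (eC.symm z) - dc f (eC.symm z')‖ ≤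
        c1 * dist (fderiv ℝ f (eC.symm z)) (fderiv ℝ f (eC.symm z')) := by
      rw [dc, dc, ← map_sub, ← _root_.sub_apply, dist_eq_norm]
      refine ((eC : Euc 2 →L[ℝ] ℂ).le_opNorm _).trans ?_
      rw [hc1, mul_assoc]
      gcongr
      rw [mul_comm]
      exact ContinuousLinearMap.le_opNorm _ _
    refine h3.trans ?_
    rw [mul_assoc c1, mul_assoc (C : ℝ), ← Real.mul_rpow (norm_nonneg _) (norm_nonneg _)]
    refine mul_le_mul_of_nonneg_left (h1.trans ?_) (by positivity)
    gcongr
  have hcont : ContinuousOn (fun z => dc f (eC.symm z)) (sq R) := by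
    intro z hz
    rw [ContinuousWithinAt, tendsto_iff_norm_sub_tendsto_zero]
    have h1 : Tendsto (fun y => (c1 * (C * c2 ^ (α : ℝ))) * ‖y - z‖ ^ (α : ℝ)) (𝓝[sq R] z)
        (𝓝 0) := by
      have h2 : Continuous (fun y : ℂ => (c1 * (C * c2 ^ (α : ℝ))) * ‖y - z‖ ^ (α : ℝ)) :=
        continuous_const.mul ((continuous_id.sub continuous_const).norm.rpow_const
          (fun _ => Or.inr hα'.le))
      have h3 := (h2.tendsto z).mono_left (nhdsWithin_le_nhds (s := sq R))
      simpa [Real.zero_rpow hα'.ne'] using h3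
    refine squeeze_zero' (Eventually.of_forall fun _ => norm_nonneg _) ?_ h1
    filter_upwards [self_mem_nhdsWithin] with y hy using hol' y hy z hz
  obtain ⟨q, hq, hmin⟩ := (sq_compact R).exists_isMinOn ⟨0, by simp [sq, hR.le]⟩ hcont.norm
  have hqb := sq_ball hR1 hq
  have hκ : 0 < ‖dc f (eC.symm q)‖ := norm_pos_iff.2 (fderiv_eq (hconf _ hqb) (hor _ hqb)).1
  have hinj' : InjOn (fun z => eC (f (eC.symm z))) (sq R) := by
    intro z hz z' hz' h
    exact eC.symm.injective (hinj (sq_ball hR1 hz) (sq_ball hR1 hz') (eC.injective h))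
  obtain ⟨c, hc, hb⟩ := exists_bilip (sq_compact R) (sq_convex R) hder hinj'
    (by positivity) hα' hol' hκ (fun z hz => hmin hz)
  exact ⟨_, _, _, c, by positivity, hα', hκ, hc, hol', fun z hz => hmin hz, hb⟩

/-- A self-conformal measure in the plane gives rise to a system in `ℂ`. -/
lemma exists_sys (Φ : ConformalIFS 2) (hor : OrientationPreserving Φ) (μ : Measure (Euc 2))
    (hμ : IsSelfConformal Φ μ) : ∃ Y : Sys (Fin Φ.n), Y.μ = μ.map eC ∧
      (∀ i z, Y.f' i z = dc (Φ.funs i) (eC.symm z)) ∧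
      (∀ i, ∀ x ∈ ball (0 : Euc 2) 1, Φ.funs i x = x → eC x ∈ Y.K ∧ Y.f i (eC x) = eC x) := by
  obtain ⟨hprob, hball, p, hp, hps, hst⟩ := hμ
  set L : Set (Euc 2) := ⋃ i, closure (Φ.funs i '' ball 0 1) with hL
  have hLc : IsClosed L := isClosed_iUnion_of_finite fun i => isClosed_closure
  have hLb : L ⊆ ball 0 1 := iUnion_subset fun i => (Φ.conf i).2.1
  obtain ⟨R, ⟨hR, hR1⟩, hLR⟩ := exists_pos_lt_subset_ball one_pos hLc hLb
  have hmaps : ∀ i, ∀ x ∈ ball (0 : Euc 2) 1, Φ.funs i x ∈ closedBall (0 : Euc 2) R :=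
    fun i x hx => ball_subset_closedBall (hLR (mem_iUnion.2 ⟨i, subset_closure ⟨x, hx, rfl⟩⟩))
  have hRb : closedBall (0 : Euc 2) R ⊆ ball 0 1 := closedBall_subset_ball hR1
  choose C α κ c hC hα hκ hc hol hκle hbl using fun i => map_data (Φ.conf i) (hor i) hR hR1
  choose r hr1 hr using Φ.contr
  obtain ⟨α0, hα0, hαle⟩ := exists_pos_le α hα
  obtain ⟨κm, hκm, hκm_le⟩ := exists_pos_le κ hκ
  obtain ⟨cm, hcm, hcmle⟩ := exists_pos_le c hc
  obtain ⟨rm, hrm, hrmle⟩ := exists_pos_le (fun i => 1 - r i) (fun i => by linarith [hr1 i])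
  obtain ⟨D0, hD0⟩ := (sq_compact R).isBounded.exists_norm_le
  have hD0' : 0 ≤ D0 := (norm_nonneg _).trans (hD0 0 (by simp [sq, hR.le]))
  set D := 2 * D0 + 1 with hD
  have hDpos : 0 < D := by positivity
  have hdiam : ∀ z ∈ sq R, ∀ z' ∈ sq R, ‖z - z'‖ ≤ D := fun z hz z' hz' => by
    have := norm_sub_le z z'
    have := hD0 z hz
    have := hD0 z' hz'
    linarith
  obtain ⟨C0, hC0⟩ := Finite.exists_le (fun i => C i * D ^ (α i - α0))
  have hcs : ∀ i, ∀ x ∈ ball (0 : Euc 2) 1, confScale (Φ.funs i) x = ‖dc (Φ.funs i) x‖ :=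
    fun i x hx => confScale_eq (fderiv_eq ((Φ.conf i).2.2.2.1 x hx) (hor i x hx)).2.1
  have hKm : MeasurableSet (sq R) := (sq_compact R).isClosed.measurableSet
  classical
  let f : Fin Φ.n → ℂ → ℂ := fun i => (sq R).piecewise (fun z => eC (Φ.funs i (eC.symm z))) 0
  have hfK : ∀ i, ∀ z ∈ sq R, f i z = eC (Φ.funs i (eC.symm z)) :=
    fun i z hz => Set.piecewise_eq_of_mem _ _ _ hz
  have hder : ∀ i, ∀ z ∈ sq R, HasDerivWithinAt (fun z => eC (Φ.funs i (eC.symm z)))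
      (dc (Φ.funs i) (eC.symm z)) (sq R) z := by
    intro i z hz
    have hb := sq_ball hR1 hz
    have := hasDerivAt_conj ((Φ.conf i).2.2.1 _ hb)
      (fderiv_eq ((Φ.conf i).2.2.2.1 _ hb) (hor i _ hb)).2.2
    rw [eC.apply_symm_apply] at this
    exact this.hasDerivWithinAt
  have hfm : ∀ i, Measurable (f i) := fun i =>
    ContinuousOn.measurable_piecewise (fun z hz => (hder i z hz).continuousWithinAt)
      continuousOn_const hKm
  have heM : Measurable eC := eC.continuous.measurable
  have hrestr : μ.restrict (ball 0 1) = μ :=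
    Measure.restrict_eq_self_of_ae_mem (by rw [ae_iff]; exact hball)
  have hfae : ∀ i, AEMeasurable (Φ.funs i) μ := by
    intro i
    have h : ContinuousOn (Φ.funs i) (ball 0 1) :=
      fun x hx => ((Φ.conf i).2.2.1 x hx).continuousAt.continuousWithinAt
    have := h.aemeasurable (μ := μ) measurableSet_ball
    rwa [hrestr] at this
  have hsupp : μ (closedBall (0 : Euc 2) R)ᶜ = 0 := by
    have hm : MeasurableSet (closedBall (0 : Euc 2) R)ᶜ := measurableSet_closedBall.compl
    rw [hst, Measure.finsetSum_apply]
    refine Finset.sum_eq_zero fun i _ => ?_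
    rw [Measure.smul_apply, Measure.map_apply_of_aemeasurable (hfae i) hm]
    have : μ (Φ.funs i ⁻¹' (closedBall (0 : Euc 2) R)ᶜ) = 0 := by
      refine measure_mono_null ?_ hball
      intro x hx hxb
      exact hx (hmaps i x hxb)
    rw [this, smul_zero]
  have hae : ∀ᵐ x ∂μ, x ∈ closedBall (0 : Euc 2) R := by rw [ae_iff]; exact hsupp
  have hsq : ∀ x, x ∈ closedBall (0 : Euc 2) R → eC x ∈ sq R := fun x hx => by
    rw [sq, mem_preimage, eC.symm_apply_apply]; exact hx
  have hpt : ∀ i, p i ≠ ∞ := fun i => by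
    have h : p i ≤ 1 := by
      rw [← hps]; exact Finset.single_le_sum (f := p) (fun _ _ => zero_le) (Finset.mem_univ i)
    exact ne_top_of_le_ne_top ENNReal.one_ne_top h
  refine ⟨{
    p := fun i => (p i).toReal
    p_pos := fun i => ENNReal.toReal_pos (hp i).ne' (hpt i)
    p_sum := by rw [← ENNReal.toReal_sum (fun i _ => hpt i), hps]; rfl
    K := sq R
    conv := sq_convex R
    z0 := 0
    z0_mem := by simp [sq, hR.le]
    D := D
    D_pos := hDpos
    diam := hdiam
    f := f
    f' := fun i z => dc (Φ.funs i) (eC.symm z)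
    meas := hfm
    maps := fun i z hz => by
      rw [hfK i z hz]
      exact hsq _ (hmaps i _ (sq_ball hR1 hz))
    deriv := fun i z hz => (hder i z hz).congr (fun y hy => hfK i y hy) (hfK i z hz)
    C := max C0 0
    C_nonneg := le_max_right _ _
    α := α0
    α_pos := hα0
    holder := fun i z hz z' hz' => by
      refine (hol i z hz z' hz').trans ?_
      rcases eq_or_ne z z' with rfl | hne
      · rw [sub_self, norm_zero, Real.zero_rpow (hα i).ne', Real.zero_rpow hα0.ne', mul_zero,
          mul_zero]
      have h0 : 0 < ‖z - z'‖ := norm_pos_iff.2 (sub_ne_zero.2 hne)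
      have e : ‖z - z'‖ ^ α i = ‖z - z'‖ ^ (α i - α0) * ‖z - z'‖ ^ α0 := by
        rw [← Real.rpow_add h0]; congr 1; ring
      rw [e, ← mul_assoc]
      refine mul_le_mul_of_nonneg_right (le_trans ?_ ((hC0 i).trans (le_max_left _ _)))
        (by positivity)
      refine mul_le_mul_of_nonneg_left (Real.rpow_le_rpow h0.le (hdiam z hz z' hz') ?_) (hC i)
      linarith [hαle i]
    κ := κm
    κ_pos := hκm
    κ_le := fun i z hz => (hκm_le i).trans (hκle i z hz)
    ρ := max (1 / 2) (1 - rm)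
    ρ_pos := lt_max_of_lt_left (by norm_num)
    ρ_lt := max_lt (by norm_num) (by linarith)
    le_ρ := fun i z hz => by
      have hb := sq_ball hR1 hz
      rw [← hcs i _ hb]
      refine (hr i _ hb).trans (le_trans ?_ (le_max_right _ _))
      linarith [hrmle i]
    c0 := cm
    c0_pos := hcm
    bilip := fun i z hz z' hz' => by
      rw [hfK i z hz, hfK i z' hz']
      exact (mul_le_mul_of_nonneg_right (hcmle i) (norm_nonneg _)).trans (hbl i z hz z' hz')
    μ := μ.map eC
    prob := Measure.isProbabilityMeasure_map heM.aemeasurable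
    supp := by
      rw [Measure.map_apply heM hKm.compl]
      convert hsupp using 2
      ext x
      simp [sq]
    stat := by
      ext A hA
      rw [Measure.finsetSum_apply, Measure.map_apply heM hA]
      conv_lhs => rw [hst]
      rw [Measure.finsetSum_apply]
      refine Finset.sum_congr rfl fun i _ => ?_
      rw [Measure.smul_apply, Measure.smul_apply, ENNReal.ofReal_toReal (hpt i)]
      congr 1
      rw [Measure.map_apply_of_aemeasurable (hfae i) (heM hA), Measure.map_map (hfm i) heM,
        Measure.map_apply ((hfm i).comp heM) hA]
      refine measure_congr ?_
      filter_upwards [hae] with x hx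
      have : f i (eC x) = eC (Φ.funs i x) := by
        rw [hfK i _ (hsq x hx), eC.symm_apply_apply]
      change (eC (Φ.funs i x) ∈ A) = (f i (eC x) ∈ A)
      rw [this] }, rfl, fun _ _ => rfl, ?_⟩
  intro i x hx hfx
  have h1 : eC x ∈ sq R := hsq x (by rw [← hfx]; exact hmaps i x hx)
  refine ⟨h1, ?_⟩
  change f i (eC x) = eC x
  rw [hfK i _ h1, eC.symm_apply_apply, hfx]

end SC

/-! ### Conclusion -/

namespace SC

/-- The contraction ratio and the rotation at a fixed point, in terms of the complex derivative. -/
lemma fix_data (Φ : ConformalIFS 2) (hor : OrientationPreserving Φ) (xf : Fin Φ.n → Euc 2)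
    (hxf : IsFixedPoints Φ xf) (i : Fin Φ.n) :
    dc (Φ.funs i) (xf i) ≠ 0 ∧ fixLam Φ xf i = ‖dc (Φ.funs i) (xf i)‖ ∧
      fixO Φ xf i = rot ((‖dc (Φ.funs i) (xf i)‖⁻¹ : ℝ) * dc (Φ.funs i) (xf i)) := by
  obtain ⟨h0, h1, -⟩ := fderiv_eq ((Φ.conf i).2.2.2.1 _ (hxf i).1) (hor i _ (hxf i).1)
  have h2 : fixLam Φ xf i = ‖dc (Φ.funs i) (xf i)‖ := confScale_eq h1
  exact ⟨h0, h2, by rw [fixO, h2, h1, rot_smul]⟩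

end SC

theorem dissonance_of_two_selfconformal_measures_plane
    (Φ Ψ : ConformalIFS 2)
    (hΦ : TotallyNonLinear Φ) (hΨ : TotallyNonLinear Ψ)
    (horΦ : OrientationPreserving Φ) (horΨ : OrientationPreserving Ψ)
    (μ ν : Measure (Euc 2)) (hμ : IsSelfConformal Φ μ) (hν : IsSelfConformal Ψ ν)
    (xfΦ : Fin Φ.n → Euc 2) (hxfΦ : IsFixedPoints Φ xfΦ)
    (xfΨ : Fin Ψ.n → Euc 2) (hxfΨ : IsFixedPoints Ψ xfΨ)
    (h1 : genClosure {M : Matrix (Fin 2) (Fin 2) ℝ |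
        ∃ A ∈ OsetOf Φ xfΦ, ∃ B ∈ OsetOf Ψ xfΨ, M = A * B⁻¹} = SOset 2)
    (h2 : ∃ k₁ k₂ k₃ k₄ : Fin Φ.n ⊕ Fin Ψ.n,
      Sum.elim (fixO Φ xfΦ) (fixO Ψ xfΨ) k₁ = Sum.elim (fixO Φ xfΦ) (fixO Ψ xfΨ) k₂ ∧
      Sum.elim (fixO Φ xfΦ) (fixO Ψ xfΨ) k₃ = Sum.elim (fixO Φ xfΦ) (fixO Ψ xfΨ) k₄ ∧
      Irrational
        ((Real.log (Sum.elim (fixLam Φ xfΦ) (fixLam Ψ xfΨ) k₁) -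
            Real.log (Sum.elim (fixLam Φ xfΦ) (fixLam Ψ xfΨ) k₂)) /
          (Real.log (Sum.elim (fixLam Φ xfΦ) (fixLam Ψ xfΨ) k₃) -
            Real.log (Sum.elim (fixLam Φ xfΦ) (fixLam Ψ xfΨ) k₄)))) :
    mdim ((μ.prod ν).map (fun p => p.1 + p.2)) = min (2 : ℝ≥0∞) (mdim μ + mdim ν) := by
  obtain ⟨Y, hYμ, hYd, hYf⟩ := SC.exists_sys Φ horΦ μ hμ
  obtain ⟨Z, hZμ, hZd, hZf⟩ := SC.exists_sys Ψ horΨ ν hν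
  have : IsProbabilityMeasure μ := hμ.1
  have : IsProbabilityMeasure ν := hν.1
  have heM : Measurable SC.eC := SC.eC.continuous.measurable
  have e1 : mdim Y.μ = mdim μ := by rw [hYμ, SC.mdim_map]
  have e2 : mdim Z.μ = mdim ν := by rw [hZμ, SC.mdim_map]
  have e3 : mdim (SC.pm Y Z [] []) = mdim ((μ.prod ν).map (fun p => p.1 + p.2)) := by
    rw [SC.pm_root, hYμ, hZμ, ← SC.mdim_map SC.eC, Measure.map_prod_map _ _ heM heM,
      Measure.map_map (by fun_prop) (by fun_prop), Measure.map_map heM (by fun_prop)]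
    congr 2
    ext p
    simp
  rw [← e1, ← e2, ← e3]
  refine le_antisymm (le_min (SC.mdim_le_two _) (SC.upper_bound Y Z)) ?_
  have hneY : ∀ i, Y.f' i (SC.eC (xfΦ i)) ≠ 0 := fun i => by
    rw [hYd, SC.eC.symm_apply_apply]; exact (SC.fix_data Φ horΦ xfΦ hxfΦ i).1
  have hneZ : ∀ i, Z.f' i (SC.eC (xfΨ i)) ≠ 0 := fun i => by
    rw [hZd, SC.eC.symm_apply_apply]; exact (SC.fix_data Ψ horΨ xfΨ hxfΨ i).1
  refine SC.lower_bound Y Z (fun i => SC.eC (xfΦ i)) (fun i => (hYf i _ (hxfΦ i).1 (hxfΦ i).2).1)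
    (fun i => (hYf i _ (hxfΦ i).1 (hxfΦ i).2).2) (fun i => SC.eC (xfΨ i))
    (fun i => (hZf i _ (hxfΨ i).1 (hxfΨ i).2).1) (fun i => (hZf i _ (hxfΨ i).1 (hxfΨ i).2).2)
    hneY hneZ ?_
  intro H hH hgY hgZ
  have oY : ∀ i, fixO Φ xfΦ i = SC.rot ((‖((Units.mk0 _ (hneY i) : ℂˣ) : ℂ)‖⁻¹ : ℝ) *
      (Units.mk0 _ (hneY i) : ℂˣ)) := fun i => by
    rw [Units.val_mk0, hYd, SC.eC.symm_apply_apply]; exact (SC.fix_data Φ horΦ xfΦ hxfΦ i).2.2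
  have oZ : ∀ i, fixO Ψ xfΨ i = SC.rot ((‖((Units.mk0 _ (hneZ i) : ℂˣ) : ℂ)‖⁻¹ : ℝ) *
      (Units.mk0 _ (hneZ i) : ℂˣ)) := fun i => by
    rw [Units.val_mk0, hZd, SC.eC.symm_apply_apply]; exact (SC.fix_data Ψ horΨ xfΨ hxfΨ i).2.2
  have lY : ∀ i, fixLam Φ xfΦ i = ‖((Units.mk0 _ (hneY i) : ℂˣ) : ℂ)‖ := fun i => by
    rw [Units.val_mk0, hYd, SC.eC.symm_apply_apply]; exact (SC.fix_data Φ horΦ xfΦ hxfΦ i).2.1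
  have lZ : ∀ i, fixLam Ψ xfΨ i = ‖((Units.mk0 _ (hneZ i) : ℂˣ) : ℂ)‖ := fun i => by
    rw [Units.val_mk0, hZd, SC.eC.symm_apply_apply]; exact (SC.fix_data Ψ horΨ xfΨ hxfΨ i).2.1
  set g : Fin Φ.n → ℂˣ := fun i => Units.mk0 _ (hneY i)
  set g' : Fin Ψ.n → ℂˣ := fun i => Units.mk0 _ (hneZ i)
  have oE : ∀ k, Sum.elim (fixO Φ xfΦ) (fixO Ψ xfΨ) k =
      SC.rot ((‖((Sum.elim g g' k : ℂˣ) : ℂ)‖⁻¹ : ℝ) * (Sum.elim g g' k : ℂˣ)) := by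
    rintro (i | i)
    · exact oY i
    · exact oZ i
  have lE : ∀ k, Sum.elim (fixLam Φ xfΦ) (fixLam Ψ xfΨ) k =
      ‖((Sum.elim g g' k : ℂˣ) : ℂ)‖ := by
    rintro (i | i)
    · exact lY i
    · exact lZ i
  obtain ⟨k₁, k₂, k₃, k₄, h12, h34, hirr⟩ := h2
  rw [oE, oE] at h12 h34
  rw [lE, lE, lE, lE] at hirr
  refine SC.closed_eq_top H hH g g' hgY hgZ (le_of_eq ?_) k₁ k₂ k₃ k₄ h12 h34 hirr
  rw [← h1]
  simp only [OsetOf, oY, oZ]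
  rfl
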